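/- arXiv:0912.1685 — 6 statements merged into one kernel-verified Lean document; each statement's English description precedes it below -/
import Mathlib

section
/- (Multiplication/Hasse–Davenport product formula.) Let d ≥ 1 be an integer dividing q−1 and η a multiplicative character of F_q^*. Then g(η^d) · ∏_{χ^d = 𝟏, χ ≠ 𝟏} g(χ) = η(d)^d · ∏_{χ^d = 𝟏} g(ηχ), where both products run over multiplicative characters χ of F_q^* with χ^d trivial (and d is viewed as the element d·1 of F_q^*, which is nonzero since d divides q−1). -/
open Finset
open scoped Classical

namespace HD
open Polynomial

noncomputable def rv {K : Type*} [Field K] (f : K[X]) : PowerSeries K := (f.reverse : PowerSeries K)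

noncomputable def uu {K : Type*} [Field K] (f : K[X]) : PowerSeries K :=
  PowerSeries.X * PowerSeries.derivative K (rv f) * (rv f)⁻¹

noncomputable def psT {K : Type*} [Field K] (e : ℕ) (f : K[X]) : K :=
  - PowerSeries.coeff e (uu f)

lemma revAt_ite (N i : ℕ) : revAt N i = if i ≤ N then N - i else i := rfl

lemma rv_const {K : Type*} [Field K] {f : K[X]} (hf : f.Monic) :
    PowerSeries.constantCoeff (rv f) = 1 := by
  unfold rv
  rw [← PowerSeries.coeff_zero_eq_constantCoeff_apply, Polynomial.coeff_coe, coeff_zero_reverse]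
  exact hf

lemma rv_mul_inv {K : Type*} [Field K] {f : K[X]} (hf : f.Monic) :
    rv f * (rv f)⁻¹ = 1 := PowerSeries.mul_inv_cancel _ (by rw [rv_const hf]; exact one_ne_zero)

lemma uu_mul_rv {K : Type*} [Field K] {f : K[X]} (hf : f.Monic) :
    uu f * rv f = PowerSeries.X * PowerSeries.derivative K (rv f) := by
  unfold uu
  rw [mul_assoc, mul_comm _ (rv f), rv_mul_inv hf, mul_one]

lemma uu_unique {K : Type*} [Field K] {f : K[X]} (hf : f.Monic) {v : PowerSeries K}
    (h : v * rv f = PowerSeries.X * PowerSeries.derivative K (rv f)) : uu f = v := by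
  unfold uu
  rw [← h, mul_assoc, rv_mul_inv hf, mul_one]

lemma rv_mul {K : Type*} [Field K] (f g : K[X]) : rv (f * g) = rv f * rv g := by
  unfold rv
  rw [reverse_mul_of_domain, Polynomial.coe_mul]

lemma psT_mul {K : Type*} [Field K] (e : ℕ) {f g : K[X]} (hf : f.Monic) (hg : g.Monic) :
    psT e (f * g) = psT e f + psT e g := by
  have : uu (f * g) = uu f + uu g := by
    apply uu_unique (hf.mul hg)
    rw [rv_mul]
    have h1 := uu_mul_rv hf
    have h2 := uu_mul_rv hg
    simp only [Derivation.leibniz, smul_eq_mul]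
    linear_combination (rv g) * h1 + (rv f) * h2
  simp [psT, this]; ring

lemma psT_one {K : Type*} [Field K] (e : ℕ) : psT e (1 : K[X]) = 0 := by
  have := psT_mul e (monic_one (R := K)) (monic_one (R := K))
  simpa using this

lemma psT_map {K L : Type*} [Field K] [Field L] (φ : K →+* L) (e : ℕ) {f : K[X]} (hf : f.Monic) :
    psT e (f.map φ) = φ (psT e f) := by
  have hr : rv (f.map φ) = PowerSeries.map φ (rv f) := by
    unfold rv
    ext n
    simp [Polynomial.coeff_coe, coeff_reverse]
  have : uu (f.map φ) = PowerSeries.map φ (uu f) := by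
    apply uu_unique (hf.map φ)
    rw [hr, ← map_mul, uu_mul_rv hf, map_mul, PowerSeries.map_X]
    congr 1
    ext n
    simp [PowerSeries.coeff_derivative]
  simp [psT, this]

lemma psT_X_sub_C {K : Type*} [Field K] {e : ℕ} (he : 1 ≤ e) (a : K) :
    psT e (X - C a) = a ^ e := by
  have hr : rv (X - C a) = 1 - PowerSeries.C a * PowerSeries.X := by
    have : (X - C a : K[X]).reverse = 1 - C a * X := by
      ext n
      rw [coeff_reverse, natDegree_X_sub_C]
      rcases n with _ | _ | n
      · simp [revAt_ite]
      · simp [revAt_ite, coeff_one]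
      · simp [revAt_ite, coeff_X, coeff_C, coeff_one]
    unfold rv
    rw [this]; simp
  have : uu (X - C a) = - (PowerSeries.mk (fun n => if n = 0 then 0 else a ^ n)) := by
    apply uu_unique (monic_X_sub_C a)
    rw [hr]
    ext n
    rcases n with _ | n
    · simp [mul_sub]
    · rw [mul_sub, ← mul_assoc, PowerSeries.coeff_succ_X_mul, mul_one, map_sub,
        PowerSeries.coeff_succ_mul_X, mul_comm, PowerSeries.coeff_C_mul,
        PowerSeries.coeff_derivative]
      rcases n with _ | n
      · simp
      · simp [PowerSeries.coeff_one]; ring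
  simp [psT, this]
  omega

lemma psT_add_C {K : Type*} [Field K] {d : ℕ} (hd : 1 ≤ d) {f : K[X]} (hf : f.Monic)
    (hdeg : f.natDegree = d) (c : K) :
    psT d (f + C c) = psT d f - d * c := by
  have hdeg2 : (f + C c).natDegree = d := by simp [hdeg]
  have hm : (f + C c).Monic := hf.add_of_left (by
    rw [degree_eq_natDegree hf.ne_zero, hdeg]
    exact lt_of_le_of_lt degree_C_le (by exact_mod_cast hd))
  have hr : rv (f + C c) = rv f + PowerSeries.C c * PowerSeries.X ^ d := by
    unfold rv
    ext n
    simp only [map_add, Polynomial.coeff_coe, coeff_reverse, hdeg, hdeg2, coeff_add,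
      PowerSeries.coeff_C_mul, PowerSeries.coeff_X_pow, add_right_inj, coeff_C]
    by_cases h : n = d
    · simp [h, revAt_ite]
    · have : revAt d n ≠ 0 := by
        rw [revAt_ite]; split_ifs <;> omega
      simp [this, h]
  have hu0 : PowerSeries.constantCoeff (uu (f + C c)) = 0 := by simp [uu]
  have key : uu (f + C c) - uu f =
      PowerSeries.X ^ d * ((PowerSeries.C (d * c) - PowerSeries.C c * uu (f + C c)) * (rv f)⁻¹) := by
    have h1 := uu_mul_rv hm
    have h2 := uu_mul_rv hf
    have h3 := rv_mul_inv hf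
    rw [hr] at h1
    have h4 : PowerSeries.X * PowerSeries.derivative K
        (PowerSeries.C c * PowerSeries.X ^ d) = PowerSeries.C (d * c) * PowerSeries.X ^ d := by
      ext n
      rcases n with _ | n
      · have : (0:ℕ) ≠ d := by omega
        simp; right; omega
      · rw [PowerSeries.coeff_succ_X_mul, PowerSeries.coeff_derivative]
        simp only [PowerSeries.coeff_C_mul, PowerSeries.coeff_X_pow]
        split_ifs with h
        · rw [← h]; push_cast; ring
        · simp
    rw [map_add, mul_add PowerSeries.X, h4] at h1
    linear_combination (rv f)⁻¹ * h1 - (rv f)⁻¹ * h2 - (uu (f + C c) - uu f) * h3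
  have := congrArg (PowerSeries.coeff d) key
  have h5 := PowerSeries.coeff_X_pow_mul ((PowerSeries.C (d * c) - PowerSeries.C c * uu (f + C c)) * (rv f)⁻¹) d 0
  rw [zero_add] at h5
  rw [h5] at this
  simp [hu0, rv_const hf] at this
  unfold psT
  linear_combination -this

lemma psT_one_eq {K : Type*} [Field K] {f : K[X]} (hf : f.Monic) :
    psT 1 f = - f.nextCoeff := by
  unfold psT uu
  have h := PowerSeries.coeff_succ_X_mul 0 (PowerSeries.derivative K (rv f) * (rv f)⁻¹)
  rw [zero_add] at h
  rw [mul_assoc, h]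
  simp only [PowerSeries.coeff_zero_eq_constantCoeff, map_mul, PowerSeries.constantCoeff_inv,
    rv_const hf]
  rw [← PowerSeries.coeff_zero_eq_constantCoeff_apply, PowerSeries.coeff_derivative]
  simp [rv, Polynomial.coeff_coe]

lemma psT_prod {K ι : Type*} [Field K] (e : ℕ) (s : Finset ι) (f : ι → K[X])
    (hf : ∀ i, (f i).Monic) : psT e (∏ i ∈ s, f i) = ∑ i ∈ s, psT e (f i) := by
  induction s using Finset.induction_on with
  | empty => simp [psT_one]
  | insert a s ha ih =>
    rw [prod_insert ha, sum_insert ha, psT_mul e (hf a) (monic_prod_of_monic _ _ fun i _ => hf i), ih]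

noncomputable def cp (F : Type*) {L : Type*} [Field F] [Field L] [Algebra F L] (α : L) : F[X] :=
  (minpoly F α) ^ (Module.finrank F L / (minpoly F α).natDegree)

lemma cp_map (F : Type*) {L : Type*} [Field F] [Field L] [Algebra F L] [FiniteDimensional F L]
    [IsGalois F L] (α : L) :
    (cp F α).map (algebraMap F L) = ∏ σ : Gal(L/F), (X - C (σ α)) := by
  have hint : IsIntegral F α := Algebra.IsIntegral.isIntegral α
  have hlift := Algebra.IsInvariant.charpoly_mem_lifts F L Gal(L/F) α
  rw [Polynomial.mem_lifts] at hlift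
  obtain ⟨g0, hg0⟩ := hlift
  obtain ⟨g, hg, -, hgm⟩ := lifts_and_natDegree_eq_and_monic
    (Polynomial.mem_lifts _ |>.2 ⟨g0, hg0⟩) (MulSemiringAction.monic_charpoly Gal(L/F) α)
  rw [MulSemiringAction.charpoly_eq] at hg
  have hg' : g.map (algebraMap F L) = ∏ σ : Gal(L/F), (X - C (σ α)) := hg
  have hdvd : g ∣ (minpoly F α) ^ (Fintype.card Gal(L/F)) := by
    rw [← Polynomial.map_dvd_map' (algebraMap F L), hg', Polynomial.map_pow]
    have : (minpoly F α).map (algebraMap F L) ^ (Fintype.card Gal(L/F)) =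
      ∏ σ : Gal(L/F), (minpoly F α).map (algebraMap F L) := by simp
    rw [this]
    refine Finset.prod_dvd_prod_of_dvd _ _ fun σ _ => ?_
    rw [dvd_iff_isRoot, IsRoot, eval_map_algebraMap]
    have := minpoly.aeval F (σ α)
    rwa [minpoly.algEquiv_eq] at this
  obtain ⟨j, -, hj⟩ := (dvd_prime_pow (minpoly.prime hint) _).1 hdvd
  have hgj : g = minpoly F α ^ j :=
    eq_of_monic_of_associated hgm ((minpoly.monic hint).pow j) hj
  have hdeg : j * (minpoly F α).natDegree = Module.finrank F L := by
    rw [← natDegree_pow, ← hgj, ← natDegree_map (algebraMap F L), hg',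
      natDegree_prod_of_monic _ _ (fun σ _ => monic_X_sub_C _)]
    simp [← Nat.card_eq_fintype_card, IsGalois.card_aut_eq_finrank]
  rw [← hg', cp, ← hdeg, Nat.mul_div_cancel _ (minpoly.natDegree_pos hint), hgj]

lemma cp_monic (F : Type*) {L : Type*} [Field F] [Field L] [Algebra F L] [FiniteDimensional F L]
    (α : L) : (cp F α).Monic :=
  (minpoly.monic (Algebra.IsIntegral.isIntegral α)).pow _

lemma cp_natDegree (F : Type*) {L : Type*} [Field F] [Field L] [Algebra F L] [FiniteDimensional F L]
    (α : L) : (cp F α).natDegree = Module.finrank F L := by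
  rw [cp, natDegree_pow, Nat.div_mul_cancel (minpoly.degree_dvd (Algebra.IsIntegral.isIntegral α))]

lemma cp_coeff_zero (F : Type*) {L : Type*} [Field F] [Field L] [Algebra F L] [FiniteDimensional F L]
    [IsGalois F L] (α : L) :
    (-1) ^ (cp F α).natDegree * (cp F α).coeff 0 = Algebra.norm F α := by
  apply (algebraMap F L).injective
  rw [Algebra.norm_eq_prod_automorphisms, map_mul, ← Polynomial.coeff_map, cp_map,
    cp_natDegree, coeff_zero_prod]
  simp only [coeff_sub, coeff_X_zero, coeff_C_zero, zero_sub, map_pow, map_neg, map_one]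
  rw [Finset.prod_neg, ← mul_assoc, ← IsGalois.card_aut_eq_finrank, Nat.card_eq_fintype_card,
    Finset.card_univ, ← mul_pow]
  simp

lemma cp_psT (F : Type*) {L : Type*} [Field F] [Field L] [Algebra F L] [FiniteDimensional F L]
    [IsGalois F L] {e : ℕ} (he : 1 ≤ e) (α : L) :
    psT e (cp F α) = Algebra.trace F L (α ^ e) := by
  apply (algebraMap F L).injective
  rw [← psT_map _ _ (cp_monic F α), cp_map, trace_eq_sum_automorphisms,
    psT_prod _ _ _ (fun σ => monic_X_sub_C _)]
  simp [psT_X_sub_C he]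

lemma card_minpoly {F L : Type*} [Field F] [Fintype F] [Field L] [Fintype L] [Algebra F L]
    {P : F[X]} (hP : Irreducible P) (hm : P.Monic) :
    (univ.filter fun α : L => minpoly F α = P).card =
      if P.natDegree ∣ Module.finrank F L then P.natDegree else 0 := by
  split_ifs with h
  · have hsp : (P.map (algebraMap F L)).Splits := by
      have h1 := hP.natDegree_dvd_iff_dvd_X_pow_card_pow_sub_X.1 h
      rw [← Module.natCard_eq_pow_finrank, Nat.card_eq_fintype_card] at h1
      have h2 := Polynomial.map_dvd (algebraMap F L) h1
      refine Splits.of_dvd ?_ ?_ h2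
      · simpa using (FiniteField.isSplittingField_sub L F).splits
      · simpa using FiniteField.X_pow_card_sub_X_ne_zero L (Fintype.one_lt_card (α := L))
    have hsep : P.Separable := PerfectField.separable_of_irreducible hP
    rw [← card_rootSet_eq_natDegree hsep hsp, ← Set.toFinset_card]
    congr 1
    ext α
    simp only [mem_filter, mem_univ, true_and, Set.mem_toFinset, mem_rootSet]
    constructor
    · rintro rfl
      exact ⟨hP.ne_zero, minpoly.aeval _ _⟩
    · intro ⟨_, h0⟩
      exact (minpoly.eq_of_irreducible_of_monic hP h0 hm).symm
  · rw [card_eq_zero, filter_eq_empty_iff]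
    rintro α - rfl
    exact h (minpoly.degree_dvd (Algebra.IsIntegral.isIntegral α))

lemma arith_count {m v n : ℕ} (hm : 0 < m) (hn : v * m ≤ n) :
    ((range n).filter fun k => m ∣ k + 1 ∧ (k + 1) / m ≤ v).card = v := by
  have : ((range n).filter fun k => m ∣ k + 1 ∧ (k + 1) / m ≤ v) =
      (range v).image (fun j => (j + 1) * m - 1) := by
    ext k
    simp only [mem_filter, mem_range, mem_image]
    constructor
    · rintro ⟨hk, ⟨c, hc⟩, h⟩
      rw [hc, Nat.mul_div_cancel_left _ hm] at h
      rcases c with _ | c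
      · simp at hc
      · exact ⟨c, by omega, by rw [mul_comm, ← hc]; omega⟩
    · rintro ⟨j, hj, rfl⟩
      have h1 : 0 < (j + 1) * m := by positivity
      have h2 : (j + 1) * m ≤ v * m := Nat.mul_le_mul_right _ hj
      have h3 : (j + 1) * m - 1 + 1 = (j + 1) * m := by omega
      refine ⟨by omega, by rw [h3]; exact dvd_mul_left _ _, ?_⟩
      rw [h3, Nat.mul_div_cancel _ hm]; omega
  rw [this, card_image_of_injective, card_range]
  intro a b hab
  simp only at hab
  have h1 : 0 < (a + 1) * m := by positivity
  have h2 : 0 < (b + 1) * m := by positivity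
  have : (a + 1) * m = (b + 1) * m := by omega
  have := Nat.eq_of_mul_eq_mul_right hm this
  omega

lemma total_count {F : Type*} [Field F] [Fintype F] (E : ℕ → Type*) [∀ k, Field (E k)]
    [∀ k, Fintype (E k)] [∀ k, Algebra F (E k)] (hE : ∀ k, Module.finrank F (E k) = k + 1)
    {h : F[X]} (hh : h.Monic) :
    ∑ k ∈ range h.natDegree, (univ.filter fun α : E k => cp F α ∣ h).card = h.natDegree := by
  set nf := UniqueFactorizationMonoid.normalizedFactors h with hnf
  have hprod : nf.prod = h :=
    (UniqueFactorizationMonoid.prod_normalizedFactors_eq hh.ne_zero).trans hh.normalize_eq_self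
  have hirr : ∀ P ∈ nf, Irreducible P := fun P hP =>
    UniqueFactorizationMonoid.irreducible_of_normalized_factor P hP
  have hmon : ∀ P ∈ nf, P.Monic := fun P hP => by
    have := UniqueFactorizationMonoid.normalize_normalized_factor P hP
    rw [← this]; exact Polynomial.monic_normalize (hirr P hP).ne_zero
  have hpow : ∀ P ∈ nf, ∀ j, P ^ j ∣ h ↔ j ≤ nf.count P := fun P hP j => by
    rw [pow_dvd_iff_le_emultiplicity,
      UniqueFactorizationMonoid.emultiplicity_eq_count_normalizedFactors (hirr P hP) hh.ne_zero,
      UniqueFactorizationMonoid.normalize_normalized_factor P hP]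
    exact Nat.cast_le
  have hdeg : h.natDegree = ∑ P ∈ nf.toFinset, nf.count P * P.natDegree := by
    conv_lhs => rw [← hprod]
    rw [natDegree_multiset_prod_of_monic _ hmon, Finset.sum_multiset_map_count]
    simp
  have hfib : ∀ k, (univ.filter fun α : E k => cp F α ∣ h).card =
      ∑ P ∈ nf.toFinset, if P.natDegree ∣ k + 1 ∧ (k + 1) / P.natDegree ≤ nf.count P
        then P.natDegree else 0 := by
    intro k
    have hfd : FiniteDimensional F (E k) := Module.finite_of_finrank_pos (by rw [hE]; omega)
    rw [Finset.card_eq_sum_card_fiberwise (f := fun α => minpoly F α) (t := nf.toFinset)]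
    · refine Finset.sum_congr rfl fun P hP => ?_
      rw [Multiset.mem_toFinset] at hP
      rw [filter_filter]
      have h1 := card_minpoly (L := E k) (hirr P hP) (hmon P hP)
      rw [hE] at h1
      have h2 : (univ.filter fun α : E k => cp F α ∣ h ∧ minpoly F α = P) =
          if (k + 1) / P.natDegree ≤ nf.count P then
            (univ.filter fun α : E k => minpoly F α = P) else ∅ := by
        split_ifs with hc
        · ext α
          simp only [mem_filter, mem_univ, true_and, and_iff_right_iff_imp]
          rintro rfl
          rw [cp, hE, hpow _ hP]; exact hc
        · rw [filter_eq_empty_iff]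
          rintro α - ⟨hd, rfl⟩
          rw [cp, hE, hpow _ hP] at hd
          exact hc hd
      rw [h2]
      by_cases hc : (k + 1) / P.natDegree ≤ nf.count P
      · rw [if_pos hc, h1]; simp only [hc, and_true]
      · rw [if_neg hc]; simp only [hc, and_false, card_empty, if_false]
    · intro α hα
      simp only [coe_filter, mem_univ, true_and, Set.mem_ofPred_eq] at hα
      have hint : IsIntegral F α := Algebra.IsIntegral.isIntegral α
      have hd : minpoly F α ∣ h := by
        refine (dvd_pow_self _ ?_).trans hα
        have := Nat.div_pos (Nat.le_of_dvd (by rw [hE]; omega) (minpoly.degree_dvd hint))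
          (minpoly.natDegree_pos hint)
        exact this.ne'
      rw [Finset.mem_coe, Multiset.mem_toFinset, hnf, Polynomial.mem_normalizedFactors_iff hh.ne_zero]
      exact ⟨minpoly.irreducible hint, minpoly.monic hint, hd⟩
  rw [Finset.sum_congr rfl fun k _ => hfib k, Finset.sum_comm]
  conv_rhs => rw [hdeg]
  refine Finset.sum_congr rfl fun P hP => ?_
  rw [← Finset.sum_filter, Finset.sum_const, arith_count, smul_eq_mul]
  · exact (hirr P (Multiset.mem_toFinset.1 hP)).natDegree_pos
  · rw [← natDegree_pow]
    exact natDegree_le_of_dvd ((hpow P (Multiset.mem_toFinset.1 hP) _).2 le_rfl) hh.ne_zero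

lemma mon_finite (F : Type*) [Field F] [Fintype F] (n : ℕ) :
    {f : F[X] | f.Monic ∧ f.natDegree = n}.Finite := by
  refine Set.Finite.of_injOn (f := fun f : F[X] => fun i : Fin (n + 1) => f.coeff i)
    (t := Set.univ) (fun _ _ => Set.mem_univ _) ?_ Set.finite_univ
  intro f hf g hg h
  ext i
  by_cases hi : i < n + 1
  · exact congrFun h ⟨i, hi⟩
  · rw [coeff_eq_zero_of_natDegree_lt (by rw [hf.2]; omega),
      coeff_eq_zero_of_natDegree_lt (by rw [hg.2]; omega)]

noncomputable def Mon (F : Type*) [Field F] [Fintype F] (n : ℕ) : Finset F[X] :=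
  (mon_finite F n).toFinset

lemma mem_Mon {F : Type*} [Field F] [Fintype F] {n : ℕ} {f : F[X]} :
    f ∈ Mon F n ↔ f.Monic ∧ f.natDegree = n := by
  simp [Mon]

noncomputable def lam {F : Type*} [Field F] (φ : AddChar F ℂ) (θ : MulChar F ℂ) (e : ℕ)
    (f : F[X]) : ℂ := θ ((-1) ^ f.natDegree * f.coeff 0) * φ (psT e f)

lemma lam_mul {F : Type*} [Field F] (φ : AddChar F ℂ) (θ : MulChar F ℂ) (e : ℕ)
    {f g : F[X]} (hf : f.Monic) (hg : g.Monic) :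
    lam φ θ e (f * g) = lam φ θ e f * lam φ θ e g := by
  unfold lam
  rw [psT_mul e hf hg, AddChar.map_add_eq_mul, hf.natDegree_mul hg, mul_coeff_zero, pow_add,
    mul_mul_mul_comm, map_mul]
  ring

noncomputable def AA {F : Type*} [Field F] [Fintype F] (φ : AddChar F ℂ) (θ : MulChar F ℂ) (e n : ℕ) : ℂ :=
  ∑ f ∈ Mon F n, lam φ θ e f

noncomputable def SS {F : Type*} [Field F] [Fintype F] (L : Type*) [Field L] [Fintype L]
    [Algebra F L] (φ : AddChar F ℂ) (θ : MulChar F ℂ) (e : ℕ) : ℂ :=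
  ∑ α : L, θ (Algebra.norm F α) * φ (Algebra.trace F L (α ^ e))

lemma recursion {F : Type*} [Field F] [Fintype F] (E : ℕ → Type*) [∀ k, Field (E k)]
    [∀ k, Fintype (E k)] [∀ k, Algebra F (E k)] (hE : ∀ k, Module.finrank F (E k) = k + 1)
    (φ : AddChar F ℂ) (θ : MulChar F ℂ) {e : ℕ} (he : 1 ≤ e) (n : ℕ) :
    (n : ℂ) * AA φ θ e n = ∑ k ∈ range n, SS (E k) φ θ e * AA φ θ e (n - 1 - k) := by
  have h1 : ∀ k ∈ range n, SS (E k) φ θ e * AA φ θ e (n - 1 - k) =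
      ∑ h ∈ Mon F n, lam φ θ e h * (univ.filter fun α : E k => cp F α ∣ h).card := by
    intro k hk
    rw [mem_range] at hk
    have hfd : FiniteDimensional F (E k) := Module.finite_of_finrank_pos (by rw [hE]; omega)
    have hS : SS (E k) φ θ e = ∑ α : E k, lam φ θ e (cp F α) := by
      unfold SS lam
      refine Finset.sum_congr rfl fun α _ => ?_
      rw [cp_coeff_zero, cp_psT F he]
    have h2 : ∀ α : E k, lam φ θ e (cp F α) * AA φ θ e (n - 1 - k) =
        ∑ h ∈ Mon F n, if cp F α ∣ h then lam φ θ e h else 0 := by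
      intro α
      rw [← Finset.sum_filter, AA, Finset.mul_sum]
      refine Finset.sum_bij (fun g _ => cp F α * g) ?_ ?_ ?_ ?_
      · intro g hg
        rw [mem_Mon] at hg
        rw [mem_filter, mem_Mon]
        refine ⟨⟨(cp_monic F α).mul hg.1, ?_⟩, dvd_mul_right _ _⟩
        rw [(cp_monic F α).natDegree_mul hg.1, cp_natDegree, hE, hg.2]; omega
      · intro g _ g' _ hgg
        exact mul_left_cancel₀ (cp_monic F α).ne_zero hgg
      · intro h hh
        rw [mem_filter, mem_Mon] at hh
        obtain ⟨⟨hm, hd⟩, g, rfl⟩ := hh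
        have hgm : g.Monic := (cp_monic F α).of_mul_monic_left hm
        refine ⟨g, ?_, rfl⟩
        rw [mem_Mon]
        refine ⟨hgm, ?_⟩
        rw [(cp_monic F α).natDegree_mul hgm, cp_natDegree, hE] at hd
        omega
      · intro g hg
        rw [lam_mul φ θ e (cp_monic F α) (mem_Mon.1 hg).1]
    rw [hS, Finset.sum_mul, Finset.sum_congr rfl fun α _ => h2 α, Finset.sum_comm]
    refine Finset.sum_congr rfl fun h _ => ?_
    rw [← Finset.sum_filter, Finset.sum_const, nsmul_eq_mul, mul_comm]
  rw [Finset.sum_congr rfl h1, Finset.sum_comm, AA, Finset.mul_sum]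
  refine Finset.sum_congr rfl fun h hh => ?_
  obtain ⟨hm, hd⟩ := mem_Mon.1 hh
  rw [← Finset.mul_sum, mul_comm]
  congr 1
  have := total_count E hE hm
  rw [hd] at this
  exact_mod_cast this.symm

lemma AA_zero {F : Type*} [Field F] [Fintype F] (φ : AddChar F ℂ) (θ : MulChar F ℂ) (e : ℕ) :
    AA φ θ e 0 = 1 := by
  have : Mon F 0 = {1} := by
    ext f
    rw [mem_Mon, mem_singleton]
    constructor
    · rintro ⟨h1, h2⟩
      exact h1.natDegree_eq_zero.1 h2
    · rintro rfl
      exact ⟨monic_one, natDegree_one⟩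
  simp [AA, this, lam, psT_one]

lemma AA_one {F : Type*} [Field F] [Fintype F] (φ : AddChar F ℂ) (θ : MulChar F ℂ) :
    AA φ θ 1 1 = gaussSum θ φ := by
  unfold AA gaussSum
  symm
  refine Finset.sum_bij (fun a _ => X - C a) ?_ ?_ ?_ ?_
  · intro a _
    exact mem_Mon.2 ⟨monic_X_sub_C a, natDegree_X_sub_C a⟩
  · intro a _ b _ h
    simpa using h
  · intro f hf
    rw [mem_Mon] at hf
    refine ⟨- f.coeff 0, mem_univ _, ?_⟩
    rw [hf.1.eq_X_add_C hf.2]; simp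
  · intro a _
    simp [lam, psT_X_sub_C]

lemma AA_ge_two {F : Type*} [Field F] [Fintype F] (φ : AddChar F ℂ) (hφ : φ ≠ 1)
    (θ : MulChar F ℂ) {n : ℕ} (hn : 2 ≤ n) : AA φ θ 1 n = 0 := by
  obtain ⟨b, hb⟩ : ∃ b, φ b ≠ 1 := by
    by_contra! h
    exact hφ (by ext x; simpa using h x)
  have hmem : ∀ (c : F) (f : F[X]), f ∈ Mon F n → f + C c * X ^ (n - 1) ∈ Mon F n := by
    intro c f hf
    rw [mem_Mon] at hf ⊢
    have hdeg : (C c * X ^ (n - 1)).degree < f.degree := by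
      rw [degree_eq_natDegree hf.1.ne_zero, hf.2]
      refine lt_of_le_of_lt (degree_C_mul_X_pow_le _ _) ?_
      exact_mod_cast (by omega)
    exact ⟨hf.1.add_of_left hdeg, by rw [natDegree_add_eq_left_of_degree_lt hdeg, hf.2]⟩
  have key : AA φ θ 1 n = φ b * AA φ θ 1 n := by
    conv_rhs => rw [AA, Finset.mul_sum]
    unfold AA
    symm
    refine Finset.sum_bij' (fun f _ => f + C (-b) * X ^ (n - 1)) (fun f _ => f + C b * X ^ (n - 1))
      (fun f hf => hmem _ f hf) (fun f hf => hmem _ f hf) (by intros; simp) (by intros; simp) ?_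
    intro f hf
    have h1 := mem_Mon.1 hf
    have h2 := mem_Mon.1 (hmem (-b) f hf)
    unfold lam
    rw [psT_one_eq h1.1, psT_one_eq h2.1, h1.2, h2.2, nextCoeff_of_natDegree_pos (by omega),
      nextCoeff_of_natDegree_pos (by omega), h1.2, h2.2]
    have h3 : (0 : ℕ) ≠ n - 1 := by omega
    rw [coeff_add, coeff_add, coeff_C_mul, coeff_C_mul, coeff_X_pow, coeff_X_pow, if_neg h3,
      if_pos rfl]
    have : -(f.coeff (n - 1) + -b * 1) = b + -f.coeff (n - 1) := by ring
    rw [this, AddChar.map_add_eq_mul]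
    simp; ring
  have : (1 - φ b) * AA φ θ 1 n = 0 := by linear_combination key
  rcases mul_eq_zero.1 this with h | h
  · exact absurd (sub_eq_zero.1 h).symm hb
  · exact h

lemma lifting {F : Type*} [Field F] [Fintype F] (E : ℕ → Type*) [∀ k, Field (E k)]
    [∀ k, Fintype (E k)] [∀ k, Algebra F (E k)] (hE : ∀ k, Module.finrank F (E k) = k + 1)
    (φ : AddChar F ℂ) (hφ : φ ≠ 1) (θ : MulChar F ℂ) (k : ℕ) :
    SS (E k) φ θ 1 = (-1) ^ k * gaussSum θ φ ^ (k + 1) := by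
  induction k with
  | zero =>
    have := recursion E hE φ θ le_rfl 1
    simp [AA_one, AA_zero] at this
    simp [this]
  | succ k ih =>
    have := recursion E hE φ θ le_rfl (k + 2)
    rw [AA_ge_two φ hφ θ (by omega), mul_zero, sum_range_succ, sum_range_succ,
      Finset.sum_eq_zero] at this
    · have h1 : k + 2 - 1 - k = 1 := by omega
      have h2 : k + 2 - 1 - (k + 1) = 0 := by omega
      rw [h1, h2, AA_one, AA_zero, ih] at this
      rw [pow_succ (-1 : ℂ), pow_succ _ (k + 1)]
      linear_combination -this
    · intro j hj
      rw [mem_range] at hj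
      rw [AA_ge_two φ hφ θ (by omega), mul_zero]

lemma esymm_rec {σ : Type*} [Fintype σ] (g : σ → ℂ) (a : ℕ → ℂ) (h0 : a 0 = 1)
    (hrec : ∀ n : ℕ, (n : ℂ) * a n =
      ∑ k ∈ range n, (∑ i, (-1) ^ k * g i ^ (k + 1)) * a (n - 1 - k)) (n : ℕ) :
    a n = MvPolynomial.aeval g (MvPolynomial.esymm σ ℂ n) := by
  induction n using Nat.strong_induction_on with
  | _ n ih =>
    rcases Nat.eq_zero_or_pos n with rfl | hn
    · simp [h0]
    have hn' : (n : ℂ) ≠ 0 := by exact_mod_cast hn.ne'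
    apply mul_left_cancel₀ hn'
    have hN := congrArg (MvPolynomial.aeval g) (MvPolynomial.mul_esymm_eq_sum σ ℂ n)
    simp only [map_mul, map_natCast, map_pow, map_neg, map_one, map_sum] at hN
    rw [hN, hrec, Finset.mul_sum]
    refine Finset.sum_bij (fun k _ => (n - 1 - k, k + 1)) ?_ ?_ ?_ ?_
    · intro k hk
      rw [mem_range] at hk
      simp only [mem_filter, HasAntidiagonal.mem_antidiagonal]
      omega
    · intro k _ l _ h
      simpa using (Prod.ext_iff.1 h).2
    · rintro ⟨x, y⟩ h
      simp only [mem_filter, HasAntidiagonal.mem_antidiagonal] at h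
      exact ⟨y - 1, by rw [mem_range]; omega, by ext <;> simp <;> omega⟩
    · intro k hk
      rw [mem_range] at hk
      rw [ih _ (by omega)]
      have hs : (-1 : ℂ) ^ (n + 1) * (-1) ^ (n - 1 - k) = (-1) ^ k := by
        rw [← pow_add]
        have : n + 1 + (n - 1 - k) + 2 * k = 2 * n + k := by omega
        have h2 : (-1 : ℂ) ^ (n + 1 + (n - 1 - k)) * (-1) ^ (2 * k) = (-1) ^ (2 * n) * (-1) ^ k := by
          rw [← pow_add, ← pow_add, this]
        simpa [pow_mul] using h2
      simp only [MvPolynomial.psum, map_sum, map_pow, MvPolynomial.aeval_X]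
      rw [← Finset.mul_sum, ← hs]
      ring

noncomputable instance fintypeMC (F : Type*) [Field F] [Fintype F] : Fintype (MulChar F ℂ) :=
  Fintype.ofFinite _

lemma card_sigma {F : Type*} [Field F] [Fintype F] {d : ℕ} (hd : 1 ≤ d)
    (hdq : d ∣ Fintype.card F - 1) :
    (univ.filter fun χ : MulChar F ℂ => χ ^ d = 1).card = d := by
  have hd0 : d ≠ 0 := by omega
  obtain ⟨χ, hχ⟩ := MulChar.exists_mulChar_orderOf F hdq (Complex.isPrimitiveRoot_exp d hd0)
  obtain ⟨e⟩ := MulChar.mulEquiv_units F ℂ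
  haveI : IsCyclic (MulChar F ℂ) := isCyclic_of_surjective e.symm e.symm.surjective
  refine le_antisymm (IsCyclic.card_pow_eq_one_le hd) ?_
  have : ((range d).image fun i => χ ^ i) ⊆ (univ.filter fun χ : MulChar F ℂ => χ ^ d = 1) := by
    intro x hx
    rw [mem_image] at hx
    obtain ⟨i, _, rfl⟩ := hx
    rw [mem_filter, ← pow_mul, mul_comm, pow_mul, ← hχ, pow_orderOf_eq_one, one_pow]
    exact ⟨mem_univ _, rfl⟩
  have h2 := Finset.card_le_card this
  rw [Finset.card_image_of_injOn, card_range] at h2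
  · exact h2
  · intro i hi j hj hij
    simp only [coe_range, Set.mem_Iio] at hi hj
    exact pow_injOn_Iio_orderOf (by simpa [hχ] using hi) (by simpa [hχ] using hj) hij

lemma exists_prim {F : Type*} [Field F] [Fintype F] {d : ℕ} (hd : 1 ≤ d)
    (hdq : d ∣ Fintype.card F - 1) : ∃ ζ : F, IsPrimitiveRoot ζ d := by
  obtain ⟨g, hg⟩ := IsCyclic.exists_ofOrder_eq_natCard (α := Fˣ)
  rw [Nat.card_eq_fintype_card, Fintype.card_units] at hg
  obtain ⟨m, hm⟩ := hdq
  have hpos : 0 < Fintype.card F - 1 := by have := Fintype.one_lt_card (α := F); omega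
  have := (IsPrimitiveRoot.orderOf (g : Fˣ)).pow (n := orderOf g) (a := m) (b := d) (by rw [hg]; exact hpos)
    (by rw [hg, hm, mul_comm])
  exact ⟨_, IsPrimitiveRoot.coe_units_iff.2 this⟩

lemma orth {F L : Type*} [Field F] [Fintype F] [Field L] [Fintype L] [Algebra F L] {d : ℕ}
    (hd : 1 ≤ d) (hdq : d ∣ Fintype.card F - 1) {α : L} (hα : α ≠ 0) :
    ((univ.filter fun β : L => β ^ d = α).card : ℂ) =
      ∑ χ ∈ univ.filter (fun χ : MulChar F ℂ => χ ^ d = 1), χ (Algebra.norm F α) := by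
  have hd0 : d ≠ 0 := by omega
  by_cases h : ∃ β : L, β ^ d = α
  · obtain ⟨β, rfl⟩ := h
    have hβ : β ≠ 0 := by rintro rfl; exact hα (zero_pow hd0)
    have h1 : (univ.filter fun b : L => b ^ d = β ^ d).card = d := by
      obtain ⟨ζ, hζ⟩ := exists_prim hd hdq
      have hζ' := hζ.map_of_injective (FaithfulSMul.algebraMap_injective F L)
      refine Eq.trans (Eq.symm ?_) hζ'.card_nthRootsFinset
      refine Finset.card_bij (fun x _ => x * β) ?_ ?_ ?_
      · intro x hx
        rw [Polynomial.mem_nthRootsFinset hd] at hx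
        simp [mul_pow, hx]
      · intro x _ y _ hxy
        exact mul_right_cancel₀ hβ hxy
      · intro b hb
        rw [mem_filter] at hb
        refine ⟨b / β, ?_, by field_simp⟩
        rw [Polynomial.mem_nthRootsFinset hd, div_pow, hb.2, div_self hα]
    rw [h1, Finset.sum_congr rfl (g := fun _ => (1 : ℂ)), Finset.sum_const, card_sigma hd hdq]
    · simp
    · intro χ hχ
      rw [mem_filter] at hχ
      rw [map_pow, map_pow, ← MulChar.pow_apply' _ hd0, hχ.2, MulChar.one_apply]
      exact (Algebra.norm_ne_zero_iff.2 hβ).isUnit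
  · have h0 : (univ.filter fun b : L => b ^ d = α) = ∅ := by
      rw [Finset.filter_eq_empty_iff]
      intro b _ hb
      exact h ⟨b, hb⟩
    rw [h0, card_empty, Nat.cast_zero]
    obtain ⟨χ, hχ⟩ := MulChar.exists_mulChar_orderOf F hdq (Complex.isPrimitiveRoot_exp d hd0)
    have hne : χ (Algebra.norm F α) ≠ 1 := by
      intro h1
      obtain ⟨γ, hγ⟩ := IsCyclic.exists_monoid_generator (α := Lˣ)
      obtain ⟨a, ha⟩ := hγ (Units.mk0 α hα)
      have ha' : (γ : L) ^ a = α := by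
        have := congrArg Units.val ha
        simpa using this
      have h2 : χ ^ a = 1 := by
        ext u
        obtain ⟨w, hw⟩ := FiniteField.unitsMap_norm_surjective F L u
        obtain ⟨b, hb⟩ := hγ w
        have : (u : F) = Algebra.norm F (γ : L) ^ b := by
          rw [← hw, ← hb]; simp
        rw [MulChar.pow_apply_coe, this, MulChar.one_apply (this ▸ u.isUnit), map_pow, ← pow_mul,
          mul_comm, pow_mul, ← map_pow χ, ← map_pow (Algebra.norm F), ha', h1, one_pow]
      have h3 : d ∣ a := by rw [← hχ]; exact orderOf_dvd_of_pow_eq_one h2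
      obtain ⟨m, rfl⟩ := h3
      exact h ⟨(γ : L) ^ m, by rw [← pow_mul, mul_comm, ha']⟩
    have hχd : χ ^ d = 1 := by rw [← hχ]; exact pow_orderOf_eq_one χ
    have key : χ (Algebra.norm F α) *
      ∑ χ ∈ univ.filter (fun χ : MulChar F ℂ => χ ^ d = 1), χ (Algebra.norm F α) =
      ∑ χ ∈ univ.filter (fun χ : MulChar F ℂ => χ ^ d = 1), χ (Algebra.norm F α) := by
      rw [Finset.mul_sum]
      refine Finset.sum_bij' (fun ψ _ => χ * ψ) (fun ψ _ => χ⁻¹ * ψ) ?_ ?_ ?_ ?_ ?_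
      · intro ψ hψ
        rw [mem_filter] at hψ ⊢
        exact ⟨mem_univ _, by rw [mul_pow, hψ.2, hχd, one_mul]⟩
      · intro ψ hψ
        rw [mem_filter] at hψ ⊢
        exact ⟨mem_univ _, by rw [mul_pow, inv_pow, hψ.2, hχd, inv_one, one_mul]⟩
      · intros; simp
      · intros; simp
      · intros; simp [MulChar.mul_apply]
    have : (χ (Algebra.norm F α) - 1) *
      ∑ χ ∈ univ.filter (fun χ : MulChar F ℂ => χ ^ d = 1), χ (Algebra.norm F α) = 0 := by
      linear_combination key
    rcases mul_eq_zero.1 this with h | h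
    · exact absurd (sub_eq_zero.1 h) hne
    · exact h.symm

lemma SS_split {F L : Type*} [Field F] [Fintype F] [Field L] [Fintype L] [Algebra F L] {d : ℕ}
    (hd : 1 ≤ d) (hdq : d ∣ Fintype.card F - 1) (φ : AddChar F ℂ) (η : MulChar F ℂ) :
    SS L φ (η ^ d) d =
      ∑ χ ∈ univ.filter (fun χ : MulChar F ℂ => χ ^ d = 1), SS L φ (η * χ) 1 := by
  have hd0 : d ≠ 0 := by omega
  unfold SS
  rw [Finset.sum_comm]
  rw [← Finset.sum_fiberwise (s := univ) (g := fun β : L => β ^ d)]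
  refine Finset.sum_congr rfl fun α _ => ?_
  have h1 : ∑ β ∈ univ.filter (fun β : L => β ^ d = α),
      (η ^ d) (Algebra.norm F β) * φ (Algebra.trace F L (β ^ d)) =
      (univ.filter fun β : L => β ^ d = α).card *
        (η (Algebra.norm F α) * φ (Algebra.trace F L α)) := by
    rw [← nsmul_eq_mul, ← Finset.sum_const]
    refine Finset.sum_congr rfl fun β hβ => ?_
    rw [mem_filter] at hβ
    rw [MulChar.pow_apply' _ hd0, ← map_pow, ← map_pow, hβ.2]
  rw [h1]
  by_cases hα : α = 0
  · subst hα
    haveI : FiniteDimensional F L := Module.Finite.of_finite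
    simp [Algebra.norm_zero, MulChar.map_zero]
  · rw [orth hd hdq hα, Finset.sum_mul]
    refine Finset.sum_congr rfl fun χ _ => ?_
    rw [MulChar.mul_apply, pow_one]
    ring

lemma AA_esymm {F : Type*} [Field F] [Fintype F] (φ : AddChar F ℂ) (hφ : φ ≠ 1) {d : ℕ}
    (hd : 1 ≤ d) (hdq : d ∣ Fintype.card F - 1) (η : MulChar F ℂ) :
    AA φ (η ^ d) d d =
      ∏ χ ∈ univ.filter (fun χ : MulChar F ℂ => χ ^ d = 1), gaussSum (η * χ) φ := by
  haveI : Fact (ringChar F).Prime := ⟨CharP.char_is_prime F (ringChar F)⟩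
  let E : ℕ → Type := fun k => FiniteField.Extension F (ringChar F) (k + 1)
  letI : ∀ k, Field (E k) := fun k => inferInstanceAs (Field (FiniteField.Extension F (ringChar F) (k + 1)))
  letI : ∀ k, Algebra F (E k) := fun k =>
    inferInstanceAs (Algebra F (FiniteField.Extension F (ringChar F) (k + 1)))
  haveI : ∀ k, Finite (E k) := fun k =>
    inferInstanceAs (Finite (FiniteField.Extension F (ringChar F) (k + 1)))
  letI : ∀ k, Fintype (E k) := fun k => Fintype.ofFinite _
  have hE : ∀ k, Module.finrank F (E k) = k + 1 := fun k =>
    FiniteField.finrank_extension F (ringChar F) (k + 1)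
  have hcard := card_sigma (F := F) hd hdq
  set S := univ.filter (fun χ : MulChar F ℂ => χ ^ d = 1) with hS
  have := esymm_rec (σ := S) (fun χ => gaussSum (η * χ.1) φ) (AA φ (η ^ d) d) (AA_zero _ _ _) (by
    intro n
    rw [recursion E hE φ (η ^ d) hd n]
    refine Finset.sum_congr rfl fun k _ => ?_
    rw [SS_split hd hdq, Finset.sum_congr rfl fun χ _ => lifting E hE φ hφ (η * χ) k, ← hS,
      ← Finset.sum_coe_sort S]) d
  rw [this, MvPolynomial.esymm]
  have hp : powersetCard d (univ : Finset S) = {univ} := by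
    have : d = (univ : Finset S).card := by rw [card_univ, Fintype.card_coe, hcard]
    rw [this, powersetCard_self]
  rw [hp, Finset.sum_singleton, map_prod]
  simp only [MvPolynomial.aeval_X]
  exact Finset.prod_coe_sort S (fun χ => gaussSum (η * χ) φ)

lemma AA_eval {F : Type*} [Field F] [Fintype F] (φ : AddChar F ℂ) {d : ℕ}
    (hd : 1 ≤ d) (hdq : d ∣ Fintype.card F - 1) (η : MulChar F ℂ) :
    η (d : F) ^ d * AA φ (η ^ d) d d =
      gaussSum (η ^ d) φ * ∑ f ∈ (Mon F d).filter (fun f => f.coeff 0 = 0), φ (psT d f) := by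
  have hd0 : d ≠ 0 := by omega
  have hdF : (d : F) ≠ 0 := by
    intro h
    obtain ⟨m, hm⟩ := hdq
    have h1 : ((Fintype.card F - 1 : ℕ) : F) = 0 := by rw [hm]; simp [h]
    rw [Nat.cast_sub Fintype.card_pos, Nat.cast_card_eq_zero] at h1
    simp at h1
  have hadd : ∀ (c : F) (f : F[X]), f ∈ Mon F d → f + C c ∈ Mon F d := by
    intro c f hf
    rw [mem_Mon] at hf ⊢
    have hdeg : (C c).degree < f.degree := by
      rw [degree_eq_natDegree hf.1.ne_zero, hf.2]
      refine lt_of_le_of_lt degree_C_le ?_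
      exact_mod_cast hd
    exact ⟨hf.1.add_of_left hdeg, by rw [natDegree_add_eq_left_of_degree_lt hdeg, hf.2]⟩
  have h1 : AA φ (η ^ d) d d = (∑ c : F, (η ^ d) ((-1) ^ d * c) * φ (-(d * c))) *
      ∑ f ∈ (Mon F d).filter (fun f => f.coeff 0 = 0), φ (psT d f) := by
    rw [Finset.sum_mul_sum, ← Finset.sum_product']
    unfold AA
    symm
    refine Finset.sum_bij' (fun x _ => x.2 + C x.1) (fun f _ => (f.coeff 0, f + C (-f.coeff 0)))
      ?_ ?_ ?_ ?_ ?_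
    · rintro ⟨c, f⟩ h
      simp only [mem_product, mem_filter] at h
      exact hadd c f h.2.1
    · intro f hf
      simp only [mem_product, mem_filter, mem_univ, true_and]
      exact ⟨hadd _ f hf, by simp⟩
    · rintro ⟨c, f⟩ h
      simp only [mem_product, mem_filter] at h
      simp [h.2.2]
    · intro f hf
      simp
    · rintro ⟨c, f⟩ h
      simp only [mem_product, mem_filter] at h
      have hm := mem_Mon.1 h.2.1
      have hm2 := mem_Mon.1 (hadd c f h.2.1)
      unfold lam
      rw [psT_add_C hd hm.1 hm.2, hm2.2, coeff_add, h.2.2, coeff_C_zero, zero_add, sub_eq_add_neg,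
        AddChar.map_add_eq_mul]
      ring
  have h2 : η (d : F) ^ d * (∑ c : F, (η ^ d) ((-1) ^ d * c) * φ (-(d * c))) =
      gaussSum (η ^ d) φ := by
    unfold gaussSum
    rw [Finset.mul_sum]
    refine Finset.sum_bij' (fun c _ => -(d * c)) (fun x _ => -(x / d)) ?_ ?_ ?_ ?_ ?_
    · intros; exact mem_univ _
    · intros; exact mem_univ _
    · intro c _; field_simp
    · intro c _; field_simp
    · intro c _
      rw [← mul_assoc]
      congr 1
      rw [MulChar.pow_apply' _ hd0, MulChar.pow_apply' _ hd0, ← map_pow, ← map_pow, ← map_pow,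
        ← map_mul]
      congr 1
      rw [mul_pow, ← pow_mul, neg_pow (_ * _), mul_pow]
      have : (-1 : F) ^ (d * d) = (-1) ^ d := by
        rcases Nat.even_or_odd d with h | h
        · rw [h.neg_one_pow, (h.mul_right d).neg_one_pow]
        · rw [h.neg_one_pow, (h.mul h).neg_one_pow]
      rw [this]; ring
  rw [h1, ← mul_assoc, h2]

lemma main {F : Type*} [Field F] [Fintype F]
    (φ : AddChar F ℂ) (hφ : φ ≠ 1) (d : ℕ) (hd : 1 ≤ d) (hdq : d ∣ Fintype.card F - 1)
    (η : MulChar F ℂ) :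
    gaussSum (η ^ d) φ *
        ∏ᶠ (χ : MulChar F ℂ) (_ : χ ^ d = 1 ∧ χ ≠ 1), gaussSum χ φ
      = η (d : F) ^ d *
        ∏ᶠ (χ : MulChar F ℂ) (_ : χ ^ d = 1), gaussSum (η * χ) φ := by
  rw [finprod_cond_eq_prod_of_cond_iff (t := (univ.filter (fun χ : MulChar F ℂ => χ ^ d = 1)).erase 1)
      _ (by intro χ _; simp [and_comm]),
    finprod_cond_eq_prod_of_cond_iff (t := univ.filter (fun χ : MulChar F ℂ => χ ^ d = 1))
      _ (by intro χ _; simp), ← AA_esymm φ hφ hd hdq, AA_eval φ hd hdq]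
  congr 1
  have h1 := AA_eval φ hd hdq 1
  have hu : IsUnit (d : F) := by
    rw [isUnit_iff_ne_zero]
    intro h
    obtain ⟨m, hm⟩ := hdq
    have h1 : ((Fintype.card F - 1 : ℕ) : F) = 0 := by rw [hm]; simp [h]
    rw [Nat.cast_sub Fintype.card_pos, Nat.cast_card_eq_zero] at h1
    simp at h1
  rw [AA_esymm φ hφ hd hdq, MulChar.one_apply hu, one_pow, one_mul, one_pow,
    ← Finset.mul_prod_erase _ _ (a := (1 : MulChar F ℂ)) (by simp), gaussSum_one_left hφ] at h1
  simp only [one_mul] at h1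
  rw [gaussSum_one_left hφ] at h1
  exact mul_left_cancel₀ (by norm_num) h1
end HD

/-- (Hasse–Davenport product formula.)  Let `d ≥ 1` be an integer dividing `q − 1` and `η`
a multiplicative character of `F_q^*`.  Then
`g(η^d) · ∏_{χ^d = 1, χ ≠ 1} g(χ) = η(d)^d · ∏_{χ^d = 1} g(ηχ)`,
both products running over multiplicative characters `χ` of `F_q^*` with `χ^d` trivial
(`d` is viewed as the element `d·1` of `F_q`, which is nonzero since `d ∣ q − 1`).
Here `φ` is a fixed nontrivial additive character of `F_q` and `g` is the Gauss sum. -/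
theorem statement1 {F : Type*} [Field F] [Fintype F]
    (φ : AddChar F ℂ) (hφ : φ ≠ 1)
    (d : ℕ) (hd : 1 ≤ d) (hdq : d ∣ Fintype.card F - 1)
    (η : MulChar F ℂ) :
    gaussSum (η ^ d) φ *
        ∏ᶠ (χ : MulChar F ℂ) (_ : χ ^ d = 1 ∧ χ ≠ 1), gaussSum χ φ
      = η (d : F) ^ d *
        ∏ᶠ (χ : MulChar F ℂ) (_ : χ ^ d = 1), gaussSum (η * χ) φ := by
  exact HD.main φ hφ d hd hdq η
end

section
/- Let n be a prime and s = (s_1,…,s_n) ∈ (ℤ/nℤ)^n with s_1+⋯+s_n = 0. Then the number of distinct values among s_1,…,s_n is not equal to 2. -/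
open Finset

/-- Let `n` be a prime and `s = (s_1, …, s_n) ∈ (ℤ/nℤ)^n` with `s_1 + ⋯ + s_n = 0`.
Then the number of distinct values among `s_1, …, s_n` is not equal to `2`. -/
theorem statement12 (n : ℕ) (hn : n.Prime) (s : Fin n → ZMod n)
    (hs : ∑ i, s i = 0) :
    (Finset.univ.image s).card ≠ 2 := by
  intro hc
  haveI : Fact n.Prime := ⟨hn⟩
  obtain ⟨a, b, hab, himg⟩ := Finset.card_eq_two.mp hc
  have hmem : ∀ i, s i = a ∨ s i = b := by
    intro i
    have h : s i ∈ Finset.univ.image s := Finset.mem_image_of_mem s (Finset.mem_univ i)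
    rw [himg] at h
    simpa using h
  have ha : ∃ i, s i = a := by
    have h : a ∈ Finset.univ.image s := by rw [himg]; simp
    simpa using h
  have hb : ∃ i, s i = b := by
    have h : b ∈ Finset.univ.image s := by rw [himg]; simp
    simpa using h
  obtain ⟨i, hi⟩ := ha
  obtain ⟨j, hj⟩ := hb
  have h1 : ∑ i, (s i - b) = 0 := by
    rw [Finset.sum_sub_distrib, hs]
    simp
  have h2 : ∑ i, (s i - b) = ∑ i, if s i = a then a - b else 0 := by
    refine Finset.sum_congr rfl fun i _ => ?_
    split_ifs with h
    · rw [h]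
    · rw [(hmem i).resolve_left h, sub_self]
  rw [h2, ← Finset.sum_filter, Finset.sum_const, nsmul_eq_mul] at h1
  rcases mul_eq_zero.mp h1 with h | h
  · rw [ZMod.natCast_eq_zero_iff] at h
    have hpos : 0 < (Finset.univ.filter fun i => s i = a).card :=
      Finset.card_pos.mpr ⟨i, by simp [hi]⟩
    have hlt : (Finset.univ.filter fun i => s i = a).card < n := by
      have h3 : (Finset.univ.filter fun i => s i = a).card < (Finset.univ : Finset (Fin n)).card := by
        apply Finset.card_lt_card
        rw [Finset.filter_ssubset]
        exact ⟨j, Finset.mem_univ j, fun h => hab (h.symm.trans hj)⟩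
      simpa using h3
    exact absurd (Nat.le_of_dvd hpos h) (not_le.mpr hlt)
  · exact hab (sub_eq_zero.mp h)
end

section
/- Let n ≥ 3 be odd and s = (s_1,…,s_n) ∈ (ℤ/nℤ)^n with s_1+⋯+s_n = 0. Then the number of distinct values among s_1,…,s_n is not equal to n−1. -/
open Finset

/-- Let `n ≥ 3` be odd and `s = (s_1, …, s_n) ∈ (ℤ/nℤ)^n` with `s_1 + ⋯ + s_n = 0`.
Then the number of distinct values among `s_1, …, s_n` is not equal to `n − 1`. -/
theorem statement13 (n : ℕ) (hn : 3 ≤ n) (hodd : Odd n) (s : Fin n → ZMod n)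
    (hs : ∑ i, s i = 0) :
    (Finset.univ.image s).card ≠ n - 1 := by
  intro hc
  haveI : NeZero n := ⟨by omega⟩
  have hall : ∑ x : ZMod n, x = 0 := by
    have h1 : ∑ x : ZMod n, x = - ∑ x : ZMod n, x := by
      rw [← Finset.sum_neg_distrib]
      exact (Equiv.sum_comp (Equiv.neg (ZMod n)) (fun x => x)).symm
    generalize ∑ x : ZMod n, x = S at h1
    obtain ⟨k, hk⟩ := hodd
    have h2 : ((n : ℕ) : ZMod n) * S = 0 := by simp
    have h3 : ((n : ℕ) : ZMod n) = 2 * (k : ZMod n) + 1 := by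
      have := congrArg (Nat.cast : ℕ → ZMod n) hk
      simpa using this
    rw [h3] at h2
    linear_combination h2 - (k : ZMod n) * h1
  have hninj : ¬ Function.Injective s := by
    intro hi
    rw [Finset.card_image_of_injective _ hi, Finset.card_univ, Fintype.card_fin] at hc
    omega
  simp only [Function.Injective, not_forall] at hninj
  obtain ⟨a, b, hab, hne⟩ := hninj
  have himg : (Finset.univ.erase a).image s = Finset.univ.image s := by
    ext x
    simp only [Finset.mem_image, Finset.mem_erase, Finset.mem_univ, and_true, true_and]
    constructor
    · rintro ⟨i, _, hi⟩
      exact ⟨i, hi⟩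
    · rintro ⟨i, hi⟩
      by_cases h : i = a
      · exact ⟨b, fun h' => hne h'.symm, by rw [← hab, ← h, hi]⟩
      · exact ⟨i, h, hi⟩
  have hinj : Set.InjOn s (Finset.univ.erase a : Finset (Fin n)) := by
    apply Finset.card_image_iff.mp
    rw [himg, hc, Finset.card_erase_of_mem (Finset.mem_univ a), Finset.card_univ,
      Fintype.card_fin]
  have hsum : ∑ x ∈ Finset.univ.image s, x = ∑ i ∈ Finset.univ.erase a, s i := by
    rw [← himg, Finset.sum_image hinj]
  have hcompl : ((Finset.univ.image s)ᶜ).card = 1 := by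
    rw [Finset.card_compl, hc, ZMod.card]
    omega
  obtain ⟨m, hm⟩ := Finset.card_eq_one.mp hcompl
  have h4 := Finset.sum_add_sum_compl (Finset.univ.image s) (fun x => x)
  rw [hm, Finset.sum_singleton, hall, hsum] at h4
  have h5 := Finset.add_sum_erase Finset.univ s (Finset.mem_univ a)
  rw [hs] at h5
  have h6 : s a = m := by linear_combination h5 - h4
  have h7 : m ∈ (Finset.univ.image s)ᶜ := by rw [hm]; simp
  rw [Finset.mem_compl] at h7
  exact h7 (Finset.mem_image.mpr ⟨a, Finset.mem_univ a, h6⟩)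
end

section
/- Let n be a prime and s = (s_1,…,s_n) ∈ (ℤ/nℤ)^n with s_1+⋯+s_n = 0, such that s is not constant and the set of values {s_1,…,s_n} is not all of ℤ/nℤ. Define K_s = #{ k ∈ (ℤ/nℤ)^× : there exist a permutation σ of {1,…,n} and j ∈ ℤ/nℤ with k·s_i = s_{σ(i)} + j for all i }, and γ_s = #{ t ∈ (ℤ/nℤ)^n : t is obtained from s by permuting coordinates } (the number of distinct permutations of s). Then K_s divides γ_s. -/
open Finset
open scoped Classical

def KS (n : ℕ) (s : Fin n → ZMod n) : Subgroup (ZMod n)ˣ where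
  carrier := {k | ∃ (σ : Equiv.Perm (Fin n)) (j : ZMod n), ∀ i, (k : ZMod n) * s i = s (σ i) + j}
  one_mem' := ⟨1, 0, by simp⟩
  mul_mem' := by
    rintro a b ⟨σ, j, h⟩ ⟨τ, l, h'⟩
    refine ⟨σ * τ, j + a * l, fun i => ?_⟩
    have h1 := h' i
    have h2 := h (τ i)
    simp only [Units.val_mul, Equiv.Perm.mul_apply]
    rw [mul_assoc, h1, mul_add, h2]; ring
  inv_mem' := by
    rintro a ⟨σ, j, h⟩
    refine ⟨σ.symm, -((a⁻¹ : (ZMod n)ˣ) * j), fun i => ?_⟩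
    have h1 := h (σ.symm i)
    rw [Equiv.apply_symm_apply] at h1
    have h2 : s i = a * s (σ.symm i) - j := by rw [h1]; ring
    rw [h2, mul_sub, Units.inv_mul_cancel_left]; ring

def LS (n : ℕ) (s : Fin n → ZMod n) (c : ZMod n) : Subgroup (ZMod n)ˣ where
  carrier := {k | ∃ (σ : Equiv.Perm (Fin n)), ∀ i, (k : ZMod n) * (s i - c) = s (σ i) - c}
  one_mem' := ⟨1, by simp⟩
  mul_mem' := by
    rintro a b ⟨σ, h⟩ ⟨τ, h'⟩
    refine ⟨σ * τ, fun i => ?_⟩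
    simp only [Units.val_mul, Equiv.Perm.mul_apply]
    rw [mul_assoc, h' i, h (τ i)]
  inv_mem' := by
    rintro a ⟨σ, h⟩
    refine ⟨σ.symm, fun i => ?_⟩
    have h1 := h (σ.symm i)
    rw [Equiv.apply_symm_apply] at h1
    rw [← h1, Units.inv_mul_cancel_left]

theorem exists_center (n : ℕ) [Fact n.Prime] (s : Fin n → ZMod n) :
    ∃ c, KS n s ≤ LS n s c := by
  obtain ⟨⟨g, hg⟩, hgen⟩ := IsCyclic.exists_generator (α := KS n s)
  have key : ∀ c, g ∈ LS n s c → KS n s ≤ LS n s c := by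
    intro c hc k hk
    obtain ⟨m, hm⟩ := Subgroup.mem_zpowers_iff.1 (hgen ⟨k, hk⟩)
    have : g ^ m = k := by simpa using congrArg Subtype.val hm
    rw [← this]
    exact zpow_mem hc m
  by_cases h1 : g = 1
  · exact ⟨0, key 0 (h1 ▸ one_mem _)⟩
  · obtain ⟨σ, j, h⟩ := hg
    have h2 : (g : ZMod n) - 1 ≠ 0 := fun h => h1 (Units.ext (sub_eq_zero.1 h))
    refine ⟨j / (g - 1), key _ ⟨σ, fun i => ?_⟩⟩
    have h3 : (g : ZMod n) * (j / (g - 1)) = j + j / (g - 1) := by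
      field_simp; ring
    rw [mul_sub, h i, h3]; ring

/-- Permutations of `s - c`, as a set with an action of `KS n s`. -/
def XS (n : ℕ) (s : Fin n → ZMod n) (c : ZMod n) (hc : KS n s ≤ LS n s c) :
    SubMulAction (KS n s) (Fin n → ZMod n) where
  carrier := {t | ∃ σ : Equiv.Perm (Fin n), ∀ i, t i = s (σ i) - c}
  smul_mem' := by
    rintro ⟨k, hk⟩ t ⟨σ, h⟩
    obtain ⟨τ, h'⟩ := hc hk
    refine ⟨τ * σ, fun i => ?_⟩
    change (k : ZMod n) * t i = _
    rw [h, h', Equiv.Perm.mul_apply]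

/-- Let `n` be a prime and `s ∈ (ℤ/nℤ)^n` with `s_1 + ⋯ + s_n = 0`, such that `s` is not
constant and the set of values of `s` is not all of `ℤ/nℤ`.  Let `K_s` be the number of
units `k` of `ℤ/nℤ` such that `k·s` coincides with `s` up to a permutation of the
coordinates and addition of a constant `j`, and let `γ_s` be the number of distinct
permutations of `s`.  Then `K_s` divides `γ_s`. -/
theorem statement14 (n : ℕ) [NeZero n] (hn : n.Prime) (s : Fin n → ZMod n)
    (hs : ∑ i, s i = 0)
    (hconst : ¬ ∃ c : ZMod n, ∀ i, s i = c)
    (hrange : Set.range s ≠ Set.univ) :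
    (Finset.univ.filter (fun k : (ZMod n)ˣ =>
        ∃ (σ : Equiv.Perm (Fin n)) (j : ZMod n),
          ∀ i, (k : ZMod n) * s i = s (σ i) + j)).card ∣
      (Finset.univ.filter (fun t : Fin n → ZMod n =>
        ∃ σ : Equiv.Perm (Fin n), t = s ∘ σ)).card := by
  haveI : Fact n.Prime := ⟨hn⟩
  obtain ⟨c, hc⟩ := exists_center n s
  have hfree : ∀ x : XS n s c hc, MulAction.stabilizer (KS n s) x = ⊥ := by
    rintro ⟨t, σ, h⟩
    rw [eq_bot_iff]
    rintro ⟨k, hk⟩ hkt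
    rw [MulAction.mem_stabilizer_iff] at hkt
    have h1 : ∀ i, (k : ZMod n) * t i = t i := fun i => congrFun (congrArg Subtype.val hkt) i
    rw [Subgroup.mem_bot]
    by_contra hne
    apply hconst
    refine ⟨c, fun i => ?_⟩
    have h2 := h1 (σ.symm i)
    have h3 := h (σ.symm i)
    rw [Equiv.apply_symm_apply] at h3
    have h4 : ((k : ZMod n) - 1) * (s i - c) = 0 := by
      rw [← h3]; linear_combination h2
    rcases mul_eq_zero.1 h4 with h5 | h5
    · exact (hne (Subtype.ext (Units.ext (sub_eq_zero.1 h5)))).elim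
    · exact sub_eq_zero.1 h5
  have e := MulAction.selfEquivOrbitsQuotientProd hfree
  have hcard := Nat.card_congr e
  rw [Nat.card_prod] at hcard
  have hK : Nat.card (KS n s) = (Finset.univ.filter (fun k : (ZMod n)ˣ =>
        ∃ (σ : Equiv.Perm (Fin n)) (j : ZMod n),
          ∀ i, (k : ZMod n) * s i = s (σ i) + j)).card := by
    rw [← Nat.card_eq_finsetCard]
    refine Nat.card_congr ((Equiv.refl _).subtypeEquiv fun k => ?_)
    simp only [Finset.mem_filter, Finset.mem_univ, true_and]
    rfl
  have hX : Nat.card (XS n s c hc) = (Finset.univ.filter (fun t : Fin n → ZMod n =>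
        ∃ σ : Equiv.Perm (Fin n), t = s ∘ σ)).card := by
    rw [← Nat.card_eq_finsetCard]
    refine Nat.card_congr ((Equiv.addRight (fun _ => c)).subtypeEquiv fun t => ?_)
    simp only [Finset.mem_filter, Finset.mem_univ, true_and]
    change (∃ σ : Equiv.Perm (Fin n), ∀ i, t i = s (σ i) - c) ↔ _
    refine exists_congr fun σ => ?_
    rw [funext_iff]
    refine forall_congr' fun i => ?_
    simp [eq_sub_iff_add_eq]
  rw [← hK, ← hX, hcard]
  exact dvd_mul_left _ _
end

section
/- Let n be an odd prime and s = (s_1,…,s_n) ∈ (ℤ/nℤ)^n with s_1+⋯+s_n = 0, such that s is not constant and the set of values of s is not all of ℤ/nℤ. For b ∈ ℤ/nℤ put k(b) = #{i : s_i = b} and let m = #{b : k(b) = 0} (so also m = ∑_{k(b)≥1}(k(b)−1)). Then there exist sequences (v_1,…,v_m) and (w_1,…,w_m) in ℤ/nℤ, where (v_1,…,v_m) is an enumeration without repetition of {b : k(b) = 0} and (w_1,…,w_m) enumerates the elements b with k(b) ≥ 2, each b appearing exactly k(b)−1 times, such that for every integer i with 1 ≤ i ≤ (2m−n+1)/2 one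 has w_{2i−1} − v_{2i−1} = −(w_{2i} − v_{2i}) in ℤ/nℤ. -/
open Finset

def TopEq {σ R : Type*} [CommRing R] (d : ℕ) (f g : MvPolynomial σ R) : Prop :=
  (∀ t : σ →₀ ℕ, d < t.degree → f.coeff t = 0 ∧ g.coeff t = 0) ∧
  (∀ t : σ →₀ ℕ, t.degree = d → f.coeff t = g.coeff t)

lemma TopEq.mul {σ R : Type*} [CommRing R] {d e : ℕ} {f g f' g' : MvPolynomial σ R}
    (h : TopEq d f g) (h' : TopEq e f' g') : TopEq (d + e) (f * f') (g * g') := by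
  classical
  constructor
  · intro t ht
    simp only [MvPolynomial.coeff_mul]
    constructor <;>
    · apply Finset.sum_eq_zero
      rintro ⟨u, u'⟩ hu
      rw [HasAntidiagonal.mem_antidiagonal] at hu
      simp only at hu
      have : u.degree + u'.degree = t.degree := by rw [← hu, map_add]
      by_cases h1 : d < u.degree
      · simp [(h.1 u h1)]
      · simp [h'.1 u' (by omega)]
  · intro t ht
    simp only [MvPolynomial.coeff_mul]
    apply Finset.sum_congr rfl
    rintro ⟨u, u'⟩ hu
    rw [HasAntidiagonal.mem_antidiagonal] at hu
    simp only at hu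
    have : u.degree + u'.degree = t.degree := by rw [← hu, map_add]
    by_cases h1 : d < u.degree
    · simp [(h.1 u h1)]
    by_cases h2 : e < u'.degree
    · simp [(h'.1 u' h2)]
    rw [h.2 u (by omega), h'.2 u' (by omega)]

lemma TopEq.one {σ R : Type*} [CommRing R] : TopEq 0 (1 : MvPolynomial σ R) 1 := by
  classical
  refine ⟨fun t ht => ?_, fun _ _ => rfl⟩
  have : (0 : σ →₀ ℕ) ≠ t := by rintro rfl; simp at ht
  simp [MvPolynomial.coeff_one, this]

lemma TopEq.prod {ι σ R : Type*} [CommRing R] (s : Finset ι) {d : ι → ℕ}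
    {f g : ι → MvPolynomial σ R}
    (h : ∀ i ∈ s, TopEq (d i) (f i) (g i)) :
    TopEq (∑ i ∈ s, d i) (∏ i ∈ s, f i) (∏ i ∈ s, g i) := by
  classical
  induction s using Finset.induction_on with
  | empty => simpa using TopEq.one
  | insert a s ha ih =>
    rw [sum_insert ha, prod_insert ha, prod_insert ha]
    exact (h a (by simp)).mul (ih fun i hi => h i (by simp [hi]))

lemma TopEq.lin {σ R : Type*} [CommRing R] (i j : σ) (a b c : R) :
    TopEq 1 (MvPolynomial.C a * MvPolynomial.X i + MvPolynomial.C b * MvPolynomial.X j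
      + MvPolynomial.C c : MvPolynomial σ R)
      (MvPolynomial.C a * MvPolynomial.X i + MvPolynomial.C b * MvPolynomial.X j) := by
  classical
  have key : ∀ (i : σ) (t : σ →₀ ℕ), 1 < t.degree → Finsupp.single i 1 ≠ t := by
    rintro i t ht rfl; simp at ht
  constructor
  · intro t ht
    have h0 : (0 : σ →₀ ℕ) ≠ t := by rintro rfl; simp at ht
    simp [MvPolynomial.coeff_C_mul, MvPolynomial.coeff_X, MvPolynomial.coeff_C, h0,
      key i t ht, key j t ht]
  · intro t ht
    have h0 : (0 : σ →₀ ℕ) ≠ t := by rintro rfl; simp at ht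
    simp [MvPolynomial.coeff_C, h0]

open MvPolynomial in
lemma coeff_vdm {R : Type*} [CommRing R] (p : ℕ) :
    (((Matrix.vandermonde fun i : Fin p => (X i ^ 2 : MvPolynomial (Fin p) R)).det) ^ 2).coeff
      (Finsupp.equivFunOnFinite.symm fun _ => 2 * (p - 1)) =
      ((Equiv.Perm.sign (Fin.revPerm : Equiv.Perm (Fin p)) : ℤ) : R) * (p.factorial : R) := by
  classical
  have mon : ∀ e : Fin p → ℕ, (∏ i, (X i : MvPolynomial (Fin p) R) ^ e i) =
      monomial (Finsupp.equivFunOnFinite.symm e) 1 := by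
    intro e
    rw [monomial_eq]
    simp [Finsupp.prod_fintype]
  rw [Matrix.det_apply', sq, sum_mul_sum, coeff_sum]
  have : ∀ σ : Equiv.Perm (Fin p), coeff (Finsupp.equivFunOnFinite.symm fun _ => 2 * (p - 1))
      (∑ τ : Equiv.Perm (Fin p), (((Equiv.Perm.sign σ : ℤ) : MvPolynomial (Fin p) R) *
        ∏ i, Matrix.vandermonde (fun i : Fin p => (X i ^ 2 : MvPolynomial (Fin p) R)) (σ i) i) *
       (((Equiv.Perm.sign τ : ℤ) : MvPolynomial (Fin p) R) *
        ∏ i, Matrix.vandermonde (fun i : Fin p => (X i ^ 2 : MvPolynomial (Fin p) R)) (τ i) i))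
      = ((Equiv.Perm.sign (Fin.revPerm : Equiv.Perm (Fin p)) : ℤ) : R) := by
    intro σ
    have r : ∀ τ : Equiv.Perm (Fin p),
        ∏ i, Matrix.vandermonde (fun i : Fin p => (X i ^ 2 : MvPolynomial (Fin p) R)) (τ i) i
        = ∏ i, (X i : MvPolynomial (Fin p) R) ^ (2 * ((τ⁻¹ i : Fin p) : ℕ)) := by
      intro τ
      rw [← Equiv.prod_comp τ (fun i => (X i : MvPolynomial (Fin p) R) ^ (2 * ((τ⁻¹ i : Fin p) : ℕ)))]
      simp [Matrix.vandermonde, pow_mul]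
    have s1 : ∀ τ : Equiv.Perm (Fin p),
        coeff (Finsupp.equivFunOnFinite.symm fun _ => 2 * (p - 1))
        ((((Equiv.Perm.sign σ : ℤ) : MvPolynomial (Fin p) R) *
        ∏ i, Matrix.vandermonde (fun i : Fin p => (X i ^ 2 : MvPolynomial (Fin p) R)) (σ i) i) *
       (((Equiv.Perm.sign τ : ℤ) : MvPolynomial (Fin p) R) *
        ∏ i, Matrix.vandermonde (fun i : Fin p => (X i ^ 2 : MvPolynomial (Fin p) R)) (τ i) i))
        = if τ = σ * Fin.revPerm then
          ((Equiv.Perm.sign (Fin.revPerm : Equiv.Perm (Fin p)) : ℤ) : R) else 0 := by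
      intro τ
      rw [r, r, mul_mul_mul_comm, ← prod_mul_distrib]
      simp only [← pow_add]
      rw [mon, ← Int.cast_mul, show (((((Equiv.Perm.sign σ : ℤ) * (Equiv.Perm.sign τ : ℤ)) : ℤ) :
        MvPolynomial (Fin p) R)) = C ((((Equiv.Perm.sign σ : ℤ) * (Equiv.Perm.sign τ : ℤ) : ℤ) : R))
        by simp, coeff_C_mul, coeff_monomial]
      have iff1 : ((Finsupp.equivFunOnFinite.symm fun i => 2 * ((σ⁻¹ i : Fin p) : ℕ) + 2 * ((τ⁻¹ i : Fin p) : ℕ)) = (Finsupp.equivFunOnFinite.symm fun _ : Fin p => 2 * (p - 1))) ↔ τ = σ * Fin.revPerm := by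
        rw [Equiv.apply_eq_iff_eq, funext_iff]
        constructor
        · intro h
          ext1 j
          have := h (τ j)
          simp only [Equiv.Perm.coe_inv, Equiv.symm_apply_apply] at this
          rw [Equiv.Perm.mul_apply, ← Equiv.Perm.inv_eq_iff_eq]
          ext
          simp [Fin.val_rev] at this ⊢
          omega
        · rintro rfl i
          simp [Fin.val_rev]
          have := (σ.symm i).2
          omega
      by_cases h : τ = σ * Fin.revPerm
      · rw [if_pos (iff1.2 h), if_pos h, h, map_mul, Units.val_mul, ← mul_assoc]
        norm_cast
        rw [Int.units_mul_self]
        simp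
      · rw [if_neg (fun h' => h (iff1.1 h')), if_neg h, mul_zero]
    rw [coeff_sum, sum_congr rfl fun τ _ => s1 τ]
    simp
  rw [sum_congr rfl fun σ _ => this σ]
  simp [Fintype.card_perm, mul_comm]

open MvPolynomial in
lemma core (n : ℕ) (hn : n.Prime) (p : ℕ) (hp : p < n) (c : Fin p → ZMod n)
    (A : Fin p → Finset (ZMod n)) (hA : ∀ i, 2 * (p - 1) < (A i).card) :
    ∃ x : Fin p → ZMod n, (∀ i, x i ∈ A i) ∧ ∀ i j, i < j →
      x i ≠ x j ∧ x i ≠ c j - x j ∧ c i - x i ≠ x j ∧ c i - x i ≠ c j - x j := by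
  classical
  have : Fact n.Prime := ⟨hn⟩
  let F : MvPolynomial (Fin p) (ZMod n) := ∏ i : Fin p, ∏ j ∈ Ioi i,
    ((C 1 * X i + C (-1) * X j + C 0) * (C 1 * X i + C 1 * X j + C (- c j)) *
     (C (-1) * X i + C (-1) * X j + C (c i)) * (C (-1) * X i + C 1 * X j + C (c i - c j)))
  let G : MvPolynomial (Fin p) (ZMod n) := ∏ i : Fin p, ∏ j ∈ Ioi i,
    ((C 1 * X i + C (-1) * X j) * (C 1 * X i + C 1 * X j) *
     (C (-1) * X i + C (-1) * X j) * (C (-1) * X i + C 1 * X j))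
  have hFG : TopEq (∑ i : Fin p, ∑ j ∈ Ioi i, (1 + 1 + 1 + 1)) F G := by
    apply TopEq.prod
    intro i _
    apply TopEq.prod
    intro j _
    exact (((TopEq.lin _ _ _ _ _).mul (TopEq.lin _ _ _ _ _)).mul (TopEq.lin _ _ _ _ _)).mul
      (TopEq.lin _ _ _ _ _)
  have hG : G = ((Matrix.vandermonde fun i : Fin p =>
      (X i ^ 2 : MvPolynomial (Fin p) (ZMod n))).det) ^ 2 := by
    rw [Matrix.det_vandermonde, ← prod_pow]
    apply prod_congr rfl
    intro i _
    rw [← prod_pow]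
    apply prod_congr rfl
    intro j _
    simp only [map_neg, map_one]
    ring
  set t : Fin p →₀ ℕ := Finsupp.equivFunOnFinite.symm fun _ => 2 * (p - 1) with ht
  have hdeg : t.degree = ∑ i : Fin p, ∑ j ∈ Ioi i, (1 + 1 + 1 + 1) := by
    rw [Finsupp.degree_eq_sum]
    have e1 : ∀ i : Fin p, ∑ j ∈ Ioi i, (1 + 1 + 1 + 1) = 4 * (p - 1 - (i : ℕ)) := by
      intro i
      simp [mul_comm]
    rw [sum_congr rfl fun i _ => e1 i, ← mul_sum,
      Fin.sum_univ_eq_sum_range (fun i => p - 1 - i) p, sum_range_reflect (fun i => i) p]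
    have := Finset.sum_range_id_mul_two p
    simp [ht]
    nlinarith
  have hco : F.coeff t ≠ 0 := by
    rw [hFG.2 t hdeg, hG, ht, coeff_vdm]
    apply mul_ne_zero
    · rcases Int.units_eq_one_or (Equiv.Perm.sign (Fin.revPerm : Equiv.Perm (Fin p))) with h | h <;>
        simp [h]
    · rw [Ne, ZMod.natCast_eq_zero_iff, hn.dvd_factorial]
      omega
  have htot : F.totalDegree = t.degree := by
    apply le_antisymm
    · apply Finset.sup_le
      intro u hu
      by_contra hlt
      rw [mem_support_iff] at hu
      apply hu
      apply (hFG.1 u _).1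
      rw [← hdeg]
      exact not_le.1 hlt
    · exact le_totalDegree (mem_support_iff.2 hco)
  obtain ⟨x, hx, hne⟩ := combinatorial_nullstellensatz_exists_eval_nonzero F t hco htot A
    (fun i => by simpa [ht] using hA i)
  refine ⟨x, hx, fun i j hij => ?_⟩
  simp only [F, map_prod, prod_ne_zero_iff] at hne
  have := hne i (mem_univ _) j (by simpa using hij)
  simp only [map_mul, map_add, eval_C, eval_X, mul_ne_zero_iff] at this
  obtain ⟨⟨⟨h1, h2⟩, h3⟩, h4⟩ := this
  refine ⟨fun h => h1 ?_, fun h => h2 ?_, fun h => h3 ?_, fun h => h4 ?_⟩ <;> linear_combination h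

lemma card_A (n : ℕ) (hn : n.Prime) (hodd : Odd n) [NeZero n] (V : Finset (ZMod n))
    (w w' : ZMod n) (hw : w ∉ V) (hw' : w' ∉ V) :
    2 * V.card + 1 ≤ n +
      (V.filter fun x => w + w' - x ∈ V ∧ x ≠ w + w' - x).card := by
  classical
  have : Fact n.Prime := ⟨hn⟩
  have h2 : (2 : ZMod n) ≠ 0 := by
    intro h
    have : ((2 : ℕ) : ZMod n) = 0 := by exact_mod_cast h
    rw [ZMod.natCast_eq_zero_iff, Nat.prime_dvd_prime_iff_eq hn Nat.prime_two] at this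
    subst this
    exact absurd hodd (by decide)
  have hV' : (V.image fun x => w + w' - x).card = V.card :=
    card_image_of_injective _ fun a b h => by simpa using h
  set V' := V.image fun x => w + w' - x with hVd
  have mem' : ∀ x, x ∈ V' ↔ w + w' - x ∈ V := by
    intro x
    rw [hVd, mem_image]
    constructor
    · rintro ⟨a, ha, rfl⟩; simpa using ha
    · intro h; exact ⟨_, h, by ring⟩
  have hui := card_union_add_card_inter V V'
  have hsub : (V ∪ V') ⊆ univ \ {w, w'} := by
    intro x hx
    simp only [mem_union, mem'] at hx
    simp only [mem_sdiff, mem_univ, true_and, mem_insert, mem_singleton]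
    rintro (rfl | rfl)
    · simp [hw, hw'] at hx
    · simp [hw, hw'] at hx
  have hc := card_le_card hsub
  rw [card_sdiff_of_subset (subset_univ _), card_univ, ZMod.card] at hc
  have hnle : ({w, w'} : Finset (ZMod n)).card ≤ n := by
    simpa [ZMod.card] using card_le_univ ({w, w'} : Finset (ZMod n))
  set B := V.filter fun x => w + w' - x ∈ V ∧ x ≠ w + w' - x with hB
  by_cases hww : w = w'
  · have : V ∩ V' ⊆ B := by
      intro x hx
      simp only [mem_inter, mem'] at hx
      simp only [hB, mem_filter]
      refine ⟨hx.1, hx.2, fun h => hw ?_⟩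
      have : (2 : ZMod n) * (x - w) = 0 := by subst hww; linear_combination h
      have : x - w = 0 := by simpa [h2] using this
      rw [sub_eq_zero] at this
      exact this ▸ hx.1
    have := card_le_card this
    have h1 : 1 ≤ ({w, w'} : Finset (ZMod n)).card := card_pos.2 ⟨w, by simp⟩
    omega
  · have h1 : ({w, w'} : Finset (ZMod n)).card = 2 := card_pair hww
    have : V ∩ V' ⊆ insert ((w + w') / 2) B := by
      intro x hx
      simp only [mem_inter, mem'] at hx
      simp only [hB, mem_insert, mem_filter]
      by_cases h : x = w + w' - x
      · left
        field_simp
        linear_combination h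
      · right
        exact ⟨hx.1, hx.2, h⟩
    have := (card_le_card this).trans (card_insert_le _ _)
    omega

/-- Let `n` be an odd prime and `s ∈ (ℤ/nℤ)^n` with `s_1 + ⋯ + s_n = 0`, `s` not constant
and with set of values not all of `ℤ/nℤ`.  For `b ∈ ℤ/nℤ` put `k(b) = #{i : s_i = b}` and
let `m = #{b : k(b) = 0}`.  Then there exist sequences `(v_1, …, v_m)` and `(w_1, …, w_m)`
(indexed here by `1 ≤ i ≤ m`), where `v` enumerates without repetition the set
`{b : k(b) = 0}` and `w` enumerates the elements `b` with `k(b) ≥ 2`, each appearing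
exactly `k(b) − 1` times, such that for every `i` with `1 ≤ i ≤ (2m − n + 1)/2` one has
`w_{2i−1} − v_{2i−1} = −(w_{2i} − v_{2i})` in `ℤ/nℤ`. -/
theorem statement15 (n : ℕ) [NeZero n] (hn : n.Prime) (hodd : Odd n)
    (s : Fin n → ZMod n) (hs : ∑ i, s i = 0)
    (hconst : ¬ ∃ c : ZMod n, ∀ i, s i = c)
    (hrange : Set.range s ≠ Set.univ)
    (k : ZMod n → ℕ)
    (hk : ∀ b, k b = (Finset.univ.filter (fun i : Fin n => s i = b)).card)
    (m : ℕ)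
    (hm : m = (Finset.univ.filter (fun b : ZMod n => k b = 0)).card) :
    ∃ v w : ℕ → ZMod n,
      (∀ b : ZMod n, k b = 0 ↔ ∃ i, 1 ≤ i ∧ i ≤ m ∧ v i = b) ∧
      (∀ i, 1 ≤ i → i ≤ m → ∀ j, 1 ≤ j → j ≤ m → v i = v j → i = j) ∧
      (∀ b : ZMod n,
        ((Finset.Icc 1 m).filter (fun i => w i = b)).card = k b - 1) ∧
      (∀ i : ℕ, 1 ≤ i → 2 * i ≤ 2 * m + 1 - n →
        w (2 * i - 1) - v (2 * i - 1) = -(w (2 * i) - v (2 * i))) := by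
  classical
  have hn0 : 0 < n := hn.pos
  set V := Finset.univ.filter (fun b : ZMod n => k b = 0) with hV
  have memV : ∀ b, b ∈ V ↔ k b = 0 := by simp [hV]
  -- total count
  have hsum : ∑ b, k b = n := by
    simp only [hk]
    rw [← card_eq_sum_card_fiberwise (fun i _ => mem_univ (s i))]
    simp
  have hsum' : ∑ b, (k b - 1) = m := by
    have h1 : ∑ b, ((k b - 1) + 1) = ∑ b, (k b + if k b = 0 then 1 else 0) := by
      apply sum_congr rfl
      intro b _
      split_ifs <;> omega
    rw [sum_add_distrib, sum_add_distrib, hsum, ← card_filter, ← hV, ← hm] at h1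
    simp [ZMod.card] at h1
    omega
  have hmn : m < n := by
    have h1 : V ⊂ univ := by
      rw [ssubset_univ_iff]
      intro h
      have h2 : s ⟨0, hn0⟩ ∈ V := h ▸ mem_univ _
      rw [memV, hk, card_eq_zero] at h2
      have : (⟨0, hn0⟩ : Fin n) ∈ univ.filter (fun i : Fin n => s i = s ⟨0, hn0⟩) :=
        mem_filter.2 ⟨mem_univ _, rfl⟩
      rw [h2] at this
      simp at this
    have := card_lt_card h1
    rw [← hm, card_univ, ZMod.card] at this
    exact this
  -- the sequence w
  obtain ⟨w, hw⟩ : ∃ w : ℕ → ZMod n, ∀ b : ZMod n,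
      ((Finset.Icc 1 m).filter (fun i => w i = b)).card = k b - 1 := by
    let M : Multiset (ZMod n) := ∑ b, Multiset.replicate (k b - 1) b
    have hMc : M.toList.length = m := by
      simp [M, hsum']
    refine ⟨fun i => M.toList.getD (i - 1) 0, fun b => ?_⟩
    have hmap : (Finset.Icc 1 m).val.map (fun i => M.toList.getD (i - 1) 0) = M := by
      conv_rhs => rw [← Multiset.coe_toList M]
      change Multiset.ofList ((List.range' 1 (m + 1 - 1)).map fun i => M.toList.getD (i - 1) 0) = _
      apply congrArg
      apply List.ext_getElem
      · simp [hMc]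
      · intro i h1 h2
        simp only [List.getElem_map, List.getElem_range']
        rw [List.getD_eq_getElem?_getD]
        simp [List.getElem?_eq_getElem h2]
    have hcount : M.count b = k b - 1 := by
      simp [M, Multiset.count_sum', Multiset.count_replicate]
    rw [← hcount]
    conv_rhs => rw [← hmap, Multiset.count_map]
    simp only [Finset.card, Finset.filter, eq_comm]
  have hwV : ∀ i, 1 ≤ i → i ≤ m → w i ∉ V := by
    intro i h1 h2 h
    rw [memV] at h
    have h3 := hw (w i)
    rw [h, card_eq_zero] at h3
    have : i ∈ (Finset.Icc 1 m).filter (fun j => w j = w i) := by simp [h1, h2]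
    rw [h3] at this
    simp at this
  obtain ⟨q, hq⟩ := hodd
  let p := (2 * m + 1 - n) / 2
  have hp : 2 * p = 2 * m + 1 - n := by omega
  let c : Fin p → ZMod n := fun i => w (2 * i + 1) + w (2 * i + 2)
  let A : Fin p → Finset (ZMod n) := fun i => V.filter fun x => c i - x ∈ V ∧ x ≠ c i - x
  obtain ⟨x, hxA, hx⟩ := core n hn p (by omega) c A (by
    intro i
    have := card_A n hn ⟨q, hq⟩ V (w (2 * i + 1)) (w (2 * i + 2))
      (hwV _ (by omega) (by omega)) (hwV _ (by omega) (by omega))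
    have hi := i.2
    change 2 * (p - 1) < (V.filter fun x => w (2 * i + 1) + w (2 * i + 2) - x ∈ V ∧
      x ≠ w (2 * i + 1) + w (2 * i + 2) - x).card
    omega)
  have hxA' : ∀ i, x i ∈ V ∧ c i - x i ∈ V ∧ x i ≠ c i - x i := by
    intro i
    have := hxA i
    simpa only [A, mem_filter] using this
  let f : Fin m → ZMod n := fun a => if h : (a : ℕ) / 2 < p then
    (if (a : ℕ) % 2 = 0 then x ⟨a / 2, h⟩ else c ⟨a / 2, h⟩ - x ⟨a / 2, h⟩) else 0
  obtain ⟨g, hg⟩ := Finset.exists_equiv_extend_of_card_eq (α := Fin m) (t := V)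
    (by rw [← hm, Fintype.card_fin]) (s := univ.filter fun a : Fin m => (a : ℕ) / 2 < p) (f := f)
    (by
      intro y hy
      simp only [mem_image, mem_filter, mem_univ, true_and] at hy
      obtain ⟨a, ha, rfl⟩ := hy
      simp only [f, dif_pos ha]
      split_ifs
      · exact (hxA' _).1
      · exact (hxA' _).2.1)
    (by
      have key : ∀ a b : Fin m, (a : ℕ) / 2 < p → (b : ℕ) / 2 < p → a < b → f a ≠ f b := by
        intro a b ha hb hab
        simp only [f, dif_pos ha, dif_pos hb]
        have hab' : (a : ℕ) < b := hab
        by_cases h : (a : ℕ) / 2 = (b : ℕ) / 2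
        · have h1 : (a : ℕ) % 2 = 0 := by omega
          have h2 : ¬ (b : ℕ) % 2 = 0 := by omega
          rw [if_pos h1, if_neg h2]
          simp only [h]
          exact (hxA' _).2.2
        · have hlt : (⟨(a : ℕ) / 2, ha⟩ : Fin p) < ⟨(b : ℕ) / 2, hb⟩ := by
            rw [Fin.mk_lt_mk]; omega
          obtain ⟨h1, h2, h3, h4⟩ := hx _ _ hlt
          split_ifs <;> assumption
      intro a ha b hb hab
      simp only [coe_filter, mem_univ, true_and, Set.mem_ofPred_eq] at ha hb
      rcases lt_trichotomy a b with h | h | h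
      · exact absurd hab (key a b ha hb h)
      · exact h
      · exact absurd hab.symm (key b a hb ha h))
  let v : ℕ → ZMod n := fun i => if h : i - 1 < m then (g ⟨i - 1, h⟩ : ZMod n) else 0
  refine ⟨v, w, ?_, ?_, hw, ?_⟩
  · intro b
    rw [← memV]
    constructor
    · intro hb
      refine ⟨(g.symm ⟨b, hb⟩ : Fin m) + 1, by omega, (g.symm ⟨b, hb⟩).2, ?_⟩
      simp [v]
    · rintro ⟨i, h1, h2, rfl⟩
      simp only [v, dif_pos (show i - 1 < m by omega)]
      exact (g _).2
  · intro i h1 h2 j h3 h4 h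
    simp only [v, dif_pos (show i - 1 < m by omega), dif_pos (show j - 1 < m by omega)] at h
    have := g.injective (Subtype.ext h)
    rw [Fin.mk.injEq] at this
    omega
  · intro i h1 h2
    obtain ⟨j, rfl⟩ : ∃ j, i = j + 1 := ⟨i - 1, by omega⟩
    have hj : j < p := by omega
    have e1 : v (2 * (j + 1) - 1) = x ⟨j, hj⟩ := by
      have hh : 2 * (j + 1) - 1 - 1 < m := by omega
      simp only [v, dif_pos hh]
      rw [hg _ (by simp only [mem_filter, mem_univ, true_and]; omega)]
      have h5 : (2 * (j + 1) - 1 - 1) / 2 = j := by omega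
      have h6 : (2 * (j + 1) - 1 - 1) % 2 = 0 := by omega
      simp only [f, h5, h6, hj, dif_pos, if_pos]
    have e2 : v (2 * (j + 1)) = c ⟨j, hj⟩ - x ⟨j, hj⟩ := by
      have hh : 2 * (j + 1) - 1 < m := by omega
      simp only [v, dif_pos hh]
      rw [hg _ (by simp only [mem_filter, mem_univ, true_and]; omega)]
      have h5 : (2 * (j + 1) - 1) / 2 = j := by omega
      have h6 : (2 * (j + 1) - 1) % 2 = 1 := by omega
      simp [f, h5, h6, hj]
    rw [e1, e2, show 2 * (j + 1) - 1 = 2 * j + 1 by omega, show 2 * (j + 1) = 2 * j + 2 by ring]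
    simp only [c]
    ring
end

section
/- Let q ≡ 1 (mod 5) and ψ ∈ F_q with ψ ≠ 0 and ψ^5 ≠ 1. Define the affine point counts N_X = #{x ∈ F_q^5 : x_1^5+⋯+x_5^5 = 5ψ x_1⋯x_5}, N_Y = #{y ∈ F_q^5 : (y_1+⋯+y_5)^5 = (5ψ)^5 y_1⋯y_5}, N_A = #{(x,y) ∈ F_q^2 : y^5 = x^2(1−x)^3(1−x/ψ^5)^2}, and N_B = #{(x,y) ∈ F_q^2 : y^5 = x^2(1−x)^4(1−x/ψ^5)}. Then N_X = N_Y + 10·q·(q−1)·(N_A − q) + 15·q·(q−1)·(N_B − q). -/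
open Finset
open scoped Classical

set_option linter.unusedSectionVars false

namespace S17
open Polynomial

section newton
variable {K : Type*} [Field K] [Fintype K]

noncomputable def Mon (K : Type*) [Field K] [Fintype K] (n : ℕ) : Finset K[X] :=
  univ.image (fun a : Fin n → K => X ^ n + ∑ i, C (a i) * X ^ (i : ℕ))

lemma degree_tail {n : ℕ} (a : Fin n → K) :
    (∑ i, C (a i) * X ^ (i : ℕ) : K[X]).degree < n := by
  refine lt_of_le_of_lt (degree_sum_le _ _) ?_
  rw [Finset.sup_lt_iff (WithBot.bot_lt_coe _)]
  intro i _
  exact lt_of_le_of_lt (degree_C_mul_X_pow_le _ _) (by exact_mod_cast i.2)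

lemma mem_Mon {n : ℕ} {f : K[X]} : f ∈ Mon K n ↔ f.Monic ∧ f.natDegree = n := by
  unfold Mon
  simp only [mem_image, mem_univ, true_and]
  constructor
  · rintro ⟨a, rfl⟩
    have h := degree_tail a
    refine ⟨monic_X_pow_add h, natDegree_eq_of_degree_eq_some ?_⟩
    rw [degree_add_eq_left_of_degree_lt (by rwa [degree_X_pow]), degree_X_pow]
  · rintro ⟨hm, hn⟩
    refine ⟨fun i => f.coeff i, ?_⟩
    conv_rhs => rw [hm.as_sum, hn]
    rw [Finset.sum_range]

lemma coeff_mon {n : ℕ} (a : Fin n → K) (i : Fin n) :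
    (X ^ n + ∑ i, C (a i) * X ^ (i : ℕ) : K[X]).coeff i = a i := by
  simp [coeff_X_pow, Fin.val_inj, i.2.ne]

lemma sum_Mon {R : Type*} [AddCommMonoid R] (n : ℕ) (g : K[X] → R) :
    ∑ f ∈ Mon K n, g f = ∑ a : Fin n → K, g (X ^ n + ∑ i, C (a i) * X ^ (i : ℕ)) := by
  unfold Mon
  rw [sum_image]
  intro a _ b _ h
  funext i
  have := congrArg (fun f => f.coeff i) h
  simpa only [coeff_mon] using this

noncomputable def Phi (K : Type*) [Field K] {L : Type*} [Field L] [Algebra K L] (α : L) : K[X] :=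
  minpoly K α ^ (Module.finrank K L / (minpoly K α).natDegree)

section one
variable {L : Type*} [Field L] [Fintype L] [Algebra K L]

lemma minpoly_monic (α : L) : (minpoly K α).Monic := minpoly.monic (Algebra.IsIntegral.isIntegral α)
lemma minpoly_irr (α : L) : Irreducible (minpoly K α) :=
  minpoly.irreducible (Algebra.IsIntegral.isIntegral α)

lemma minpoly_deg_dvd (α : L) : (minpoly K α).natDegree ∣ Module.finrank K L :=
  minpoly.degree_dvd (Algebra.IsIntegral.isIntegral α)

lemma Phi_monic (α : L) : (Phi K α).Monic := (minpoly_monic α).pow _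

lemma Phi_natDegree (α : L) : (Phi K α).natDegree = Module.finrank K L := by
  unfold Phi
  rw [natDegree_pow, Nat.div_mul_cancel (minpoly_deg_dvd α)]

lemma Phi_map (α : L) : (Phi K α).map (algebraMap K L) = ∏ σ : Gal(L/K), (X - C (σ α)) := by
  have hl := Algebra.IsInvariant.charpoly_mem_lifts K L Gal(L/K) α
  obtain ⟨g, hg⟩ := hl
  rw [MulSemiringAction.charpoly_eq] at hg
  simp only [AlgEquiv.smul_def, coe_mapRingHom] at hg
  rw [← hg]
  congr 1
  have gm : g.Monic := by
    apply monic_of_injective (algebraMap K L).injective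
    rw [hg]
    exact monic_prod_of_monic _ _ (fun _ _ ↦ monic_X_sub_C _)
  have gd : g.natDegree = Module.finrank K L := by
    rw [← natDegree_map (algebraMap K L), hg, natDegree_prod_of_monic _ _ (fun _ _ ↦ monic_X_sub_C _)]
    simp [← IsGalois.card_aut_eq_finrank, Nat.card_eq_fintype_card]
  -- all irreducible factors of g are minpoly
  have key : ∀ r : K[X], Irreducible r → r.Monic → r ∣ g → r = minpoly K α := by
    intro r hr hrm hrg
    have h1 : r.map (algebraMap K L) ∣ ∏ σ : Gal(L/K), (X - C (σ α)) := by
      rw [← hg]; exact Polynomial.map_dvd (algebraMap K L) hrg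
    have hsp : (r.map (algebraMap K L)).Splits := by
      refine Splits.of_dvd (.prod fun g _ ↦ .X_sub_C _) ?_ h1
      exact (monic_prod_of_monic _ _ (fun _ _ ↦ monic_X_sub_C _)).ne_zero
    obtain ⟨β, hβ⟩ := hsp.exists_eval_eq_zero (by
      rw [degree_map]; exact (degree_pos_of_irreducible hr).ne')
    have h2 : (∏ σ : Gal(L/K), (X - C (σ α))).eval β = 0 :=
      eval_eq_zero_of_dvd_of_eval_eq_zero h1 hβ
    rw [eval_prod, prod_eq_zero_iff] at h2
    obtain ⟨σ, -, hσ⟩ := h2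
    have : β = σ α := by simpa [sub_eq_zero] using hσ
    rw [minpoly.eq_of_irreducible_of_monic hr (x := β) (by rwa [aeval_def, eval₂_eq_eval_map]) hrm, this]
    exact minpoly.algEquiv_eq σ α
  have key2 : ∀ n : ℕ, ∀ h : K[X], h.Monic → h.natDegree = n → h ∣ g → ∃ j, h = minpoly K α ^ j := by
    intro n
    induction n using Nat.strong_induction_on with
    | _ n ih =>
      intro h hm hn hd
      by_cases h1 : IsUnit h
      · exact ⟨0, by rw [pow_zero]; exact hm.isUnit_iff.mp h1⟩
      obtain ⟨r, rm, rirr, hr⟩ := exists_monic_irreducible_factor h h1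
      obtain ⟨h', rfl⟩ := hr
      have hm' : h'.Monic := rm.of_mul_monic_left hm
      have := rirr.natDegree_pos
      rw [rm.natDegree_mul hm'] at hn
      obtain ⟨j, hj⟩ := ih h'.natDegree (by omega) h' hm' rfl ((dvd_mul_left _ _).trans hd)
      refine ⟨j + 1, ?_⟩
      rw [key r rirr rm ((dvd_mul_right _ _).trans hd), pow_succ', ← hj]
  obtain ⟨j, hj⟩ := key2 _ g gm rfl dvd_rfl
  unfold Phi
  rw [← gd, hj, natDegree_pow, Nat.mul_div_cancel _ (minpoly_irr α).natDegree_pos]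

lemma card_minpoly {Q : K[X]} (hQ : Irreducible Q) (hm : Q.Monic)
    (hd : Q.natDegree ∣ Module.finrank K L) :
    (univ.filter fun α : L => minpoly K α = Q).card = Q.natDegree := by
  have : Fact (Irreducible Q) := ⟨hQ⟩
  obtain ⟨φ⟩ : Nonempty (AdjoinRoot Q →ₐ[K] L) := by
    apply FiniteField.nonempty_algHom_of_finrank_dvd
    rwa [(AdjoinRoot.powerBasis hQ.ne_zero).finrank, AdjoinRoot.powerBasis_dim]
  have h0 : aeval (φ (AdjoinRoot.root Q)) Q = 0 := by
    rw [aeval_algHom_apply, AdjoinRoot.aeval_eq, AdjoinRoot.mk_self, map_zero]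
  have h1 := minpoly.eq_of_irreducible_of_monic hQ h0 hm
  have hs : (Q.map (algebraMap K L)).Splits := by
    rw [h1]; exact Normal.splits inferInstance _
  have hsep : Q.Separable := PerfectField.separable_of_irreducible hQ
  rw [← card_rootSet_eq_natDegree hsep hs, ← Set.toFinset_card]
  congr 1
  ext α
  simp only [mem_filter, mem_univ, true_and, Set.mem_toFinset, mem_rootSet]
  constructor
  · rintro rfl; exact ⟨hm.ne_zero, minpoly.aeval _ _⟩
  · rintro ⟨_, h⟩; exact (minpoly.eq_of_irreducible_of_monic hQ h hm).symm

lemma Phi_dvd_iff {Q h : K[X]} (hQ : Irreducible Q) (hm : Q.Monic) (hh : h.Monic) (α : L) :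
    (Phi K α ∣ Q * h ∧ ¬ Phi K α ∣ h) ↔
      (minpoly K α = Q ∧ Module.finrank K L = Q.natDegree * (multiplicity Q h + 1)) := by
  have hfin : FiniteMultiplicity Q h :=
    finiteMultiplicity_of_degree_pos_of_monic (degree_pos_of_irreducible hQ) hm hh.ne_zero
  obtain ⟨j, hj⟩ := minpoly_deg_dvd (K := K) α
  have hpos := (minpoly_irr (K := K) α).natDegree_pos
  have hPhi : Phi K α = minpoly K α ^ j := by
    unfold Phi; rw [hj, Nat.mul_div_cancel_left _ hpos]
  rw [hPhi]
  have hj0 : j ≠ 0 := by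
    rintro rfl
    have : 0 < Module.finrank K L := Module.finrank_pos
    omega
  obtain ⟨i, rfl⟩ := Nat.exists_eq_succ_of_ne_zero hj0
  constructor
  · rintro ⟨h1, h2⟩
    have hmQ : minpoly K α = Q := by
      by_contra hne
      apply h2
      have hc : IsCoprime (minpoly K α) Q := by
        rw [(minpoly_irr α).coprime_iff_not_dvd]
        intro hd
        exact hne (eq_of_monic_of_associated (minpoly_monic α) hm
          ((minpoly_irr α).associated_of_dvd hQ hd))
      exact (hc.pow_left).dvd_of_dvd_mul_left h1
    refine ⟨hmQ, ?_⟩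
    rw [hmQ] at h1 h2 hj
    rw [hj]
    rw [Nat.succ_eq_add_one, pow_succ'] at h1
    have h1' := (mul_dvd_mul_iff_left hm.ne_zero).mp h1
    rw [hfin.pow_dvd_iff_le_multiplicity] at h1' h2
    congr 1; omega
  · rintro ⟨rfl, h2⟩
    rw [hj] at h2
    have h3 := Nat.eq_of_mul_eq_mul_left hpos h2
    have h4 : i = multiplicity (minpoly K α) h := by omega
    rw [Nat.succ_eq_add_one, pow_succ', mul_dvd_mul_iff_left hm.ne_zero, ← pow_succ',
      hfin.pow_dvd_iff_le_multiplicity, hfin.pow_dvd_iff_le_multiplicity]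
    omega
end one

variable (L : ℕ → Type*) [∀ k, Field (L k)] [∀ k, Fintype (L k)] [∀ k, Algebra K (L k)]

lemma KL (hL : ∀ k, Module.finrank K (L k) = k + 1) (N : ℕ) :
    ∀ n : ℕ, ∀ f : K[X], f.Monic → f.natDegree = n → n ≤ N →
    ∑ k ∈ range N, (univ.filter fun α : L k => Phi K α ∣ f).card = n := by
  intro n
  induction n using Nat.strong_induction_on with
  | _ n ih =>
    intro f hm hn hN
    by_cases h1 : IsUnit f
    · have hf := hm.isUnit_iff.mp h1
      subst hf
      rw [natDegree_one] at hn
      subst hn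
      apply sum_eq_zero
      intro k _
      rw [card_eq_zero, filter_eq_empty_iff]
      intro α _ hd
      have h2 := natDegree_le_of_dvd hd one_ne_zero
      rw [Phi_natDegree, hL, natDegree_one] at h2
      omega
    obtain ⟨Q, Qm, Qirr, hr⟩ := exists_monic_irreducible_factor f h1
    obtain ⟨h, rfl⟩ := hr
    have hhm : h.Monic := Qm.of_mul_monic_left hm
    have hQ0 := Qirr.natDegree_pos
    rw [Qm.natDegree_mul hhm] at hn
    have ih' := ih h.natDegree (by omega) h hhm rfl (by omega)
    have hfin : FiniteMultiplicity Q h :=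
      finiteMultiplicity_of_degree_pos_of_monic (degree_pos_of_irreducible Qirr) Qm hhm.ne_zero
    have hsplit : ∀ k, (univ.filter fun α : L k => Phi K α ∣ Q * h).card =
        (univ.filter fun α : L k => Phi K α ∣ h).card +
        (if k = Q.natDegree * (multiplicity Q h + 1) - 1 then Q.natDegree else 0) := by
      intro k
      rw [← card_filter_add_card_filter_not (s := univ.filter fun α : L k => Phi K α ∣ Q * h)
        (fun α => Phi K α ∣ h), filter_filter, filter_filter]
      congr 1
      · congr 1
        apply filter_congr
        intro α _
        exact ⟨fun h => h.2, fun h => ⟨h.trans (dvd_mul_left _ _), h⟩⟩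
      · simp_rw [Phi_dvd_iff Qirr Qm hhm, hL]
        have hp : 0 < Q.natDegree * (multiplicity Q h + 1) := by positivity
        split_ifs with hk
        · have : k + 1 = Q.natDegree * (multiplicity Q h + 1) := by omega
          simp only [this, and_true]
          apply card_minpoly Qirr Qm
          rw [hL, this]; exact dvd_mul_right _ _
        · have : k + 1 ≠ Q.natDegree * (multiplicity Q h + 1) := by omega
          simp [this]
    simp_rw [hsplit]
    rw [sum_add_distrib, ih', sum_ite_eq', if_pos, ← hn, add_comm]
    rw [mem_range]
    have h3 : (Q ^ (multiplicity Q h)).natDegree ≤ h.natDegree :=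
      natDegree_le_of_dvd (pow_multiplicity_dvd Q h) hhm.ne_zero
    rw [natDegree_pow] at h3
    have : Q.natDegree * (multiplicity Q h + 1) = multiplicity Q h * Q.natDegree + Q.natDegree := by ring
    have hp : 0 < Q.natDegree * (multiplicity Q h + 1) := by positivity
    omega

lemma newton (hL : ∀ k, Module.finrank K (L k) = k + 1) {R : Type*} [CommRing R] (Λ : K[X] → R)
    (hΛ : ∀ f g : K[X], f.Monic → g.Monic → Λ (f * g) = Λ f * Λ g) (n : ℕ) :
    (n : R) * ∑ f ∈ Mon K n, Λ f =
      ∑ k ∈ range n, (∑ α : L k, Λ (Phi K α)) * ∑ f ∈ Mon K (n - (k + 1)), Λ f := by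
  have h1 : (n : R) * ∑ f ∈ Mon K n, Λ f = ∑ f ∈ Mon K n, ∑ k ∈ range n, ∑ α : L k,
      if Phi K α ∣ f then Λ f else 0 := by
    rw [mul_sum]
    apply sum_congr rfl
    intro f hf
    rw [mem_Mon] at hf
    conv_lhs => rw [← KL L hL n n f hf.1 hf.2 le_rfl]
    rw [Nat.cast_sum, sum_mul]
    apply sum_congr rfl
    intro k _
    rw [← sum_filter, sum_const, nsmul_eq_mul]
  rw [h1, sum_comm]
  apply sum_congr rfl
  intro k hk
  rw [mem_range] at hk
  rw [sum_comm, sum_mul]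
  apply sum_congr rfl
  intro α _
  rw [← sum_filter, mul_sum]
  symm
  apply sum_bij (fun g _ => Phi K α * g)
  · intro g hg
    rw [mem_Mon] at hg
    rw [mem_filter, mem_Mon]
    refine ⟨⟨(Phi_monic α).mul hg.1, ?_⟩, dvd_mul_right _ _⟩
    rw [(Phi_monic α).natDegree_mul hg.1, Phi_natDegree, hL, hg.2]
    omega
  · intro g _ g' _ h
    exact mul_left_cancel₀ (Phi_monic α).ne_zero h
  · intro f hf
    rw [mem_filter, mem_Mon] at hf
    obtain ⟨⟨h1, h2⟩, g, rfl⟩ := hf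
    have hg := (Phi_monic α).of_mul_monic_left h1
    refine ⟨g, ?_, rfl⟩
    rw [mem_Mon]
    refine ⟨hg, ?_⟩
    rw [(Phi_monic α).natDegree_mul hg, Phi_natDegree, hL] at h2
    omega
  · intro g hg
    rw [mem_Mon] at hg
    rw [hΛ _ _ (Phi_monic α) hg.1]

end newton
end S17

namespace S17
open Polynomial

section fifth
variable {L : Type*} [Field L] [Fintype L]

/-- a character of order 5, extended by zero -/
structure IsChi (θ : L →* ℂ) : Prop where
  zero : θ 0 = 0
  five : ∀ x, x ≠ 0 → θ x ^ 5 = 1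
  nontriv : ∃ x, x ≠ 0 ∧ θ x ≠ 1

lemma IsChi.geom {θ : L →* ℂ} (h : IsChi θ) (β : L) (hβ : β ≠ 0) :
    ∑ b ∈ range 5, θ β ^ b = if θ β = 1 then 5 else 0 := by
  split_ifs with h1
  · simp [h1]
  · have := geom_sum_mul (θ β) 5
    rw [h.five β hβ, sub_self] at this
    exact (mul_eq_zero.1 this).resolve_right (sub_ne_zero.2 h1)

lemma fifth {θ : L →* ℂ} (h : IsChi θ) (β : L) :
    ((univ.filter (fun α : L => α ^ 5 = β)).card : ℂ) = ∑ b ∈ range 5, θ β ^ b := by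
  by_cases hβ : β = 0
  · subst hβ
    have : (univ.filter (fun α : L => α ^ 5 = 0)) = {0} := by
      ext α; simp
    rw [this]
    simp [h.zero, sum_range_succ]
  rw [h.geom β hβ]
  obtain ⟨g, hg⟩ := IsCyclic.exists_generator (α := Lˣ)
  have hgpow : ∀ x : L, x ≠ 0 → ∃ n : ℕ, x = (g : L) ^ n := by
    intro x hx
    have := hg (Units.mk0 x hx)
    obtain ⟨n, hn⟩ := (mem_powers_iff_mem_zpowers.2 this)
    refine ⟨n, ?_⟩
    have := congrArg Units.val hn
    simpa using this.symm
  have hg1 : θ g ≠ 1 := by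
    intro h1
    obtain ⟨x, hx, hx1⟩ := h.nontriv
    obtain ⟨n, rfl⟩ := hgpow x hx
    apply hx1; simp [h1]
  have hprim : IsPrimitiveRoot (θ g) 5 := by
    refine IsPrimitiveRoot.iff_orderOf.2 ?_
    have : Fact (Nat.Prime 5) := ⟨by norm_num⟩
    exact orderOf_eq_prime (h.five _ g.ne_zero) hg1
  have hdvd : 5 ∣ orderOf g := by
    apply (hprim.pow_eq_one_iff_dvd _).1
    rw [← map_pow]
    have : (g : L) ^ orderOf g = 1 := by
      rw [← Units.val_pow_eq_pow_val, pow_orderOf_eq_one]; rfl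
    rw [this, map_one]
  have hgprim : IsPrimitiveRoot (g : L) (orderOf g) :=
    IsPrimitiveRoot.coe_units_iff.2 (IsPrimitiveRoot.orderOf g)
  obtain ⟨m, hm⟩ := hdvd
  have hpos : 0 < orderOf g := orderOf_pos g
  have hz : IsPrimitiveRoot ((g : L) ^ m) 5 := hgprim.pow hpos (by rw [hm, mul_comm])
  have hset : (univ.filter (fun α : L => α ^ 5 = β)) = (nthRoots 5 β).toFinset := by
    ext α; simp [mem_nthRoots]
  have hiff : (∃ α : L, α ^ 5 = β) ↔ θ β = 1 := by
    constructor
    · rintro ⟨α, rfl⟩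
      rw [map_pow]; apply h.five
      rintro rfl; simp at hβ
    · intro h1
      obtain ⟨n, rfl⟩ := hgpow β hβ
      rw [map_pow] at h1
      obtain ⟨k, rfl⟩ := (hprim.pow_eq_one_iff_dvd _).1 h1
      exact ⟨g ^ k, by rw [← pow_mul, mul_comm]⟩
  rw [hset, Multiset.toFinset_card_of_nodup (hz.nthRoots_nodup hβ), hz.card_nthRoots]
  simp only [hiff]
  split_ifs <;> simp
end fifth

section PP
variable {K : Type*} [Field K]

noncomputable def P1 (f : K[X]) : K := - f.reverse.coeff 1
noncomputable def P5 (f : K[X]) : K :=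
  - f.reverse.coeff 1 ^ 5 + 5 * f.reverse.coeff 1 ^ 3 * f.reverse.coeff 2
  - 5 * f.reverse.coeff 1 ^ 2 * f.reverse.coeff 3 - 5 * f.reverse.coeff 1 * f.reverse.coeff 2 ^ 2
  + 5 * f.reverse.coeff 1 * f.reverse.coeff 4 + 5 * f.reverse.coeff 2 * f.reverse.coeff 3
  - 5 * f.reverse.coeff 5
noncomputable def Nm (f : K[X]) : K := (-1) ^ f.natDegree * f.coeff 0

lemma rev0 {f : K[X]} (hf : f.Monic) : f.reverse.coeff 0 = 1 := by
  rw [coeff_zero_reverse]; exact hf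

lemma P1_mul {f g : K[X]} (hf : f.Monic) (hg : g.Monic) : P1 (f * g) = P1 f + P1 g := by
  simp only [P1, reverse_mul_of_domain, coeff_mul, Finset.Nat.antidiagonal_succ]
  simp [rev0 hf, rev0 hg]
  try ring

lemma P5_mul {f g : K[X]} (hf : f.Monic) (hg : g.Monic) : P5 (f * g) = P5 f + P5 g := by
  simp only [P5, reverse_mul_of_domain, coeff_mul, Finset.Nat.antidiagonal_succ]
  simp [rev0 hf, rev0 hg]
  ring

lemma Nm_mul {f g : K[X]} (hf : f.Monic) (hg : g.Monic) : Nm (f * g) = Nm f * Nm g := by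
  simp only [Nm, hf.natDegree_mul hg, mul_coeff_zero]
  ring

lemma P1_lin (β : K) : P1 (X - C β) = β := by
  have h : (X - C β).natDegree = 1 := natDegree_X_sub_C β
  have h2 : ((X : K[X]) - C β).reverse.coeff 1 = -β := by
    rw [coeff_reverse, h]; simp
  simp [P1, h2]

lemma P5_lin (β : K) : P5 (X - C β) = β ^ 5 := by
  have h : (X - C β).natDegree = 1 := natDegree_X_sub_C β
  have h2 : ((X : K[X]) - C β).reverse.coeff 1 = -β := by
    rw [coeff_reverse, h]; simp
  have h3 : ∀ k, 2 ≤ k → ((X : K[X]) - C β).reverse.coeff k = 0 := by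
    intro k hk
    apply coeff_eq_zero_of_natDegree_lt
    have := reverse_natDegree_le ((X : K[X]) - C β)
    omega
  simp only [P5, h2, h3 2 (by norm_num), h3 3 (by norm_num), h3 4 (by norm_num), h3 5 (by norm_num)]
  ring

lemma Nm_lin (β : K) : Nm (X - C β) = β := by
  simp [Nm]

lemma prod_lin {ι : Type*} (s : Finset ι) (β : ι → K) :
    P1 (∏ i ∈ s, (X - C (β i))) = ∑ i ∈ s, β i ∧ P5 (∏ i ∈ s, (X - C (β i))) = ∑ i ∈ s, β i ^ 5 ∧
    Nm (∏ i ∈ s, (X - C (β i))) = ∏ i ∈ s, β i := by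
  induction s using Finset.induction_on with
  | empty =>
    have : ∀ k, k ≠ 0 → (1 : K[X]).reverse.coeff k = 0 := by
      intro k hk
      have : (1 : K[X]).reverse = 1 := by rw [← C_1, reverse_C]
      rw [this, coeff_one, if_neg hk]
    simp [P1, P5, Nm, this]
  | insert i s hi ih =>
    have h2 : (∏ i ∈ s, (X - C (β i))).Monic := monic_prod_of_monic _ _ fun i _ => monic_X_sub_C _
    have h1 := monic_X_sub_C (β i)
    rw [prod_insert hi, P1_mul h1 h2, P5_mul h1 h2, Nm_mul h1 h2, ih.1, ih.2.1, ih.2.2,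
      sum_insert hi, sum_insert hi, prod_insert hi, P1_lin, P5_lin, Nm_lin]
    exact ⟨rfl, rfl, rfl⟩

variable {L : Type*} [Field L] [Algebra K L]
lemma rev_map (f : K[X]) (k : ℕ) : (f.map (algebraMap K L)).reverse.coeff k =
    algebraMap K L (f.reverse.coeff k) := by
  rw [coeff_reverse, coeff_reverse, natDegree_map, coeff_map]

lemma P1_map (f : K[X]) : P1 (f.map (algebraMap K L)) = algebraMap K L (P1 f) := by
  simp only [P1, rev_map, map_neg]
lemma P5_map (f : K[X]) : P5 (f.map (algebraMap K L)) = algebraMap K L (P5 f) := by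
  simp only [P5, rev_map, map_neg, map_add, map_sub, map_mul, map_pow, map_ofNat]
lemma Nm_map (f : K[X]) : Nm (f.map (algebraMap K L)) = algebraMap K L (Nm f) := by
  simp [Nm, natDegree_map]

variable [Fintype K] [Fintype L]
lemma P1_Phi (α : L) : P1 (Phi K α) = Algebra.trace K L α := by
  apply (algebraMap K L).injective
  rw [← P1_map, Phi_map, (prod_lin _ _).1, trace_eq_sum_automorphisms]
lemma P5_Phi (α : L) : P5 (Phi K α) = Algebra.trace K L (α ^ 5) := by
  apply (algebraMap K L).injective
  rw [← P5_map, Phi_map, (prod_lin _ _).2.1, trace_eq_sum_automorphisms]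
  simp
lemma Nm_Phi (α : L) : Nm (Phi K α) = Algebra.norm K α := by
  apply (algebraMap K L).injective
  rw [← Nm_map, Phi_map, (prod_lin _ _).2.2, Algebra.norm_eq_prod_automorphisms]
end PP
end S17

namespace S17
open Polynomial

section HD
variable {F : Type*} [Field F] [Fintype F] {A : Type*} [CommRing A] [Algebra ℂ A]

/-- twisted Gauss sums with values in an algebra -/
noncomputable def ff (χ : F →* ℂ) (e : AddChar F ℂ) (dl : F →*₀ A) (b : ℕ) : A :=
  ∑ x : F, (χ x ^ b * e x) • dl x

noncomputable def DD (e : AddChar F ℂ) (dl : F →*₀ A) : A := ∑ t : F, e (5 * t) • dl (t ^ 5)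

noncomputable def Lb (χ : F →* ℂ) (e : AddChar F ℂ) (dl : F →*₀ A) (b : ℕ) (f : F[X]) : A :=
  (χ (Nm f) ^ b * e (P1 f)) • dl (Nm f)

noncomputable def Lt (e : AddChar F ℂ) (dl : F →*₀ A) (f : F[X]) : A :=
  e (P5 f) • dl (Nm f ^ 5)

variable (χ : F →* ℂ) (e : AddChar F ℂ) (dl : F →*₀ A)

lemma Lb_mul (b : ℕ) (f g : F[X]) (hf : f.Monic) (hg : g.Monic) :
    Lb χ e dl b (f * g) = Lb χ e dl b f * Lb χ e dl b g := by
  simp only [Lb, Nm_mul hf hg, P1_mul hf hg, map_mul, AddChar.map_add_eq_mul, smul_mul_smul_comm]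
  congr 1
  ring

lemma Lt_mul (f g : F[X]) (hf : f.Monic) (hg : g.Monic) :
    Lt e dl (f * g) = Lt e dl f * Lt e dl g := by
  simp only [Lt, Nm_mul hf hg, P5_mul hf hg, map_mul, AddChar.map_add_eq_mul, smul_mul_smul_comm,
    mul_pow]

lemma mon_natDegree {n : ℕ} (a : Fin n → F) :
    (X ^ n + ∑ i, C (a i) * X ^ (i : ℕ) : F[X]).natDegree = n := by
  have : (X ^ n + ∑ i, C (a i) * X ^ (i : ℕ) : F[X]) ∈ Mon F n := by
    rw [Mon]; exact mem_image_of_mem _ (mem_univ a)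
  exact (mem_Mon.1 this).2

lemma mon_rev {n : ℕ} (a : Fin n → F) (k : ℕ) (hk : 0 < k) (hn : k ≤ n) :
    (X ^ n + ∑ i, C (a i) * X ^ (i : ℕ) : F[X]).reverse.coeff k = a ⟨n - k, by omega⟩ := by
  rw [coeff_reverse, mon_natDegree, revAt_le hn]
  exact coeff_mon a ⟨n - k, by omega⟩

lemma Lb_0 (b : ℕ) : ∑ f ∈ Mon F 0, Lb χ e dl b f = 1 := by
  rw [sum_Mon]
  have : (1 : F[X]).nextCoeff = 0 := by rw [← C_1, nextCoeff_C_eq_zero]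
  simp [Lb, Nm, P1, this]

lemma Lt_0 : ∑ f ∈ Mon F 0, Lt e dl f = 1 := by
  rw [sum_Mon]
  have : ∀ k, k ≠ 0 → (1 : F[X]).reverse.coeff k = 0 := by
    intro k hk
    have : (1 : F[X]).reverse = 1 := by rw [← C_1, reverse_C]
    rw [this, coeff_one, if_neg hk]
  have h5 : P5 (1 : F[X]) = 0 := by
    simp only [P5, this 1 (by norm_num), this 2 (by norm_num), this 3 (by norm_num), this 4 (by norm_num), this 5 (by norm_num)]
    ring
  simp [Lt, Nm, h5]

lemma Nm_mon {n : ℕ} (a : Fin (n+1) → F) :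
    Nm (X ^ (n+1) + ∑ i, C (a i) * X ^ (i : ℕ) : F[X]) = (-1) ^ (n+1) * a 0 := by
  rw [Nm, mon_natDegree]
  congr 1
  exact coeff_mon a 0

lemma P1_mon {n : ℕ} (a : Fin (n+1) → F) :
    P1 (X ^ (n+1) + ∑ i, C (a i) * X ^ (i : ℕ) : F[X]) = - a (Fin.last n) := by
  rw [P1, mon_rev a 1 (by norm_num) (by omega)]
  congr 2

lemma Lb_1 (b : ℕ) : ∑ f ∈ Mon F 1, Lb χ e dl b f = ff χ e dl b := by
  rw [sum_Mon, ff]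
  refine Fintype.sum_equiv ((Equiv.funUnique (Fin 1) F).trans (Equiv.neg F)) _ _ ?_
  intro a
  rw [Lb, Nm_mon, P1_mon]
  simp

lemma Lb_ge (he : e ≠ 1) (b n : ℕ) : ∑ f ∈ Mon F (n+2), Lb χ e dl b f = 0 := by
  rw [sum_Mon]
  simp only [Lb, Nm_mon, P1_mon]
  obtain ⟨c, hc⟩ := AddChar.ne_one_iff.1 he
  set S := ∑ a : Fin (n+2) → F, (χ ((-1) ^ (n + 1 + 1) * a 0) ^ b * e (-a (Fin.last (n+1)))) •
      dl ((-1) ^ (n + 1 + 1) * a 0) with hS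
  have h1 : S = e c • S := by
    conv_lhs => rw [hS, ← Equiv.sum_comp (Equiv.addRight (Pi.single (Fin.last (n+1)) (-c) : Fin (n+2) → F))]
    rw [hS, smul_sum]
    refine sum_congr rfl fun a _ => ?_
    have : (0 : Fin (n+2)) ≠ Fin.last (n+1) := by
      intro h; simpa using congrArg Fin.val h
    simp only [Equiv.coe_addRight, Pi.add_apply, Pi.single_eq_same, Pi.single_eq_of_ne this, add_zero,
      smul_smul, neg_add, neg_neg, AddChar.map_add_eq_mul]
    congr 1; ring
  have h2 : (1 - e c) • S = 0 := by rw [sub_smul, one_smul, ← h1, sub_self]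
  exact (smul_eq_zero_iff_right (sub_ne_zero.2 (Ne.symm hc))).1 h2 

section ext
variable (L : ℕ → Type) [∀ k, Field (L k)] [∀ k, Fintype (L k)] [∀ k, Algebra F (L k)]
  (hL : ∀ k, Module.finrank F (L k) = k + 1)
include hL

lemma sb (he : e ≠ 1) (b k : ℕ) :
    ∑ α : L k, Lb χ e dl b (Phi F α) = (-1) ^ k * ff χ e dl b ^ (k + 1) := by
  induction k with
  | zero =>
    have := newton L hL (Lb χ e dl b) (Lb_mul χ e dl b) 1
    simp [Lb_0, Lb_1] at this
    simp [this]
  | succ k ih =>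
    have := newton L hL (Lb χ e dl b) (Lb_mul χ e dl b) (k+2)
    rw [Lb_ge _ _ _ he, sum_range_succ, sum_range_succ, sum_eq_zero] at this
    · simp only [ih, show k + 2 - (k+1) = 1 by omega, show k + 2 - (k+1+1) = 0 by omega, Lb_0, Lb_1] at this
      linear_combination -this
    · intro i hi
      rw [mem_range] at hi
      obtain ⟨j, hj⟩ : ∃ j, k + 2 - (i+1) = j + 2 := ⟨k - i - 1, by omega⟩
      rw [hj, Lb_ge _ _ _ he, mul_zero]

lemma isChi_norm (hχ : IsChi χ) (k : ℕ) : IsChi (χ.comp (Algebra.norm F : L k →* F)) := by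
  have : FiniteDimensional F (L k) := Module.finite_of_finrank_pos (by rw [hL]; omega)
  refine ⟨by simp [hχ.zero], ?_, ?_⟩
  · intro x hx
    simp only [MonoidHom.comp_apply]
    apply hχ.five
    exact (Algebra.norm_ne_zero_iff).2 hx
  · obtain ⟨x, hx, hx1⟩ := hχ.nontriv
    obtain ⟨y, rfl⟩ := FiniteField.norm_surjective F (L k) x
    refine ⟨y, ?_, hx1⟩
    rintro rfl
    simp at hx

lemma st (hχ : IsChi χ) (k : ℕ) :
    ∑ α : L k, Lt e dl (Phi F α) = ∑ b ∈ range 5, ∑ α : L k, Lb χ e dl b (Phi F α) := by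
  have hfib : ∑ α : L k, Lt e dl (Phi F α) =
      ∑ β : L k, ∑ α ∈ univ.filter (fun α : L k => α ^ 5 = β), Lt e dl (Phi F α) :=
    (sum_fiberwise univ (fun α : L k => α ^ 5) _).symm
  rw [hfib, sum_comm]
  refine sum_congr rfl fun β _ => ?_
  have : ∀ α ∈ univ.filter (fun α : L k => α ^ 5 = β), Lt e dl (Phi F α) =
      e (Algebra.trace F (L k) β) • dl (Algebra.norm F β) := by
    intro α hα
    rw [mem_filter] at hα
    rw [← hα.2, Lt, P5_Phi, Nm_Phi, map_pow (Algebra.norm F)]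
  rw [sum_congr rfl this, sum_const, ← Nat.cast_smul_eq_nsmul ℂ, fifth (isChi_norm χ L hL hχ k),
    sum_smul]
  refine sum_congr rfl fun b _ => ?_
  rw [Lb, P1_Phi, Nm_Phi, smul_smul]
  rfl

omit hL in
lemma cancel (n : ℕ) (hn : n ≠ 0) (x y : A) (h : (n : A) * x = n * y) : x = y := by
  have h2 : ((n : ℂ)⁻¹ * n) • x = ((n : ℂ)⁻¹ * n) • y := by
    rw [mul_smul, mul_smul, Nat.cast_smul_eq_nsmul, Nat.cast_smul_eq_nsmul, nsmul_eq_mul, nsmul_eq_mul, h]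
  rwa [inv_mul_cancel₀ (Nat.cast_ne_zero.2 hn), one_smul, one_smul] at h2

lemma c5 (hχ : IsChi χ) (he : e ≠ 1) :
    ∑ f ∈ Mon F 5, Lt e dl f = ∏ b ∈ range 5, ff χ e dl b := by
  have hs : ∀ k, ∑ α : L k, Lt e dl (Phi F α) = ∑ b ∈ range 5, (-1) ^ k * ff χ e dl b ^ (k + 1) := by
    intro k
    rw [st χ e dl L hL hχ]
    exact sum_congr rfl fun b _ => sb χ e dl L hL he b k
  have hn := fun n => newton L hL (Lt e dl) (Lt_mul e dl) n
  simp only [hs, sum_range_succ, sum_range_zero, zero_add] at hn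
  have h1 := hn 1
  have h2 := hn 2
  have h3 := hn 3
  have h4 := hn 4
  have h5 := hn 5
  simp only [sum_range_succ, sum_range_zero, zero_add, Lt_0, Nat.reduceAdd, Nat.reduceSub] at h1 h2 h3 h4 h5
  simp only [prod_range_succ, prod_range_zero, one_mul]
  generalize ff χ e dl 0 = a at *
  generalize ff χ e dl 1 = b at *
  generalize ff χ e dl 2 = c at *
  generalize ff χ e dl 3 = d at *
  generalize ff χ e dl 4 = f at *
  generalize (∑ f ∈ Mon F 1, Lt e dl f) = c1 at *
  generalize (∑ f ∈ Mon F 2, Lt e dl f) = c2 at *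
  generalize (∑ f ∈ Mon F 3, Lt e dl f) = c3 at *
  generalize (∑ f ∈ Mon F 4, Lt e dl f) = c4 at *
  generalize (∑ f ∈ Mon F 5, Lt e dl f) = c5 at *
  have k1 : c1 = a + b + c + d + f := by
    rw [Nat.cast_one] at h1
    linear_combination h1
  have k2 : c2 = a*b+a*c+a*d+a*f+b*c+b*d+b*f+c*d+c*f+d*f := by
    apply cancel 2 (by norm_num)
    rw [h2, k1]; push_cast; ring
  have k3 : c3 = a*b*c+a*b*d+a*b*f+a*c*d+a*c*f+a*d*f+b*c*d+b*c*f+b*d*f+c*d*f := by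
    apply cancel 3 (by norm_num)
    rw [h3, k1, k2]; push_cast; ring
  have k4 : c4 = a*b*c*d+a*b*c*f+a*b*d*f+a*c*d*f+b*c*d*f := by
    apply cancel 4 (by norm_num)
    rw [h4, k1, k2, k3]; push_cast; ring
  apply cancel 5 (by norm_num)
  rw [h5, k1, k2, k3, k4]; push_cast; ring
end ext

noncomputable def HC (e : AddChar F ℂ) : ℂ := ∑ b : Fin 4 → F,
  e (- b 3 ^ 5 + 5 * b 3 ^ 3 * b 2 - 5 * b 3 ^ 2 * b 1 - 5 * b 3 * b 2 ^ 2 + 5 * b 3 * b 0 + 5 * b 2 * b 1)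

lemma c5_direct : ∑ f ∈ Mon F 5, Lt e dl f = HC e • DD e dl := by
  rw [sum_Mon, ← (Fin.consEquiv (fun _ : Fin 5 => F)).sum_comp, Fintype.sum_prod_type,
    HC, DD, smul_sum, ← Equiv.sum_comp (Equiv.neg F)]
  refine sum_congr rfl fun t _ => ?_
  rw [sum_smul]
  refine sum_congr rfl fun b _ => ?_
  rw [Lt, Nm_mon, P5, mon_rev _ 1 (by norm_num) (by norm_num), mon_rev _ 2 (by norm_num) (by norm_num),
    mon_rev _ 3 (by norm_num) (by norm_num), mon_rev _ 4 (by norm_num) (by norm_num), 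
    mon_rev _ 5 (by norm_num) (by norm_num), smul_smul, ← AddChar.map_add_eq_mul]
  simp only [Fin.consEquiv, Equiv.coe_fn_mk, Equiv.neg_apply]
  have e4 : ∀ h, (Fin.cons (-t) b : Fin 5 → F) ⟨5 - 1, h⟩ = b 3 := fun _ => rfl
  have e3 : ∀ h, (Fin.cons (-t) b : Fin 5 → F) ⟨5 - 2, h⟩ = b 2 := fun _ => rfl
  have e2 : ∀ h, (Fin.cons (-t) b : Fin 5 → F) ⟨5 - 3, h⟩ = b 1 := fun _ => rfl
  have e1 : ∀ h, (Fin.cons (-t) b : Fin 5 → F) ⟨5 - 4, h⟩ = b 0 := fun _ => rfl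
  have e0 : ∀ h, (Fin.cons (-t) b : Fin 5 → F) ⟨5 - 5, h⟩ = -t := fun _ => rfl
  simp only [Fin.cons_zero]
  erw [e4, e3, e2, e1, e0]
  congr 2
  · ring
  · ring

lemma HD1 (hχ : IsChi χ) (he : e ≠ 1) : ∏ b ∈ range 5, ff χ e dl b = HC e • DD e dl := by
  obtain ⟨p, hp⟩ := CharP.exists F
  have := hp
  have : Fact p.Prime := ⟨CharP.char_is_prime F p⟩
  have : ∀ k, Fintype (FiniteField.Extension F p (k+1)) := fun k => Fintype.ofFinite _
  rw [← c5_direct, c5 χ e dl (fun k => FiniteField.Extension F p (k+1))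
    (fun k => FiniteField.finrank_extension F p (k+1)) hχ he]
end HD
end S17

namespace S17

section Gen
variable {F : Type*} [Field F] [Fintype F] {A : Type*} [CommRing A] [Algebra ℂ A]
variable (χ : F →* ℂ) (e : AddChar F ℂ) (dl : F →*₀ A)

noncomputable def tr (F : Type*) [Field F] : F →*₀ ℂ where
  toFun x := if x = 0 then 0 else 1
  map_zero' := by simp
  map_one' := by simp
  map_mul' x y := by by_cases hx : x = 0 <;> by_cases hy : y = 0 <;> simp [hx, hy]

lemma tr_ne {x : F} (hx : x ≠ 0) : tr F x = 1 := if_neg hx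

noncomputable def iv : F →*₀ A := dl.comp (invMonoidWithZeroHom : F →*₀ F)

lemma iv_apply (x : F) : iv dl x = dl x⁻¹ := rfl

noncomputable def gg (b : ℕ) : ℂ := ff χ e (tr F) b
noncomputable def EE (b : ℕ) : A := ∑ r : F, χ r ^ b • dl r

variable {χ} {e}

lemma IsChi.pow_mod (hχ : IsChi χ) {x : F} (hx : x ≠ 0) (b : ℕ) : χ x ^ (b + 5) = χ x ^ b := by
  rw [pow_add, hχ.five x hx, mul_one]

lemma IsChi.congr (hχ : IsChi χ) {x : F} (hx : x ≠ 0) {a b : ℕ} (h : a % 5 = b % 5) : χ x ^ a = χ x ^ b := by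
  rw [← Nat.div_add_mod a 5, ← Nat.div_add_mod b 5, pow_add, pow_add, pow_mul, pow_mul, hχ.five x hx, h,
    one_pow, one_pow]

lemma IsChi.ne_zero (hχ : IsChi χ) {x : F} (hx : x ≠ 0) : χ x ≠ 0 := by
  intro h
  have := hχ.five x hx
  rw [h] at this; norm_num at this

lemma IsChi.inv (hχ : IsChi χ) {x : F} (hx : x ≠ 0) (m : ℕ) : χ x⁻¹ ^ m = χ x ^ (4 * m) := by
  have h : χ x * χ x⁻¹ = 1 := by rw [← map_mul, mul_inv_cancel₀ hx, map_one]
  have h1 : χ x⁻¹ = χ x ^ 4 := by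
    apply mul_left_cancel₀ (hχ.ne_zero hx)
    rw [h, ← pow_succ', hχ.five x hx]
  rw [h1, pow_mul]

lemma IsChi.neg_one (hχ : IsChi χ) : χ (-1) = 1 := by
  have h1 := hχ.five (-1) (by simp)
  have h2 : χ (-1) ^ 2 = 1 := by rw [← map_pow]; simp
  calc χ (-1) = χ (-1) ^ 5 * 1 := by rw [show χ (-1) ^ 5 = (χ (-1) ^2)^2 * χ (-1) by ring, h2]; ring
    _ = 1 := by rw [h1, one_mul]

lemma IsChi.neg (hχ : IsChi χ) (x : F) : χ (-x) = χ x := by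
  rw [← neg_one_mul, map_mul, hχ.neg_one, one_mul]

/-- terms with dl x may be compared only at nonzero x -/
lemma smul_dl_congr {x : F} {c d : ℂ} (h : x ≠ 0 → c = d) : c • dl x = d • dl x := by
  by_cases hx : x = 0
  · simp [hx]
  · rw [h hx]

lemma ff_congr (hχ : IsChi χ) {a b : ℕ} (h : a % 5 = b % 5) : ff χ e dl a = ff χ e dl b :=
  sum_congr rfl fun x _ => smul_dl_congr dl fun hx => by rw [hχ.congr hx h]

lemma gg_congr (hχ : IsChi χ) {a b : ℕ} (h : a % 5 = b % 5) : gg χ e a = gg χ e b := ff_congr _ hχ h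

lemma EE_congr (hχ : IsChi χ) {a b : ℕ} (h : a % 5 = b % 5) : EE χ dl a = EE χ dl b :=
  sum_congr rfl fun x _ => smul_dl_congr dl fun hx => by rw [hχ.congr hx h]

lemma sum_e (he : e ≠ 1) : ∑ x : F, e x = 0 := AddChar.sum_eq_zero_of_ne_one he

lemma sum_tr (h : F → ℂ) : ∑ x : F, h x * tr F x = ∑ x, h x - h 0 := by
  rw [← sum_erase_add univ _ (mem_univ (0 : F)), ← sum_erase_add univ (fun x => h x) (mem_univ (0 : F))]
  simp only [map_zero, mul_zero, add_zero, add_sub_cancel_right]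
  refine sum_congr rfl fun x hx => ?_
  rw [tr_ne (ne_of_mem_erase hx), mul_one]

lemma gg_zero (he : e ≠ 1) : gg χ e 0 = -1 := by
  rw [gg, ff]
  simp only [pow_zero, one_mul, smul_eq_mul]
  rw [sum_tr, sum_e he]; simp

lemma sum_mulR {M : Type*} [AddCommMonoid M] {s : F} (hs : s ≠ 0) (h : F → M) :
    ∑ x, h (x * s) = ∑ x, h x := Equiv.sum_comp (Equiv.mulRight₀ s hs) h

/-- multiplicative orthogonality -/
lemma sum_chi (hχ : IsChi χ) (m : ℕ) :
    ∑ x : F, χ x ^ m * tr F x = if m % 5 = 0 then (Fintype.card F : ℂ) - 1 else 0 := by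
  split_ifs with h
  · have : ∀ x : F, χ x ^ m * tr F x = 1 * tr F x := fun x => smul_dl_congr (tr F) fun hx => by
      rw [hχ.congr hx (b := 0) (by simpa using h), pow_zero]
    rw [sum_congr rfl fun x _ => this x, sum_tr]
    simp
  · obtain ⟨u, hu, hu1⟩ := hχ.nontriv
    have hm1 : χ u ^ m ≠ 1 := by
      intro h1
      have hp : IsPrimitiveRoot (χ u) 5 := by
        have : Fact (Nat.Prime 5) := ⟨by norm_num⟩
        exact IsPrimitiveRoot.iff_orderOf.2 (orderOf_eq_prime (hχ.five _ hu) hu1)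
      have := (hp.pow_eq_one_iff_dvd _).1 h1
      omega
    set S := ∑ x : F, χ x ^ m * tr F x with hS
    have h1 : S = χ u ^ m * S := by
      conv_lhs => rw [hS, ← sum_mulR hu]
      rw [hS, mul_sum]
      refine sum_congr rfl fun x _ => ?_
      simp only [map_mul, tr_ne hu]
      ring
    have h2 : (1 - χ u ^ m) * S = 0 := by linear_combination h1
    exact (mul_eq_zero.1 h2).resolve_left (sub_ne_zero.2 (Ne.symm hm1))

lemma EE_tr (hχ : IsChi χ) (m : ℕ) : EE χ (tr F) m = if m % 5 = 0 then (Fintype.card F : ℂ) - 1 else 0 :=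
  sum_chi hχ m

/-- scaled Gauss sum -/
lemma gauss_scale (hχ : IsChi χ) (m : ℕ) {s : F} (hs : s ≠ 0) :
    ∑ y : F, χ y ^ m * e (y * s) * tr F y = gg χ e m * χ s ^ (4 * m) := by
  rw [gg, ff, ← hχ.inv hs, sum_mul, ← sum_mulR hs (fun x => (χ x ^ m * e x) • tr F x * χ s⁻¹ ^ m)]
  refine sum_congr rfl fun x _ => ?_
  have : χ s ^ m * χ s⁻¹ ^ m = 1 := by
    rw [← mul_pow, ← map_mul, mul_inv_cancel₀ hs, map_one, one_pow]
  simp only [map_mul, tr_ne hs, smul_eq_mul]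
  linear_combination -(χ x ^ m * e (x * s) * tr F x) * this

lemma conv (c d : F → ℂ) : (∑ x, c x • dl x) * (∑ y, d y • dl y⁻¹) =
    ∑ r : F, (∑ y : F, c (r * y) * d y * tr F y) • dl r := by
  rw [sum_mul_sum, sum_comm]
  simp only [sum_smul]
  conv_rhs => rw [sum_comm]
  refine sum_congr rfl fun y _ => ?_
  by_cases hy : y = 0
  · simp [hy]
  rw [← sum_mulR hy]
  refine sum_congr rfl fun r _ => ?_
  rw [smul_mul_smul_comm, ← map_mul, mul_inv_cancel_right₀ hy, tr_ne hy, mul_one]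

lemma conv' (c d : F → ℂ) : (∑ x, c x • dl x) * (∑ y, d y • dl y) =
    ∑ r : F, (∑ y : F, c (r * y) * d y⁻¹ * tr F y) • dl r := by
  rw [← conv, ← Equiv.sum_comp (Equiv.inv F) (fun y => d y • dl y)]
  rfl

lemma prod_gen (a b : ℕ) : ff χ e dl a * ff χ e (iv dl) b =
    ∑ r : F, (χ r ^ a * ∑ y : F, χ y ^ (a + b) * e (y * (1 + r)) * tr F y) • dl r := by
  rw [ff, ff]
  simp only [iv_apply]
  rw [conv]
  refine sum_congr rfl fun r _ => ?_
  rw [mul_sum]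
  congr 1
  refine sum_congr rfl fun y _ => ?_
  rw [map_mul, mul_add, AddChar.map_add_eq_mul, mul_one, mul_comm y r]
  ring

lemma I1 (hχ : IsChi χ) (he : e ≠ 1) (a b : ℕ) (h : (a + b) % 5 = 0) :
    ff χ e dl a * ff χ e (iv dl) b = (Fintype.card F : ℂ) • dl (-1) - EE χ dl a := by
  have key : ∀ r : F, (χ r ^ a * ∑ y : F, χ y ^ (a + b) * e (y * (1 + r)) * tr F y) • dl r
      = (if r = -1 then (Fintype.card F : ℂ) • dl (-1) else 0) - χ r ^ a • dl r := by
    intro r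
    split_ifs with hr
    · subst hr
      have := sum_chi hχ (a + b)
      rw [if_pos h] at this
      simp only [add_neg_cancel, mul_zero, AddChar.map_zero_eq_one, mul_one, this, hχ.neg_one, one_pow]
      rw [one_mul, sub_smul]
    · have hr' : 1 + r ≠ 0 := fun h => hr (by linear_combination h)
      rw [gauss_scale hχ _ hr', gg_congr hχ (b := 0) h, gg_zero he,
        hχ.congr hr' (a := 4 * (a+b)) (b := 0) (by omega)]
      simp
  rw [prod_gen, sum_congr rfl fun r _ => key r, sum_sub_distrib, EE]
  simp

noncomputable def JJ (χ : F →* ℂ) (dl : F →*₀ A) (a m : ℕ) : A := ∑ r : F, (χ r ^ a * χ (1 + r) ^ m) • dl r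

lemma I2 (hχ : IsChi χ) (a b m : ℕ) (h : (a + b) % 5 ≠ 0) (hm : (a + b + m) % 5 = 0) :
    ff χ e dl a * ff χ e (iv dl) b = gg χ e (a + b) • JJ χ dl a m := by
  rw [prod_gen, JJ, smul_sum]
  refine sum_congr rfl fun r _ => ?_
  rw [smul_smul]
  by_cases hr' : 1 + r = 0
  · have := sum_chi hχ (a + b)
    rw [if_neg h] at this
    simp only [hr', mul_zero, AddChar.map_zero_eq_one, mul_one, this, hχ.zero]
    rw [zero_pow (by omega)]; simp
  · rw [gauss_scale hχ _ hr', hχ.congr hr' (a := 4 * (a+b)) (b := m) (by omega)]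
    congr 1; ring

lemma I3 (hχ : IsChi χ) (b k : ℕ) : EE χ dl b * ff χ e dl k = gg χ e (k + 4 * b) • EE χ dl b := by
  rw [mul_comm, EE, ff, mul_comm, conv', smul_sum]
  refine sum_congr rfl fun r _ => ?_
  rw [smul_smul, gg, ff, sum_mul, ← Equiv.sum_comp (Equiv.inv F) (fun y => (χ y ^ (k + 4 * b) * e y) • tr F y * χ r ^ b)]
  congr 1
  refine sum_congr rfl fun y _ => ?_
  by_cases hy : y = 0
  · simp [hy]
  have h1 : χ y⁻¹ ^ (4 * b) = χ y ^ b := by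
    rw [hχ.inv hy]; exact hχ.congr hy (by omega)
  rw [Equiv.inv_apply, tr_ne hy, tr_ne (inv_ne_zero hy), map_mul, pow_add, h1, smul_eq_mul]
  ring

lemma I3v (b k : ℕ) : EE χ dl b * ff χ e (iv dl) k = gg χ e (k + b) • EE χ dl b := by
  rw [EE, ff]
  simp only [iv_apply]
  rw [conv, smul_sum]
  refine sum_congr rfl fun r _ => ?_
  rw [smul_smul, gg, ff, sum_mul]
  congr 1
  refine sum_congr rfl fun y _ => ?_
  rw [map_mul, smul_eq_mul]
  ring

lemma I4 (hχ : IsChi χ) (b c : ℕ) (h : b % 5 ≠ c % 5) : EE χ dl b * EE χ dl c = 0 := by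
  rw [EE, EE, conv']
  refine sum_eq_zero fun r _ => ?_
  have : ∀ y : F, χ (r * y) ^ b * χ y⁻¹ ^ c * tr F y = χ r ^ b * (χ y ^ (b + 4 * c) * tr F y) := by
    intro y
    by_cases hy : y = 0
    · simp [hy]
    rw [hχ.inv hy, map_mul]; ring
  rw [sum_congr rfl fun y _ => this y, ← mul_sum, sum_chi hχ, if_neg (by omega), mul_zero, zero_smul]

lemma dlE (b : ℕ) {u : F} (hu : u ≠ 0) (hu1 : χ u = 1) : dl u * EE χ dl b = EE χ dl b := by
  rw [EE, mul_sum, ← sum_mulR hu (fun x => χ x ^ b • dl x)]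
  refine sum_congr rfl fun r _ => ?_
  rw [map_mul, hu1, mul_one, mul_smul_comm, map_mul, mul_comm]

lemma gg_mul (hχ : IsChi χ) (he : e ≠ 1) (a b : ℕ) (h : (a + b) % 5 = 0) (ha : a % 5 ≠ 0) :
    gg χ e a * gg χ e b = Fintype.card F := by
  have h1 := I1 (tr F) hχ he a b h
  have h2 : iv (tr F) = tr F := by
    ext x; rw [iv_apply]
    by_cases hx : x = 0
    · simp [hx]
    · rw [tr_ne hx, tr_ne (inv_ne_zero hx)]
  rw [h2, EE_tr hχ, if_neg ha, tr_ne (by simp)] at h1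
  simpa [gg] using h1

lemma HD (hχ : IsChi χ) (he : e ≠ 1) (h5 : (5 : F) ≠ 0) :
    ∏ b ∈ range 5, ff χ e dl b = (Fintype.card F : ℂ) ^ 2 • DD e dl := by
  have hD : DD e (tr F) = -1 := by
    rw [DD]
    have : ∀ t : F, e (5 * t) • tr F (t ^ 5) = e (t * 5) * tr F t := by
      intro t
      by_cases ht : t = 0
      · simp [ht]
      · rw [tr_ne ht, tr_ne (pow_ne_zero 5 ht), mul_comm]; rfl
    rw [sum_congr rfl fun t _ => this t, sum_tr, sum_mulR h5 e, sum_e he]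
    simp
  have h := HD1 χ e (tr F) hχ he
  rw [hD] at h
  have hC : HC e = (Fintype.card F : ℂ) ^ 2 := by
    have h14 := gg_mul hχ he 1 4 (by norm_num) (by norm_num)
    have h23 := gg_mul hχ he 2 3 (by norm_num) (by norm_num)
    have h0 := gg_zero (χ := χ) he
    simp only [gg] at h14 h23 h0
    simp only [prod_range_succ, prod_range_zero, h0, one_mul, smul_eq_mul] at h
    linear_combination h + (ff χ e (tr F) 2 * ff χ e (tr F) 3) * h14 + (Fintype.card F : ℂ) * h23
  rw [HD1 χ e dl hχ he, hC]

end Gen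
end S17

namespace S17

section GA
variable {F : Type*} [Field F] [Fintype F]

abbrev GA (F : Type*) [Field F] := MonoidAlgebra ℂ Fˣ

noncomputable def del (F : Type*) [Field F] : F →*₀ GA F where
  toFun x := if h : x = 0 then 0 else MonoidAlgebra.single (Units.mk0 x h) 1
  map_zero' := by simp
  map_one' := by simp [MonoidAlgebra.one_def]
  map_mul' x y := by
    by_cases hx : x = 0
    · simp [hx]
    by_cases hy : y = 0
    · simp [hy]
    simp [hx, hy, MonoidAlgebra.single_mul_single]

noncomputable def co (u : F) : GA F →ₗ[ℂ] ℂ :=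
  if h : u = 0 then 0 else
    { toFun := fun w => w.coeff (Units.mk0 u h)
      map_add' := fun x y => by simp
      map_smul' := fun c x => by simp }

lemma co_ne {u : F} (hu : u ≠ 0) (w : GA F) : co u w = w.coeff (Units.mk0 u hu) := by
  rw [co, dif_neg hu]; rfl

lemma del_ne {x : F} (hx : x ≠ 0) : del F x = MonoidAlgebra.single (Units.mk0 x hx) 1 :=
  dif_neg hx

lemma co_del {u : F} (hu : u ≠ 0) (x : F) : co u (del F x) = if x = u then 1 else 0 := by
  by_cases hx : x = 0
  · subst hx
    rw [map_zero, map_zero, if_neg (Ne.symm hu)]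
  · rw [co_ne hu, del_ne hx]
    simp [Finsupp.single_apply]

lemma co_del_mul {u v : F} (hu : u ≠ 0) (hv : v ≠ 0) (w : GA F) : co u (del F v * w) = co (v⁻¹ * u) w := by
  have : v⁻¹ * u ≠ 0 := mul_ne_zero (inv_ne_zero hv) hu
  rw [co_ne hu, co_ne this, del_ne hv, MonoidAlgebra.coeff_single_mul_apply, one_mul]
  congr 1
  ext
  simp

noncomputable def tau (χ : F →* ℂ) : GA F →ₐ[ℂ] GA F :=
  MonoidAlgebra.lift ℂ (GA F) Fˣ
    { toFun := fun u => MonoidAlgebra.single u (χ u)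
      map_one' := by simp [MonoidAlgebra.one_def]
      map_mul' := fun x y => by simp [MonoidAlgebra.single_mul_single] }

lemma tau_del (χ : F →* ℂ) (x : F) : tau χ (del F x) = χ x • del F x := by
  by_cases hx : x = 0
  · simp [hx]
  · simp [tau, del, hx]

lemma co_tau (χ : F →* ℂ) {u : F} (hu : u ≠ 0) (w : GA F) : co u (tau χ w) = χ u * co u w := by
  induction w using MonoidAlgebra.induction_on with
  | of g =>
    have : MonoidAlgebra.of ℂ Fˣ g = del F g := by simp [del]
    rw [this, tau_del, map_smul, co_del hu]
    split_ifs with h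
    · simp [h]
    · simp
  | add a b ha hb => rw [map_add, map_add, ha, hb, map_add, mul_add]
  | smul c a ha => rw [map_smul, map_smul, ha, map_smul, smul_eq_mul, smul_eq_mul]; ring

lemma co_sum {u : F} (hu : u ≠ 0) (c : F → ℂ) : co u (∑ x, c x • del F x) = c u := by
  simp only [map_sum, map_smul, co_del hu, smul_eq_mul, mul_ite, mul_one, mul_zero]
  simp

variable {χ : F →* ℂ} {e : AddChar F ℂ}

noncomputable def sS (χ : F →* ℂ) (l : F) (i j k : ℕ) : ℂ := ∑ x : F, χ x ^ i * χ (1 - x) ^ j * χ (1 - l * x) ^ k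

lemma IsChi.congr' (hχ : IsChi χ) (x : F) {a b : ℕ} (ha : a ≠ 0) (hb : b ≠ 0) (h : a % 5 = b % 5) :
    χ x ^ a = χ x ^ b := by
  by_cases hx : x = 0
  · rw [hx, hχ.zero, zero_pow ha, zero_pow hb]
  · exact hχ.congr hx h

lemma sS_congr (hχ : IsChi χ) (l : F) {i j k i' j' k' : ℕ} (hi : i ≠ 0) (hj : j ≠ 0) (hk : k ≠ 0)
    (hi' : i' ≠ 0) (hj' : j' ≠ 0) (hk' : k' ≠ 0)
    (h1 : i % 5 = i' % 5) (h2 : j % 5 = j' % 5) (h3 : k % 5 = k' % 5) : sS χ l i j k = sS χ l i' j' k' :=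
  sum_congr rfl fun x _ => by
    rw [hχ.congr' x hi hi' h1, hχ.congr' _ hj hj' h2, hχ.congr' _ hk hk' h3]

lemma co_JJ (hχ : IsChi χ) {l : F} (hl : l ≠ 0) (hl1 : χ l = 1) (a m b n : ℕ) (hm : m ≠ 0) :
    co l (JJ χ (del F) a m * JJ χ (del F) b n) = sS χ l (4 * a + b + 4 * m) m n := by
  rw [mul_comm, JJ, JJ, conv', co_sum hl, sS, ← Equiv.sum_comp (Equiv.neg F)]
  refine sum_congr rfl fun x _ => ?_
  rw [Equiv.neg_apply]
  by_cases hx : x = 0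
  · simp [hx, hχ.zero, hm]
  have h1 : χ (1 + (-x)⁻¹) ^ m = χ (1 - x) ^ m * χ x ^ (4 * m) := by
    rw [← hχ.inv hx, ← mul_pow, ← map_mul, ← hχ.neg ((1 - x) * x⁻¹)]
    congr 2; field_simp; ring
  have h2 : χ (-x)⁻¹ ^ a = χ x ^ (4 * a) := by
    rw [hχ.inv (neg_ne_zero.2 hx), hχ.neg]
  have h3 : χ (l * -x) = χ x := by rw [map_mul, hl1, one_mul, hχ.neg]
  rw [h1, h2, h3, tr_ne (neg_ne_zero.2 hx), show 1 + l * -x = 1 - l * x by ring, pow_add, pow_add]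
  ring

lemma prod3 {R : Type*} [CommRing R] {Q δ A B C : R} (hδ : δ ^ 2 = 1) (h1 : A * B = 0) (h2 : A * C = 0)
    (h3 : B * C = 0) : (Q * δ - A) * (Q * δ - B) * (Q * δ - C) = Q ^ 3 * δ - Q ^ 2 * (A + B + C) := by
  linear_combination (Q ^ 3 * δ - Q ^ 2 * (A + B + C)) * hδ + Q * δ * (h1 + h2 + h3) - C * h1

lemma prod5 {R : Type*} [CommRing R] {Q δ A B C D E : R} (hδ : δ ^ 2 = 1) (hAB : A * B = 0) (hAC : A * C = 0)
    (hBC : B * C = 0) (hAD : A * D = 0) (hBD : B * D = 0) (hCD : C * D = 0) (hAE : A * E = 0) (hBE : B * E = 0)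
    (hCE : C * E = 0) (hDE : D * E = 0) (hD : δ * D = D) (hE : δ * E = E) :
    (Q * δ - A) * (Q * δ - B) * (Q * δ - C) * (Q * δ - D) * (Q * δ - E)
      = Q ^ 5 * δ - Q ^ 4 * (A + B + C + D + E) := by
  have h2 : (Q * δ - D) * (Q * δ - E) = Q ^ 2 - Q * (D + E) := by
    linear_combination Q ^ 2 * hδ - Q * hD - Q * hE + hDE
  rw [prod3 hδ hAB hAC hBC, mul_assoc, h2]
  linear_combination -Q^4 * (hD + hE) + Q ^ 3 * (hAD + hBD + hCD + hAE + hBE + hCE)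

lemma EE4 (hχ : IsChi χ) {A : Type*} [CommRing A] [Algebra ℂ A] (dl : F →*₀ A) (b i j k l : ℕ) :
    EE χ dl b * (ff χ e dl i * ff χ e dl j * ff χ e (iv dl) k * ff χ e (iv dl) l) =
    (gg χ e (i + 4 * b) * gg χ e (j + 4 * b) * gg χ e (k + b) * gg χ e (l + b)) • EE χ dl b := by
  rw [← mul_assoc, ← mul_assoc, ← mul_assoc, I3 dl hχ, smul_mul_assoc, I3 dl hχ, smul_mul_assoc, smul_mul_assoc,
    smul_mul_assoc, I3v dl, smul_mul_assoc, smul_mul_assoc, I3v dl]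
  simp only [smul_smul, mul_assoc]

lemma co_EE {u : F} (hu : u ≠ 0) (hu1 : χ u = 1) (b : ℕ) : co u (EE χ (del F) b) = 1 := by
  rw [EE, co_sum hu, hu1, one_pow]

lemma co_algebraMap (u : F) (c : ℂ) (w : GA F) : co u (algebraMap ℂ (GA F) c * w) = c * co u w := by
  rw [← Algebra.smul_def, map_smul, smul_eq_mul]

section W
variable (hχ : IsChi χ) (he : e ≠ 1) (h5 : (5 : F) ≠ 0) {l : F} (hl : l ≠ 0) (hl1 : χ l = 1) (hl2 : l ≠ 1)
include hχ he h5 hl hl1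

/-- general evaluation of co with three balanced pairs -/
lemma W_gen (a0 a1 a2 b0 b1 b2 i j k m mk mm : ℕ) (ha0 : (a0 + b0) % 5 = 0) (ha1 : (a1 + b1) % 5 = 0)
    (ha2 : (a2 + b2) % 5 = 0) (h01 : a0 % 5 ≠ a1 % 5) (h02 : a0 % 5 ≠ a2 % 5) (h12 : a1 % 5 ≠ a2 % 5)
    (hik : (i + k) % 5 ≠ 0) (hik' : (i + k + mk) % 5 = 0) (hjm : (j + m) % 5 ≠ 0) (hjm' : (j + m + mm) % 5 = 0) :
    co (-l) ((ff χ e (del F) a0 * ff χ e (iv (del F)) b0) * (ff χ e (del F) a1 * ff χ e (iv (del F)) b1) *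
      (ff χ e (del F) a2 * ff χ e (iv (del F)) b2) *
      (ff χ e (del F) i * ff χ e (del F) j * ff χ e (iv (del F)) k * ff χ e (iv (del F)) m)) =
    (Fintype.card F : ℂ) ^ 3 * (gg χ e (i + k) * gg χ e (j + m) * sS χ l (4 * i + j + 4 * mk) mk mm)
    - (Fintype.card F : ℂ) ^ 2 * (
       (gg χ e (i + 4 * a0) * gg χ e (j + 4 * a0) * gg χ e (k + a0) * gg χ e (m + a0)) + 
       (gg χ e (i + 4 * a1) * gg χ e (j + 4 * a1) * gg χ e (k + a1) * gg χ e (m + a1)) + 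
       (gg χ e (i + 4 * a2) * gg χ e (j + 4 * a2) * gg χ e (k + a2) * gg χ e (m + a2))) := by
  have hδ : (del F (-1)) ^ 2 = 1 := by rw [← map_pow]; simp
  rw [I1 _ hχ he _ _ ha0, I1 _ hχ he _ _ ha1, I1 _ hχ he _ _ ha2, Algebra.smul_def,
    prod3 hδ (I4 _ hχ _ _ h01) (I4 _ hχ _ _ h02) (I4 _ hχ _ _ h12)]
  set Q := algebraMap ℂ (GA F) (Fintype.card F : ℂ) with hQ
  set fi := ff χ e (del F) i with hi
  set fj := ff χ e (del F) j with hj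
  set fk := ff χ e (iv (del F)) k with hk
  set fm := ff χ e (iv (del F)) m with hm
  have e1 : (Q ^ 3 * del F (-1) - Q ^ 2 * (EE χ (del F) a0 + EE χ (del F) a1 + EE χ (del F) a2)) * (fi * fj * fk * fm)
    = Q ^ 3 * (del F (-1) * ((fi * fk) * (fj * fm))) - Q ^ 2 * (EE χ (del F) a0 * (fi * fj * fk * fm)
      + EE χ (del F) a1 * (fi * fj * fk * fm) + EE χ (del F) a2 * (fi * fj * fk * fm)) := by ring
  have hl' : -l ≠ 0 := neg_ne_zero.2 hl
  have hl1' : χ (-l) = 1 := by rw [hχ.neg, hl1]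
  rw [e1, EE4 hχ, EE4 hχ, EE4 hχ, I2 _ hχ i k mk hik hik', I2 _ hχ j m mm hjm hjm', hQ, ← map_pow, ← map_pow,
    map_sub, co_algebraMap, co_algebraMap, co_del_mul hl' (by simp), smul_mul_smul_comm, map_smul, map_add, map_add,
    map_smul, map_smul, map_smul, co_EE hl' hl1', co_EE hl' hl1', co_EE hl' hl1',
    show (-1 : F)⁻¹ * -l = l by rw [inv_neg, inv_one]; ring, co_JJ hχ hl hl1 _ _ _ _ (by rintro rfl; omega)]
  simp only [smul_eq_mul, mul_one]

lemma card_ne : (Fintype.card F : ℂ) ≠ 0 := Nat.cast_ne_zero.2 Fintype.card_ne_zero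

lemma co_Dv (w : GA F) : (Fintype.card F : ℂ) ^ 2 * co (-l) (w * DD e (iv (del F))) =
    co (-l) (w * (ff χ e (iv (del F)) 0 * ff χ e (iv (del F)) 1 * ff χ e (iv (del F)) 2 *
      ff χ e (iv (del F)) 3 * ff χ e (iv (del F)) 4)) := by
  have := HD (iv (del F)) hχ he h5
  simp only [prod_range_succ, prod_range_zero, one_mul] at this
  rw [this, mul_smul_comm, map_smul, smul_eq_mul]

lemma WA : co (-l) (ff χ e (del F) 0 ^ 3 * ff χ e (del F) 1 * ff χ e (del F) 4 * DD e (iv (del F))) =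
    (Fintype.card F : ℂ) ^ 2 * sS χ l 2 3 2 - (Fintype.card F : ℂ) - gg χ e 4 ^ 3 * gg χ e 3 - gg χ e 1 ^ 3 * gg χ e 2 := by
  have hq := card_ne hχ he h5 hl hl1
  apply mul_left_cancel₀ (pow_ne_zero 2 hq)
  rw [co_Dv hχ he h5 hl hl1]
  have h := W_gen hχ he h5 hl hl1 0 1 4 0 4 1 0 0 2 3 3 2 (by norm_num) (by norm_num) (by norm_num) (by norm_num)
    (by norm_num) (by norm_num) (by norm_num) (by norm_num) (by norm_num) (by norm_num)
  norm_num at h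
  rw [sS_congr hχ l (i := 12) (i' := 2) (by norm_num) (by norm_num) (by norm_num) (by norm_num) (j' := 3) (by norm_num) (k' := 2) (by norm_num) rfl rfl rfl,
    gg_congr hχ (a := 16) (b := 1) rfl, gg_congr hχ (a := 6) (b := 1) rfl, gg_congr hχ (a := 7) (b := 2) rfl, gg_zero he] at h
  have e23 := gg_mul hχ he 2 3 (by norm_num) (by norm_num)
  refine Eq.trans (Eq.trans (congrArg _ ?_) h) ?_
  · ring
  · linear_combination ((Fintype.card F : ℂ) ^ 3 * sS χ l 2 3 2 - (Fintype.card F : ℂ) ^ 2) * e23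

lemma WB : co (-l) (ff χ e (del F) 0 ^ 2 * ff χ e (del F) 1 ^ 2 * ff χ e (del F) 3 * DD e (iv (del F))) =
    (Fintype.card F : ℂ) ^ 2 * sS χ l 2 4 1 + gg χ e 1 ^ 2 * gg χ e 3 + gg χ e 4 ^ 2 * gg χ e 2 - (Fintype.card F : ℂ) ^ 2 := by
  have hq := card_ne hχ he h5 hl hl1
  apply mul_left_cancel₀ (pow_ne_zero 2 hq)
  rw [co_Dv hχ he h5 hl hl1]
  have h := W_gen hχ he h5 hl hl1 0 1 3 0 4 2 0 1 1 3 4 1 (by norm_num) (by norm_num) (by norm_num) (by norm_num)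
    (by norm_num) (by norm_num) (by norm_num) (by norm_num) (by norm_num) (by norm_num)
  norm_num at h
  rw [sS_congr hχ l (i := 17) (i' := 2) (by norm_num) (by norm_num) (by norm_num) (by norm_num) (j' := 4) (by norm_num) (k' := 1) (by norm_num) rfl rfl rfl,
    gg_congr hχ (a := 5) (b := 0) rfl, gg_congr hχ (a := 12) (b := 2) rfl, gg_congr hχ (a := 13) (b := 3) rfl, gg_congr hχ (a := 6) (b := 1) rfl, gg_zero he] at h
  have e23 := gg_mul hχ he 2 3 (by norm_num) (by norm_num)
  have e14 := gg_mul hχ he 1 4 (by norm_num) (by norm_num)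
  refine Eq.trans (Eq.trans (congrArg _ ?_) h) ?_
  · ring
  · linear_combination ((Fintype.card F : ℂ) ^ 3 * sS χ l 2 4 1 - (Fintype.card F : ℂ) ^ 2 * gg χ e 2 * gg χ e 3) * e14
      - (Fintype.card F : ℂ) ^ 3 * e23

include hl2 in
lemma W0 : co (-l) (ff χ e (del F) 0 * ff χ e (del F) 1 * ff χ e (del F) 2 * ff χ e (del F) 3 * ff χ e (del F) 4 * DD e (iv (del F))) =
    - 5 * (Fintype.card F : ℂ) ^ 2 := by
  have hq := card_ne hχ he h5 hl hl1
  apply mul_left_cancel₀ (pow_ne_zero 2 hq)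
  rw [co_Dv hχ he h5 hl hl1]
  have hδ : (del F (-1)) ^ 2 = 1 := by rw [← map_pow]; simp
  have hl' : -l ≠ 0 := neg_ne_zero.2 hl
  have hl1' : χ (-l) = 1 := by rw [hχ.neg, hl1]
  have hE : ∀ b, del F (-1) * EE χ (del F) b = EE χ (del F) b := fun b => dlE _ b (by simp) hχ.neg_one
  have key : ff χ e (del F) 0 * ff χ e (del F) 1 * ff χ e (del F) 2 * ff χ e (del F) 3 * ff χ e (del F) 4 *
     (ff χ e (iv (del F)) 0 * ff χ e (iv (del F)) 1 * ff χ e (iv (del F)) 2 *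
      ff χ e (iv (del F)) 3 * ff χ e (iv (del F)) 4) =
      (ff χ e (del F) 0 * ff χ e (iv (del F)) 0) * (ff χ e (del F) 1 * ff χ e (iv (del F)) 4) *
      (ff χ e (del F) 2 * ff χ e (iv (del F)) 3) * (ff χ e (del F) 3 * ff χ e (iv (del F)) 2) *
      (ff χ e (del F) 4 * ff χ e (iv (del F)) 1) := by ring
  have i4 : ∀ a b : ℕ, a % 5 ≠ b % 5 → EE χ (del F) a * EE χ (del F) b = 0 := fun a b h => I4 _ hχ a b h
  rw [key, I1 _ hχ he 0 0 (by norm_num), I1 _ hχ he 1 4 (by norm_num), I1 _ hχ he 2 3 (by norm_num),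
    I1 _ hχ he 3 2 (by norm_num), I1 _ hχ he 4 1 (by norm_num), Algebra.smul_def,
    prod5 hδ (i4 0 1 (by norm_num)) (i4 0 2 (by norm_num)) (i4 1 2 (by norm_num)) (i4 0 3 (by norm_num))
      (i4 1 3 (by norm_num)) (i4 2 3 (by norm_num)) (i4 0 4 (by norm_num)) (i4 1 4 (by norm_num))
      (i4 2 4 (by norm_num)) (i4 3 4 (by norm_num)) (hE 3) (hE 4), map_sub, ← map_pow, ← map_pow, co_algebraMap,
      co_algebraMap, co_del hl', if_neg (fun h => hl2 (neg_injective h).symm)]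
  simp only [map_add, co_EE hl' hl1']
  ring

lemma sA_symm : sS χ l 3 2 3 = sS χ l 2 3 2 := by
  have h1 := co_JJ hχ hl hl1 0 3 0 2 (by norm_num)
  have h2 := co_JJ hχ hl hl1 0 2 0 3 (by norm_num)
  rw [mul_comm, h2] at h1
  rw [sS_congr hχ l (i := 4 * 0 + 0 + 4 * 3) (i' := 2) (by norm_num) (by norm_num) (by norm_num) (by norm_num) (j' := 3) (by norm_num) (k' := 2) (by norm_num) rfl rfl rfl,
   sS_congr hχ l (i := 4 * 0 + 0 + 4 * 2) (i' := 3) (by norm_num) (by norm_num) (by norm_num) (by norm_num) (j' := 2) (by norm_num) (k' := 3) (by norm_num) rfl rfl rfl] at h1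
  exact h1

lemma sB_symm : sS χ l 3 1 4 = sS χ l 2 4 1 := by
  have h1 := co_JJ hχ hl hl1 0 4 1 1 (by norm_num)
  have h2 := co_JJ hχ hl hl1 1 1 0 4 (by norm_num)
  rw [mul_comm, h2] at h1
  rw [sS_congr hχ l (i := 4 * 0 + 1 + 4 * 4) (i' := 2) (by norm_num) (by norm_num) (by norm_num) (by norm_num) (j' := 4) (by norm_num) (k' := 1) (by norm_num) rfl rfl rfl,
   sS_congr hχ l (i := 4 * 1 + 0 + 4 * 1) (i' := 3) (by norm_num) (by norm_num) (by norm_num) (by norm_num) (j' := 1) (by norm_num) (k' := 4) (by norm_num) rfl rfl rfl] at h1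
  exact h1
end W

lemma IsChi.sq (hχ : IsChi χ) : IsChi (χ ^ 2) := by
  refine ⟨by simp [hχ.zero], fun x hx => ?_, ?_⟩
  · rw [MonoidHom.pow_apply, ← pow_mul, mul_comm, pow_mul, hχ.five x hx, one_pow]
  · obtain ⟨x, hx, h1⟩ := hχ.nontriv
    refine ⟨x, hx, fun h => h1 ?_⟩
    rw [MonoidHom.pow_apply] at h
    have h5 := hχ.five x hx
    calc χ x = (χ x ^ 5) := by rw [show χ x ^ 5 = (χ x ^ 2) ^ 2 * χ x by ring, h]; ring
      _ = 1 := h5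

lemma ff_sq {A : Type*} [CommRing A] [Algebra ℂ A] (dl : F →*₀ A) (b : ℕ) : ff (χ ^ 2) e dl b = ff χ e dl (2 * b) := by
  simp only [ff, MonoidHom.pow_apply, pow_mul]
lemma gg_sq (b : ℕ) : gg (χ ^ 2) e b = gg χ e (2 * b) := ff_sq _ _
lemma sS_sq (l : F) (i j k : ℕ) : sS (χ ^ 2) l i j k = sS χ l (2 * i) (2 * j) (2 * k) := by
  simp only [sS, MonoidHom.pow_apply, pow_mul]

section W2
variable (hχ : IsChi χ) (he : e ≠ 1) (h5 : (5 : F) ≠ 0) {l : F} (hl : l ≠ 0) (hl1 : χ l = 1)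
include hχ he h5 hl hl1

lemma WA2 : co (-l) (ff χ e (del F) 0 ^ 3 * ff χ e (del F) 2 * ff χ e (del F) 3 * DD e (iv (del F))) =
    (Fintype.card F : ℂ) ^ 2 * sS χ l 4 1 4 - (Fintype.card F : ℂ) - gg χ e 3 ^ 3 * gg χ e 1 - gg χ e 2 ^ 3 * gg χ e 4 := by
  have h := WA hχ.sq he h5 hl (by rw [MonoidHom.pow_apply, hl1, one_pow])
  rw [ff_sq, ff_sq, ff_sq, gg_sq, gg_sq, gg_sq, gg_sq, sS_sq,
    sS_congr hχ l (i := 2 * 2) (j := 2 * 3) (k := 2 * 2) (i' := 4) (by norm_num) (by norm_num) (by norm_num) (by norm_num) (j' := 1) (by norm_num) (k' := 4) (by norm_num) rfl rfl rfl,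
    ff_congr _ hχ (a := 2 * 4) (b := 3) rfl, gg_congr hχ (a := 2 * 4) (b := 3) rfl, gg_congr hχ (a := 2 * 3) (b := 1) rfl] at h
  exact h

lemma WB2 : co (-l) (ff χ e (del F) 0 ^ 2 * ff χ e (del F) 2 ^ 2 * ff χ e (del F) 1 * DD e (iv (del F))) =
    (Fintype.card F : ℂ) ^ 2 * sS χ l 4 3 2 + gg χ e 2 ^ 2 * gg χ e 1 + gg χ e 3 ^ 2 * gg χ e 4 - (Fintype.card F : ℂ) ^ 2 := by
  have h := WB hχ.sq he h5 hl (by rw [MonoidHom.pow_apply, hl1, one_pow])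
  rw [ff_sq, ff_sq, ff_sq, gg_sq, gg_sq, gg_sq, gg_sq, sS_sq,
    sS_congr hχ l (i := 2 * 2) (j := 2 * 4) (k := 2 * 1) (i' := 4) (by norm_num) (by norm_num) (by norm_num) (by norm_num) (j' := 3) (by norm_num) (k' := 2) (by norm_num) rfl rfl rfl,
    ff_congr _ hχ (a := 2 * 3) (b := 1) rfl, gg_congr hχ (a := 2 * 4) (b := 3) rfl, gg_congr hχ (a := 2 * 3) (b := 1) rfl] at h
  exact h

lemma sA2_symm : sS χ l 1 4 1 = sS χ l 4 1 4 := by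
  have h := sA_symm hχ.sq he h5 hl (by rw [MonoidHom.pow_apply, hl1, one_pow])
  rw [sS_sq, sS_sq,
    sS_congr hχ l (i := 2 * 3) (j := 2 * 2) (k := 2 * 3) (i' := 1) (by norm_num) (by norm_num) (by norm_num) (by norm_num) (j' := 4) (by norm_num) (k' := 1) (by norm_num) rfl rfl rfl] at h
  rw [h]
  exact sS_congr hχ l (i' := 4) (by norm_num) (by norm_num) (by norm_num) (by norm_num) (j' := 1) (by norm_num) (k' := 4) (by norm_num) rfl rfl rfl

lemma sB2_symm : sS χ l 1 2 3 = sS χ l 4 3 2 := by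
  have h := sB_symm hχ.sq he h5 hl (by rw [MonoidHom.pow_apply, hl1, one_pow])
  rw [sS_sq, sS_sq,
    sS_congr hχ l (i := 2 * 3) (j := 2 * 1) (k := 2 * 4) (i' := 1) (by norm_num) (by norm_num) (by norm_num) (by norm_num) (j' := 2) (by norm_num) (k' := 3) (by norm_num) rfl rfl rfl] at h
  rw [h]
  exact sS_congr hχ l (i' := 4) (by norm_num) (by norm_num) (by norm_num) (by norm_num) (j' := 3) (by norm_num) (k' := 2) (by norm_num) rfl rfl rfl
end W2

/-- translation invariance -/
lemma tau_ff (a : ℕ) : tau χ (ff χ e (del F) a) = ff χ e (del F) (a + 1) := by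
  rw [ff, ff, map_sum]
  refine sum_congr rfl fun x _ => ?_
  rw [map_smul, tau_del, smul_smul]
  congr 1; ring

lemma tau_Dv (hχ : IsChi χ) : tau χ (DD e (iv (del F))) = DD e (iv (del F)) := by
  rw [DD, map_sum]
  refine sum_congr rfl fun x _ => ?_
  rw [map_smul, iv_apply, tau_del]
  congr 1
  by_cases hx : x = 0
  · simp [hx]
  · rw [← inv_pow, map_pow χ, hχ.five _ (inv_ne_zero hx), one_smul]

end GA
end S17

namespace S17

section Ext
variable {F : Type*} [Field F] [Fintype F]

def pl {R : Type*} [CommRing R] (Z a b c d f : R) : R := a + Z * b + Z ^ 2 * c + Z ^ 3 * d + Z ^ 4 * f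

lemma pl_mul {R : Type*} [CommRing R] {Z : R} (hZ : Z ^ 5 = 1) (a b c d f a' b' c' d' f' : R) :
    pl Z a b c d f * pl Z a' b' c' d' f' =
    pl Z (a * a' + b * f' + c * d' + d * c' + f * b') (a * b' + b * a' + c * f' + d * d' + f * c')
      (a * c' + b * b' + c * a' + d * f' + f * d') (a * d' + b * c' + c * b' + d * a' + f * f')
      (a * f' + b * d' + c * c' + d * b' + f * a') := by
  simp only [pl]
  linear_combination ((b*f'+c*d'+d*c'+f*b') + Z * (c*f'+d*d'+f*c') + Z^2*(d*f'+f*d') + Z^3*(f*f')) * hZ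

variable {A : Type*} [CommRing A] [Algebra ℂ A] {χ : F →* ℂ} {e : AddChar F ℂ}

noncomputable def ZZ (A : Type*) [CommRing A] [Algebra ℂ A] (χ : F →* ℂ) (y : F) : A := algebraMap ℂ A (χ y⁻¹)

lemma ZZ5 (hχ : IsChi χ) {y : F} (hy : y ≠ 0) : ZZ A χ y ^ 5 = 1 := by
  rw [ZZ, ← map_pow, hχ.five _ (inv_ne_zero hy), map_one]

lemma ext_pl (hχ : IsChi χ) (a b c d f : A) :
    ∑ y : F, tr F y • pl (ZZ A χ y) a b c d f = ((Fintype.card F : ℂ) - 1) • a := by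
  have key : ∀ k (w : A), ∑ y : F, tr F y • (ZZ A χ y ^ k * w) = (∑ y : F, χ y ^ k * tr F y) • w := by
    intro k w
    rw [← Equiv.sum_comp (Equiv.inv F) (fun y => χ y ^ k * tr F y), sum_smul]
    refine sum_congr rfl fun y _ => ?_
    by_cases hy : y = 0
    · simp [hy]
    rw [Equiv.inv_apply, tr_ne hy, tr_ne (inv_ne_zero hy), ZZ, ← map_pow, ← Algebra.smul_def, one_smul, mul_one]
  have k0 := key 0 a
  have k1 := key 1 b
  have k2 := key 2 c
  have k3 := key 3 d
  have k4 := key 4 f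
  rw [sum_chi hχ] at k0 k1 k2 k3 k4
  simp only [pow_zero, one_mul, pow_one] at k0 k1
  norm_num at k0 k1 k2 k3 k4
  simp only [pl, smul_add, sum_add_distrib, k0, k1, k2, k3, k4, add_zero]

lemma ext_congr (hχ : IsChi χ) (w : F → A) (a b c d f : A)
    (h : ∀ y, y ≠ 0 → w y = pl (ZZ A χ y) a b c d f) :
    ∑ y : F, tr F y • w y = ((Fintype.card F : ℂ) - 1) • a := by
  rw [← ext_pl hχ a b c d f]
  refine sum_congr rfl fun y _ => ?_
  by_cases hy : y = 0
  · simp [hy]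
  · rw [h y hy]

def Bp {R : Type*} [CommRing R] (a b c d f : R) : R :=
  a ^ 5 + 24 * (a * b * c * d * f) + 20 * (a ^ 3 * b * f + a ^ 3 * c * d) + 30 * (a ^ 2 * b ^ 2 * d + a ^ 2 * c ^ 2 * b)

lemma ext5 (hχ : IsChi χ) (a b c d f : A) :
    ∑ y : F, tr F y • (pl (ZZ A χ y) a b c d f) ^ 5 = ((Fintype.card F : ℂ) - 1) •
      (Bp a b c d f + Bp b c d f a + Bp c d f a b + Bp d f a b c + Bp f a b c d) := by
  refine (ext_congr hχ _ ?_ ?_ ?_ ?_ ?_ (fun y hy => ?_)).trans ?_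
  rotate_left 5
  · rw [show (pl (ZZ A χ y) a b c d f) ^ 5 = (pl (ZZ A χ y) a b c d f * pl (ZZ A χ y) a b c d f) *
      (pl (ZZ A χ y) a b c d f * pl (ZZ A χ y) a b c d f) * pl (ZZ A χ y) a b c d f by ring,
      pl_mul (ZZ5 hχ hy), pl_mul (ZZ5 hχ hy), pl_mul (ZZ5 hχ hy)]
  congr 1
  simp only [Bp]
  ring

lemma extG (hχ : IsChi χ) (b c d f : A) :
    ∑ y : F, tr F y • (5 * pl (ZZ A χ y) 0 b c d f ^ 4 - 10 * pl (ZZ A χ y) 0 b c d f ^ 3 + 10 * pl (ZZ A χ y) 0 b c d f ^ 2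
      - 5 * pl (ZZ A χ y) 0 b c d f) = ((Fintype.card F : ℂ) - 1) •
      (5 * (6 * (b * f) ^ 2 + 6 * (c * d) ^ 2 + 24 * (b * f) * (c * d) 
         + 4 * (b ^ 3 * c + f ^ 3 * d + c ^ 3 * f + d ^ 3 * b))
       - 10 * (3 * (b ^ 2 * d + f ^ 2 * c + c ^ 2 * b + d ^ 2 * f))
       + 10 * (2 * (b * f) + 2 * (c * d))) := by
  have s1 := ext_pl hχ 0 b c d f
  have s2 : ∑ y : F, tr F y • pl (ZZ A χ y) 0 b c d f ^ 2 = ((Fintype.card F : ℂ) - 1) • (2 * (b * f) + 2 * (c * d)) := by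
    refine (ext_congr hχ _ ?_ ?_ ?_ ?_ ?_ (fun y hy => ?_)).trans ?_
    rotate_left 5
    · rw [show pl (ZZ A χ y) 0 b c d f ^ 2 = pl (ZZ A χ y) 0 b c d f * pl (ZZ A χ y) 0 b c d f by ring, pl_mul (ZZ5 hχ hy)]
    congr 1
    ring
  have s3 : ∑ y : F, tr F y • pl (ZZ A χ y) 0 b c d f ^ 3 = ((Fintype.card F : ℂ) - 1) • (3 * (b ^ 2 * d + f ^ 2 * c + c ^ 2 * b + d ^ 2 * f)) := by
    refine (ext_congr hχ _ ?_ ?_ ?_ ?_ ?_ (fun y hy => ?_)).trans ?_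
    rotate_left 5
    · rw [show pl (ZZ A χ y) 0 b c d f ^ 3 = pl (ZZ A χ y) 0 b c d f * pl (ZZ A χ y) 0 b c d f * pl (ZZ A χ y) 0 b c d f by ring, pl_mul (ZZ5 hχ hy), pl_mul (ZZ5 hχ hy)]
    congr 1
    ring
  have s4 : ∑ y : F, tr F y • pl (ZZ A χ y) 0 b c d f ^ 4 = ((Fintype.card F : ℂ) - 1) • (6 * (b * f) ^ 2 + 6 * (c * d) ^ 2 + 24 * (b * f) * (c * d) + 4 * (b ^ 3 * c + f ^ 3 * d + c ^ 3 * f + d ^ 3 * b)) := by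
    refine (ext_congr hχ _ ?_ ?_ ?_ ?_ ?_ (fun y hy => ?_)).trans ?_
    rotate_left 5
    · rw [show pl (ZZ A χ y) 0 b c d f ^ 4 = pl (ZZ A χ y) 0 b c d f * pl (ZZ A χ y) 0 b c d f * pl (ZZ A χ y) 0 b c d f * pl (ZZ A χ y) 0 b c d f by ring, pl_mul (ZZ5 hχ hy), pl_mul (ZZ5 hχ hy), pl_mul (ZZ5 hχ hy)]
    congr 1
    ring
  have : ∀ y : F, tr F y • (5 * pl (ZZ A χ y) 0 b c d f ^ 4 - 10 * pl (ZZ A χ y) 0 b c d f ^ 3 + 10 * pl (ZZ A χ y) 0 b c d f ^ 2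
      - 5 * pl (ZZ A χ y) 0 b c d f) = 5 * (tr F y • pl (ZZ A χ y) 0 b c d f ^ 4) - 10 * (tr F y • pl (ZZ A χ y) 0 b c d f ^ 3)
      + 10 * (tr F y • pl (ZZ A χ y) 0 b c d f ^ 2) - 5 * (tr F y • pl (ZZ A χ y) 0 b c d f) := by
    intro y
    simp only [Algebra.smul_def]; ring
  rw [sum_congr rfl fun y _ => this y]
  simp only [sum_add_distrib, sum_sub_distrib, ← mul_sum]
  rw [s1, s2, s3, s4]
  simp only [Algebra.smul_def]; ring

variable (hχ : IsChi χ) {l : F} (hl : l ≠ 0) (hl1 : χ l = 1)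
include hχ hl hl1

lemma co_shift (P : GA F → GA F → GA F → GA F → GA F → GA F)
    (hP : ∀ a b c d f, tau χ (P a b c d f) = P (tau χ a) (tau χ b) (tau χ c) (tau χ d) (tau χ f))
    (a b c d f : ℕ) :
    co (-l) (P (ff χ e (del F) (a+1)) (ff χ e (del F) (b+1)) (ff χ e (del F) (c+1)) (ff χ e (del F) (d+1)) (ff χ e (del F) (f+1)) * DD e (iv (del F)))
    = co (-l) (P (ff χ e (del F) a) (ff χ e (del F) b) (ff χ e (del F) c) (ff χ e (del F) d) (ff χ e (del F) f) * DD e (iv (del F))) := by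
  have h := co_tau χ (neg_ne_zero.2 hl) (P (ff χ e (del F) a) (ff χ e (del F) b) (ff χ e (del F) c) (ff χ e (del F) d) (ff χ e (del F) f) * DD e (iv (del F)))
  rw [hχ.neg, hl1, one_mul, map_mul, hP, tau_Dv hχ] at h
  simpa only [tau_ff] using h

lemma co_T5 : co (-l) ((Bp (ff χ e (del F) 0) (ff χ e (del F) 1) (ff χ e (del F) 2) (ff χ e (del F) 3) (ff χ e (del F) 4)
    + Bp (ff χ e (del F) 1) (ff χ e (del F) 2) (ff χ e (del F) 3) (ff χ e (del F) 4) (ff χ e (del F) 0)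
    + Bp (ff χ e (del F) 2) (ff χ e (del F) 3) (ff χ e (del F) 4) (ff χ e (del F) 0) (ff χ e (del F) 1)
    + Bp (ff χ e (del F) 3) (ff χ e (del F) 4) (ff χ e (del F) 0) (ff χ e (del F) 1) (ff χ e (del F) 2)
    + Bp (ff χ e (del F) 4) (ff χ e (del F) 0) (ff χ e (del F) 1) (ff χ e (del F) 2) (ff χ e (del F) 3)) * DD e (iv (del F)))
   = 5 * co (-l) (Bp (ff χ e (del F) 0) (ff χ e (del F) 1) (ff χ e (del F) 2) (ff χ e (del F) 3) (ff χ e (del F) 4) * DD e (iv (del F))) := by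
  have h := co_shift hχ hl hl1 (e := e) Bp (fun a b c d f => by simp only [Bp, map_add, map_mul, map_pow, map_ofNat])
  have h1 := h 0 1 2 3 4
  have h2 := h 1 2 3 4 5
  have h3 := h 2 3 4 5 6
  have h4 := h 3 4 5 6 7
  simp only [Nat.reduceAdd, ff_congr _ hχ (a := 5) (b := 0) rfl, ff_congr _ hχ (a := 6) (b := 1) rfl,
    ff_congr _ hχ (a := 7) (b := 2) rfl, ff_congr _ hχ (a := 8) (b := 3) rfl] at h1 h2 h3 h4
  simp only [add_mul, map_add]
  linear_combination 4 * h1 + 3 * h2 + 2 * h3 + h4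
end Ext

end S17

namespace S17

section Cnt
variable {F : Type*} [Field F] [Fintype F]
variable {A : Type*} [CommRing A] [Algebra ℂ A] {χ : F →* ℂ} {e : AddChar F ℂ}

lemma sum_fib (hχ : IsChi χ) (g : F → A) :
    ∑ x : F, g (x ^ 5) = ∑ v : F, (∑ b ∈ range 5, χ v ^ b) • g v := by
  rw [← Finset.sum_fiberwise univ (fun x : F => x ^ 5) (fun x => g (x ^ 5))]
  refine sum_congr rfl fun v _ => ?_
  rw [← fifth hχ v, Nat.cast_smul_eq_nsmul, ← sum_const]
  refine sum_congr rfl fun x hx => ?_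
  rw [(mem_filter.1 hx).2]

lemma V_eq (hχ : IsChi χ) (dl : F →*₀ A) {y : F} (hy : y ≠ 0) :
    ∑ x : F, e (y * x ^ 5) • dl (x ^ 5) = dl y⁻¹ *
      pl (ZZ A χ y) (ff χ e dl 0) (ff χ e dl 1) (ff χ e dl 2) (ff χ e dl 3) (ff χ e dl 4) := by
  rw [sum_fib hχ (fun v => e (y * v) • dl v), ← sum_mulR (inv_ne_zero hy)]
  simp only [pl, ZZ, ff, ← map_pow (algebraMap ℂ A), ← Algebra.smul_def, ← sum_add_distrib, mul_sum]
  refine sum_congr rfl fun x _ => ?_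
  rw [show y * (x * y⁻¹) = x by field_simp, map_mul, map_mul]
  simp only [sum_range_succ, range_zero, sum_empty, Algebra.smul_def, map_add, map_mul, map_pow]
  simp
  ring

lemma G_eq (hχ : IsChi χ) (he : e ≠ 1) {y : F} (hy : y ≠ 0) :
    ∑ x : F, e (y * x ^ 5) = pl (ZZ ℂ χ y) 0 (gg χ e 1) (gg χ e 2) (gg χ e 3) (gg χ e 4) := by
  have h := V_eq (e := e) hχ (tr F) hy
  have h0 : ff χ e (tr F) 0 = -1 := gg_zero he
  have h1 : ∀ x : F, tr F (x ^ 5) = tr F x := by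
    intro x
    by_cases hx : x = 0
    · simp [hx]
    · rw [tr_ne hx, tr_ne (pow_ne_zero 5 hx)]
  simp only [h1, smul_eq_mul] at h
  rw [sum_tr (fun x => e (y * x ^ 5)), tr_ne (inv_ne_zero hy), h0] at h
  simp only [pl, gg] at h ⊢
  simp at h
  linear_combination h

lemma U_eq {y : F} (hy : y ≠ 0) :
    ∑ u : F, e (y * u) • del F u = del F y⁻¹ * ff χ e (del F) 0 := by
  rw [← sum_mulR (inv_ne_zero hy)]
  simp only [ff, mul_sum]
  refine sum_congr rfl fun x _ => ?_
  rw [show y * (x * y⁻¹) = x by field_simp, map_mul]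
  simp [mul_comm]

lemma Dt_eq {c : F} (hc : c ≠ 0) :
    ∑ t : F, e (5 * (t * c)) • del F (t⁻¹ ^ 5) = del F (c ^ 5) * DD e (iv (del F)) := by
  rw [DD, ← sum_mulR hc (fun t => e (5 * t) • iv (del F) (t ^ 5)), mul_sum]
  refine sum_congr rfl fun x _ => ?_
  rw [iv_apply, mul_smul_comm, ← map_mul]
  congr 2
  rw [mul_pow, mul_inv, mul_comm (x ^ 5)⁻¹, mul_inv_cancel_left₀ (pow_ne_zero 5 hc), inv_pow]

lemma E1 (h c : F → ℂ) (k : F → F) :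
    co 1 ((∑ x : F, h x • del F (k x)) ^ 5 * ∑ t : F, c t • del F (t⁻¹ ^ 5)) =
    ∑ x : Fin 5 → F, (∏ i, h (x i)) * ∑ t : F, c t * (if (∏ i, k (x i)) * t⁻¹ ^ 5 = 1 then 1 else 0) := by
  rw [Fintype.sum_pow, sum_mul, map_sum]
  refine sum_congr rfl fun x _ => ?_
  rw [mul_sum, map_sum, mul_sum]
  refine sum_congr rfl fun t _ => ?_
  have : ∏ i, h (x i) • del F (k (x i)) = (∏ i, h (x i)) • del F (∏ i, k (x i)) := by
    rw [map_prod, Finset.prod_smul]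
  rw [this, smul_mul_smul_comm, ← map_mul, map_smul, co_del one_ne_zero, smul_eq_mul, mul_assoc]

lemma Ksum (c : F → ℂ) (P : F) :
    ∑ t : F, c t * (if P ^ 5 * t⁻¹ ^ 5 = 1 then 1 else 0) =
    ∑ z : F, (if z ^ 5 = 1 then tr F P * c (z * P) else 0) := by
  by_cases hP : P = 0
  · simp [hP]
  rw [← sum_mulR hP]
  refine sum_congr rfl fun z _ => ?_
  rw [tr_ne hP, one_mul]
  have : P ^ 5 * (z * P)⁻¹ ^ 5 = 1 ↔ z ^ 5 = 1 := by
    by_cases hz : z = 0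
    · simp [hz]
    · rw [← mul_pow, mul_inv, mul_comm z⁻¹, mul_inv_cancel_left₀ hP, inv_pow, inv_eq_one]
  simp only [this]
  split_ifs <;> simp

noncomputable def SS (e : AddChar F ℂ) (c : F → ℂ) (y : F) : ℂ :=
  ∑ x : Fin 5 → F, (∏ i, e (y * x i ^ 5)) * (tr F (∏ i, x i) * c (∏ i, x i))

lemma S5 (hχ : IsChi χ) (c : F → ℂ) (y : F) :
    co 1 ((∑ x : F, e (y * x ^ 5) • del F (x ^ 5)) ^ 5 * ∑ t : F, c t • del F (t⁻¹ ^ 5)) = 5 * SS e c y := by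
  rw [E1 (fun x => e (y * x ^ 5))]
  simp only [prod_pow, Ksum, mul_sum]
  rw [sum_comm]
  have h5 : ((univ.filter (fun z : F => z ^ 5 = 1)).card : ℂ) = 5 := by
    rw [fifth hχ]; simp
  have : ∀ z : F, ∑ x : Fin 5 → F, (∏ i, e (y * x i ^ 5)) * (if z ^ 5 = 1 then tr F (∏ i, x i) * c (z * ∏ i, x i) else 0)
      = if z ^ 5 = 1 then SS e c y else 0 := by
    intro z
    split_ifs with hz
    · have hz0 : z ≠ 0 := by rintro rfl; simp at hz
      symm
      rw [SS, ← Equiv.sum_comp (Equiv.piCongrRight (fun i : Fin 5 => if i = 0 then Equiv.mulLeft₀ z hz0 else Equiv.refl F))]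
      refine sum_congr rfl fun x _ => ?_
      simp only [Fin.prod_univ_five, Equiv.piCongrRight_apply, Pi.map_apply]
      simp [mul_pow, hz, tr_ne hz0, mul_assoc]
    · simp
  rw [sum_congr rfl fun z _ => this z, ← sum_filter, sum_const, nsmul_eq_mul, h5]

/-- key character orthogonality -/
lemma orth (he : e ≠ 1) (b : F) : ∑ y : F, e (y * b) = if b = 0 then (Fintype.card F : ℂ) else 0 := by
  rw [AddChar.sum_mulShift b (AddChar.IsPrimitive.of_ne_one he)]
  split_ifs <;> simp

lemma pt_split (w a : ℂ) (P : F) (h : P = 0 → w = 1) : a * w = a * (tr F P * w) + (a - tr F P * a) := by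
  by_cases hP : P = 0
  · simp [hP, h hP]
  · rw [tr_ne hP]; ring

lemma e_sum (x : Fin 5 → F) : e (∑ i, x i) = ∏ i, e (x i) := by
  simp only [Fin.sum_univ_five, Fin.prod_univ_five, AddChar.map_add_eq_mul]

lemma sum_tr_prod (a : F → ℂ) : ∑ x : Fin 5 → F, tr F (∏ i, x i) * ∏ i, a (x i) = (∑ x, a x - a 0) ^ 5 := by
  rw [← sum_tr a, Fintype.sum_pow]
  refine sum_congr rfl fun x _ => ?_
  rw [map_prod, ← prod_mul_distrib]
  exact prod_congr rfl fun i _ => mul_comm _ _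

lemma NX (he : e ≠ 1) (ψ : F) :
    (Fintype.card F : ℂ) * ((univ.filter (fun x : Fin 5 → F =>
        ∑ i, x i ^ 5 = 5 * ψ * ∏ i, x i)).card : ℂ) =
    ∑ y : F, (SS e (fun t => e (5 * (t * (-ψ * y)))) y + (∑ x : F, e (y * x ^ 5)) ^ 5 - (∑ x : F, e (y * x ^ 5) - 1) ^ 5) := by
  have h1 : ∀ y : F, SS e (fun t => e (5 * (t * (-ψ * y)))) y + (∑ x : F, e (y * x ^ 5)) ^ 5 - (∑ x : F, e (y * x ^ 5) - 1) ^ 5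
     = ∑ x : Fin 5 → F, e (y * (∑ i, x i ^ 5 - 5 * ψ * ∏ i, x i)) := by
    intro y
    have h2 := sum_tr_prod (fun x : F => e (y * x ^ 5))
    simp only [ne_eq, OfNat.ofNat_ne_zero, not_false_eq_true, zero_pow, mul_zero, AddChar.map_zero_eq_one] at h2
    rw [← h2, Fintype.sum_pow, SS, ← sum_add_distrib, ← sum_sub_distrib]
    refine sum_congr rfl fun x _ => ?_
    rw [add_sub_assoc, ← pt_split _ _ _ (fun h => by simp [h]), ← e_sum, ← AddChar.map_add_eq_mul, ← mul_sum]
    congr 1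
    ring
  rw [sum_congr rfl fun y _ => h1 y, sum_comm, sum_congr rfl fun x _ => orth he _, ← sum_filter, sum_const, nsmul_eq_mul]
  simp only [sub_eq_zero]
  ring

lemma NY (he : e ≠ 1) (h5 : (5 : F) ≠ 0) {ψ : F} (hψ : ψ ≠ 0) :
    (Fintype.card F : ℂ) * ((univ.filter (fun u : Fin 5 → F =>
        (∑ i, u i) ^ 5 = (5 * ψ) ^ 5 * ∏ i, u i)).card : ℂ) =
    ∑ y : F, (co 1 ((∑ u : F, e (y * u) • del F u) ^ 5 * ∑ t : F, e (5 * (t * (-ψ * y))) • del F (t⁻¹ ^ 5))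
       + (∑ u : F, e (y * u)) ^ 5 - (∑ u : F, e (y * u) - 1) ^ 5) := by
  have h1 : ∀ y : F, co 1 ((∑ u : F, e (y * u) • del F u) ^ 5 * ∑ t : F, e (5 * (t * (-ψ * y))) • del F (t⁻¹ ^ 5))
       + (∑ u : F, e (y * u)) ^ 5 - (∑ u : F, e (y * u) - 1) ^ 5
     = ∑ u : Fin 5 → F, (∑ t : F, (if (∏ i, u i) * t⁻¹ ^ 5 = 1 then 1 else 0) * e (y * (∑ i, u i - 5 * ψ * t))
         + (1 - tr F (∏ i, u i)) * e (y * ∑ i, u i)) := by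
    intro y
    have h2 := sum_tr_prod (fun x : F => e (y * x))
    simp only [mul_zero, AddChar.map_zero_eq_one] at h2
    rw [← h2, E1 (fun u => e (y * u)) _ (fun u => u), Fintype.sum_pow, ← sum_add_distrib, ← sum_sub_distrib]
    refine sum_congr rfl fun x _ => ?_
    rw [show e (y * ∑ i, x i) = ∏ i, e (y * x i) by rw [mul_sum, e_sum], add_sub_assoc, mul_sum]
    congr 1
    · refine sum_congr rfl fun t _ => ?_
      rw [← e_sum, ← mul_assoc, ← AddChar.map_add_eq_mul, mul_comm, ← mul_sum]
      congr 2
      ring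
    · ring
  rw [sum_congr rfl fun y _ => h1 y, sum_comm]
  have h3 : ∀ u : Fin 5 → F, ∑ y : F, (∑ t : F, (if (∏ i, u i) * t⁻¹ ^ 5 = 1 then 1 else 0) * e (y * (∑ i, u i - 5 * ψ * t))
         + (1 - tr F (∏ i, u i)) * e (y * ∑ i, u i)) =
       if (∑ i, u i) ^ 5 = (5 * ψ) ^ 5 * ∏ i, u i then (Fintype.card F : ℂ) else 0 := by
    intro u
    rw [sum_add_distrib, sum_comm, ← mul_sum, orth he]
    simp only [← mul_sum, orth he]
    generalize ∏ i, u i = P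
    generalize ∑ i, u i = s
    have h50 : 5 * ψ ≠ 0 := mul_ne_zero h5 hψ
    have h6 : ∀ t, s - 5 * ψ * t = 0 ↔ t = s / (5 * ψ) := by
      intro t
      rw [eq_div_iff h50, sub_eq_zero, mul_comm t, eq_comm]
    simp only [h6]
    rw [sum_eq_single (s / (5 * ψ)) (fun t _ ht => by rw [if_neg ht, mul_zero]) (fun h => absurd (mem_univ _) h), if_pos rfl]
    by_cases hP : P = 0
    · subst hP; simp
    rw [tr_ne hP, sub_self, zero_mul, add_zero]
    have h7 : P * (s / (5 * ψ))⁻¹ ^ 5 = 1 ↔ s ^ 5 = (5 * ψ) ^ 5 * P := by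
      by_cases hs : s = 0
      · simp [hs, hP, h50]
      · rw [inv_div, div_pow, mul_div_assoc', div_eq_one_iff_eq (pow_ne_zero 5 hs), eq_comm, mul_comm]
    simp only [h7]
    split_ifs <;> simp
  rw [sum_congr rfl fun u _ => h3 u, ← sum_filter, sum_const, nsmul_eq_mul]
  ring

end Cnt
end S17

namespace S17

section Fin
variable {F : Type*} [Field F] [Fintype F] {χ : F →* ℂ} {e : AddChar F ℂ}

lemma co_fin {ψ y : F} (hψ : ψ ≠ 0) (hy : y ≠ 0) (w D : GA F) :
    co 1 ((del F y⁻¹ * w) ^ 5 * (del F ((-ψ * y) ^ 5) * D)) = co (-(ψ ^ 5)⁻¹) (w ^ 5 * D) := by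
  have h0 : (-ψ) ^ 5 ≠ 0 := pow_ne_zero 5 (neg_ne_zero.2 hψ)
  have h1 : (del F y⁻¹ * w) ^ 5 * (del F ((-ψ * y) ^ 5) * D) = del F ((-ψ) ^ 5) * (w ^ 5 * D) := by
    have : del F ((-ψ) ^ 5) = del F y⁻¹ ^ 5 * del F ((-ψ * y) ^ 5) := by
      rw [← map_pow, ← map_mul]
      congr 1
      field_simp
    rw [this]; ring
  rw [h1, co_del_mul one_ne_zero h0, mul_one]
  congr 1
  rw [Odd.neg_pow (by decide), inv_neg]

lemma E_del (v : F) : (∑ u : F, del F u) * del F v = tr F v • ∑ u : F, del F u := by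
  by_cases hv : v = 0
  · simp [hv]
  rw [tr_ne hv, one_smul, sum_mul, ← sum_mulR hv (fun u => del F u)]
  simp only [map_mul]

lemma E_pow (n : ℕ) : (∑ u : F, del F u) ^ (n + 1) = ((Fintype.card F : ℂ) - 1) ^ n • ∑ u : F, del F u := by
  have ht : ∑ v : F, tr F v = (Fintype.card F : ℂ) - 1 := by
    have := sum_tr (fun _ : F => (1 : ℂ))
    simpa using this
  induction n with
  | zero => simp
  | succ n ih =>
    rw [pow_succ, ih, smul_mul_assoc, mul_sum]
    simp only [E_del]
    rw [← sum_smul, ht, smul_smul, pow_succ]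

lemma E_five : co 1 ((∑ u : F, del F u) ^ 5 * ∑ t : F, del F (t⁻¹ ^ 5)) = ((Fintype.card F : ℂ) - 1) ^ 5 := by
  have ht : ∑ v : F, tr F v = (Fintype.card F : ℂ) - 1 := by
    have := sum_tr (fun _ : F => (1 : ℂ))
    simpa using this
  have h1 : ∀ t : F, tr F (t⁻¹ ^ 5) = tr F t := by
    intro x
    by_cases hx : x = 0
    · simp [hx]
    · rw [tr_ne hx, tr_ne (pow_ne_zero 5 (inv_ne_zero hx))]
  have h2 : co 1 (∑ u : F, del F u) = 1 := by
    rw [map_sum]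
    simp [co_del one_ne_zero]
  rw [E_pow 4, smul_mul_assoc, mul_sum]
  simp only [E_del, h1]
  rw [← sum_smul, ht, smul_smul, map_smul, h2]
  simp; ring

lemma diff (hχ : IsChi χ) (he : e ≠ 1) (h5 : (5 : F) ≠ 0) {ψ : F} (hψ : ψ ≠ 0) (hψ5 : ψ ^ 5 ≠ 1) :
    (Fintype.card F : ℂ) * ((univ.filter (fun x : Fin 5 → F =>
        ∑ i, x i ^ 5 = 5 * ψ * ∏ i, x i)).card : ℂ) -
    (Fintype.card F : ℂ) * ((univ.filter (fun u : Fin 5 → F =>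
        (∑ i, u i) ^ 5 = (5 * ψ) ^ 5 * ∏ i, u i)).card : ℂ) =
    (Fintype.card F : ℂ) ^ 2 * ((Fintype.card F : ℂ) - 1) * 
     (20 * (sS χ (ψ ^ 5)⁻¹ 2 3 2 + sS χ (ψ ^ 5)⁻¹ 4 1 4) + 30 * (sS χ (ψ ^ 5)⁻¹ 2 4 1 + sS χ (ψ ^ 5)⁻¹ 4 3 2)) := by
  have hl : (ψ ^ 5)⁻¹ ≠ 0 := inv_ne_zero (pow_ne_zero 5 hψ)
  have hl1 : χ (ψ ^ 5)⁻¹ = 1 := by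
    rw [← inv_pow, map_pow, hχ.five _ (inv_ne_zero hψ)]
  have hl2 : (ψ ^ 5)⁻¹ ≠ 1 := by rwa [ne_eq, inv_eq_one]
  rw [NX he, NY he h5 hψ, ← sum_sub_distrib]
  have key : ∀ y : F, (SS e (fun t => e (5 * (t * (-ψ * y)))) y + (∑ x : F, e (y * x ^ 5)) ^ 5 - (∑ x : F, e (y * x ^ 5) - 1) ^ 5)
     - (co 1 ((∑ u : F, e (y * u) • del F u) ^ 5 * ∑ t : F, e (5 * (t * (-ψ * y))) • del F (t⁻¹ ^ 5))
       + (∑ u : F, e (y * u)) ^ 5 - (∑ u : F, e (y * u) - 1) ^ 5)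
     = 5⁻¹ * co (-(ψ ^ 5)⁻¹) ((tr F y • pl (ZZ (GA F) χ y) (ff χ e (del F) 0) (ff χ e (del F) 1) (ff χ e (del F) 2) (ff χ e (del F) 3) (ff χ e (del F) 4) ^ 5) * DD e (iv (del F)))
      - tr F y * co (-(ψ ^ 5)⁻¹) (ff χ e (del F) 0 ^ 5 * DD e (iv (del F)))
      + tr F y • (5 * pl (ZZ ℂ χ y) 0 (gg χ e 1) (gg χ e 2) (gg χ e 3) (gg χ e 4) ^ 4 - 10 * pl (ZZ ℂ χ y) 0 (gg χ e 1) (gg χ e 2) (gg χ e 3) (gg χ e 4) ^ 3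
       + 10 * pl (ZZ ℂ χ y) 0 (gg χ e 1) (gg χ e 2) (gg χ e 3) (gg χ e 4) ^ 2 - 5 * pl (ZZ ℂ χ y) 0 (gg χ e 1) (gg χ e 2) (gg χ e 3) (gg χ e 4)) := by
    intro y
    by_cases hy : y = 0
    · subst hy
      have h1 : SS e (fun t => e (5 * (t * (-ψ * 0)))) 0 = ((Fintype.card F : ℂ) - 1) ^ 5 := by
        have := sum_tr_prod (fun _ : F => (1 : ℂ))
        simp only [SS, mul_zero, zero_mul, AddChar.map_zero_eq_one]
        simpa using this
      rw [h1]
      simp only [mul_zero, zero_mul, AddChar.map_zero_eq_one, map_zero, one_smul, E_five, zero_smul]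
      simp
    · have h1 := S5 (e := e) hχ (fun t => e (5 * (t * (-ψ * y)))) y
      have hc : -ψ * y ≠ 0 := mul_ne_zero (neg_ne_zero.2 hψ) hy
      rw [V_eq hχ (del F) hy, Dt_eq hc, co_fin hψ hy] at h1
      have h2 : ∑ u : F, e (y * u) = 0 := by
        have := orth he y
        rw [if_neg hy] at this
        rw [← this]
        exact sum_congr rfl fun u _ => by rw [mul_comm]
      rw [U_eq (χ := χ) hy, Dt_eq hc, co_fin hψ hy, h2, G_eq hχ he hy, tr_ne hy, one_smul, one_smul, h1]
      ring
  rw [sum_congr rfl fun y _ => key y, sum_add_distrib, sum_sub_distrib, ← mul_sum, ← map_sum, ← sum_mul, ← sum_mul,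
    ext5 hχ, extG hχ, smul_mul_assoc, map_smul, co_T5 hχ hl hl1]
  have ht : ∑ v : F, tr F v = (Fintype.card F : ℂ) - 1 := by
    have := sum_tr (fun _ : F => (1 : ℂ))
    simpa using this
  rw [ht]
  have g14 := gg_mul hχ he 1 4 rfl (by norm_num)
  have g23 := gg_mul hχ he 2 3 rfl (by norm_num)
  have w0 := W0 hχ he h5 hl hl1 hl2
  have wA := WA hχ he h5 hl hl1
  have wA2 := WA2 hχ he h5 hl hl1
  have wB := WB hχ he h5 hl hl1
  have wB2 := WB2 hχ he h5 hl hl1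
  rw [g14, g23]
  have hB : co (-(ψ ^ 5)⁻¹) (Bp (ff χ e (del F) 0) (ff χ e (del F) 1) (ff χ e (del F) 2) (ff χ e (del F) 3) (ff χ e (del F) 4) * DD e (iv (del F)))
     = co (-(ψ ^ 5)⁻¹) (ff χ e (del F) 0 ^ 5 * DD e (iv (del F)))
      + 24 * co (-(ψ ^ 5)⁻¹) (ff χ e (del F) 0 * ff χ e (del F) 1 * ff χ e (del F) 2 * ff χ e (del F) 3 * ff χ e (del F) 4 * DD e (iv (del F)))
      + 20 * co (-(ψ ^ 5)⁻¹) (ff χ e (del F) 0 ^ 3 * ff χ e (del F) 1 * ff χ e (del F) 4 * DD e (iv (del F)))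
      + 20 * co (-(ψ ^ 5)⁻¹) (ff χ e (del F) 0 ^ 3 * ff χ e (del F) 2 * ff χ e (del F) 3 * DD e (iv (del F)))
      + 30 * co (-(ψ ^ 5)⁻¹) (ff χ e (del F) 0 ^ 2 * ff χ e (del F) 1 ^ 2 * ff χ e (del F) 3 * DD e (iv (del F)))
      + 30 * co (-(ψ ^ 5)⁻¹) (ff χ e (del F) 0 ^ 2 * ff χ e (del F) 2 ^ 2 * ff χ e (del F) 1 * DD e (iv (del F))) := by
    have hs : ∀ (c : ℂ) (w : GA F), c * co (-(ψ ^ 5)⁻¹) w = co (-(ψ ^ 5)⁻¹) (c • w) := fun c w => by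
      rw [map_smul, smul_eq_mul]
    simp only [hs, ← map_add]
    congr 1
    simp only [Bp, Algebra.smul_def, map_ofNat]
    ring
  rw [hB, w0, wA, wA2, wB, wB2]
  simp only [smul_eq_mul]
  ring

lemma NC (hχ : IsChi χ) (w : F → F) :
    ((univ.filter (fun p : F × F => p.2 ^ 5 = w p.1)).card : ℂ) - Fintype.card F
     = ∑ x, χ (w x) + ∑ x, χ (w x) ^ 2 + ∑ x, χ (w x) ^ 3 + ∑ x, χ (w x) ^ 4 := by
  have h : ((univ.filter (fun p : F × F => p.2 ^ 5 = w p.1)).card : ℂ) =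
      ∑ x : F, ((univ.filter (fun y : F => y ^ 5 = w x)).card : ℂ) := by
    simp only [card_filter, Nat.cast_sum]
    rw [Fintype.sum_prod_type]
  rw [h]
  simp only [fifth hχ, sum_range_succ, range_zero, sum_empty, sum_add_distrib]
  simp
  ring

lemma NA (hχ : IsChi χ) (he : e ≠ 1) (h5 : (5 : F) ≠ 0) {l : F} (hl : l ≠ 0) (hl1 : χ l = 1) :
    ((univ.filter (fun p : F × F => p.2 ^ 5 = p.1 ^ 2 * (1 - p.1) ^ 3 * (1 - l * p.1) ^ 2)).card : ℂ) - Fintype.card F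
     = 2 * (sS χ l 2 3 2 + sS χ l 4 1 4) := by
  rw [NC hχ (fun x => x ^ 2 * (1 - x) ^ 3 * (1 - l * x) ^ 2)]
  simp only [map_mul, map_pow, mul_pow, ← pow_mul]
  have h1 : sS χ l 2 3 2 = sS χ l 2 3 2 := rfl
  have h2 : sS χ l (2*2) (3*2) (2*2) = sS χ l 4 1 4 := sS_congr hχ l (by norm_num) (by norm_num) (by norm_num) (by norm_num) (by norm_num) (by norm_num) rfl rfl rfl
  have h3 : sS χ l (2*3) (3*3) (2*3) = sS χ l 1 4 1 := sS_congr hχ l (by norm_num) (by norm_num) (by norm_num) (by norm_num) (by norm_num) (by norm_num) rfl rfl rfl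
  have h4 : sS χ l (2*4) (3*4) (2*4) = sS χ l 3 2 3 := sS_congr hχ l (by norm_num) (by norm_num) (by norm_num) (by norm_num) (by norm_num) (by norm_num) rfl rfl rfl
  have a := sA_symm hχ he h5 hl hl1
  have b := sA2_symm hχ he h5 hl hl1
  simp only [sS] at *
  linear_combination h2 + h3 + h4 + a + b

lemma NB (hχ : IsChi χ) (he : e ≠ 1) (h5 : (5 : F) ≠ 0) {l : F} (hl : l ≠ 0) (hl1 : χ l = 1) :
    ((univ.filter (fun p : F × F => p.2 ^ 5 = p.1 ^ 2 * (1 - p.1) ^ 4 * (1 - l * p.1))).card : ℂ) - Fintype.card F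
     = 2 * (sS χ l 2 4 1 + sS χ l 4 3 2) := by
  rw [NC hχ (fun x => x ^ 2 * (1 - x) ^ 4 * (1 - l * x))]
  simp only [map_mul, map_pow, mul_pow, ← pow_mul]
  have h2 : sS χ l (2*2) (4*2) 2 = sS χ l 4 3 2 := sS_congr hχ l (by norm_num) (by norm_num) (by norm_num) (by norm_num) (by norm_num) (by norm_num) rfl rfl rfl
  have h3 : sS χ l (2*3) (4*3) 3 = sS χ l 1 2 3 := sS_congr hχ l (by norm_num) (by norm_num) (by norm_num) (by norm_num) (by norm_num) (by norm_num) rfl rfl rfl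
  have h4 : sS χ l (2*4) (4*4) 4 = sS χ l 3 1 4 := sS_congr hχ l (by norm_num) (by norm_num) (by norm_num) (by norm_num) (by norm_num) (by norm_num) rfl rfl rfl
  have a := sB_symm hχ he h5 hl hl1
  have b := sB2_symm hχ he h5 hl hl1
  simp only [sS, pow_one] at *
  linear_combination h2 + h3 + h4 + a + b

lemma exists_e (F : Type*) [Field F] [Fintype F] : ∃ e : AddChar F ℂ, e ≠ 1 := by
  obtain ⟨e, he⟩ := AddChar.exists_apply_ne_zero.2 (one_ne_zero : (1 : F) ≠ 0)
  exact ⟨e, fun h => he (by rw [h]; rfl)⟩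

lemma exists_chi (hq : Fintype.card F % 5 = 1) : ∃ χ : F →* ℂ, IsChi χ := by
  obtain ⟨χ, h⟩ := MulChar.exists_mulChar_orderOf F (n := 5) (R := ℂ) (by omega) (Complex.isPrimitiveRoot_exp 5 (by norm_num))
  refine ⟨χ.toMonoidHom, χ.map_zero, fun x hx => ?_, ?_⟩
  · have h1 : χ ^ 5 = 1 := by rw [← h, pow_orderOf_eq_one]
    have h2 := congrArg (fun c : MulChar F ℂ => c x) h1
    simp only [MulChar.pow_apply' χ (by norm_num : (5:ℕ) ≠ 0)] at h2
    rw [MulChar.one_apply hx.isUnit] at h2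
    exact h2
  · have h1 : χ ≠ 1 := by
      rintro rfl
      simp at h
    obtain ⟨u, hu⟩ := MulChar.ne_one_iff.1 h1
    exact ⟨u, u.ne_zero, hu⟩

lemma five_ne (hq : Fintype.card F % 5 = 1) : (5 : F) ≠ 0 := by
  intro h
  have h1 : ((Fintype.card F : ℕ) : F) = 0 := Nat.cast_card_eq_zero F
  rw [← Nat.div_add_mod (Fintype.card F) 5, hq] at h1
  push_cast at h1
  rw [h] at h1
  simp at h1

end Fin
end S17

/-- The `n = 5` example: with `q ≡ 1 (mod 5)`, `ψ ≠ 0` and `ψ^5 ≠ 1`, the affine counts of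
the Dwork quintic, of its singular mirror, and of the two hypergeometric curves
`A : y^5 = x^2(1−x)^3(1−x/ψ^5)^2` and `B : y^5 = x^2(1−x)^4(1−x/ψ^5)` satisfy
`N_X = N_Y + 10·q·(q−1)·(N_A − q) + 15·q·(q−1)·(N_B − q)`. -/
theorem statement17 {F : Type*} [Field F] [Fintype F]
    (hq : Fintype.card F % 5 = 1)
    (ψ : F) (hψ : ψ ≠ 0) (hψ5 : ψ ^ 5 ≠ 1) :
    ((Finset.univ.filter (fun x : Fin 5 → F =>
        ∑ i, x i ^ 5 = 5 * ψ * ∏ i, x i)).card : ℤ)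
      = ((Finset.univ.filter (fun y : Fin 5 → F =>
            (∑ i, y i) ^ 5 = (5 * ψ) ^ 5 * ∏ i, y i)).card : ℤ)
        + 10 * (Fintype.card F : ℤ) * ((Fintype.card F : ℤ) - 1) *
            (((Finset.univ.filter (fun p : F × F =>
                p.2 ^ 5 = p.1 ^ 2 * (1 - p.1) ^ 3 * (1 - (ψ ^ 5)⁻¹ * p.1) ^ 2)).card : ℤ)
              - (Fintype.card F : ℤ))
        + 15 * (Fintype.card F : ℤ) * ((Fintype.card F : ℤ) - 1) *
            (((Finset.univ.filter (fun p : F × F =>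
                p.2 ^ 5 = p.1 ^ 2 * (1 - p.1) ^ 4 * (1 - (ψ ^ 5)⁻¹ * p.1))).card : ℤ)
              - (Fintype.card F : ℤ)) := by
  obtain ⟨e, he⟩ := S17.exists_e F
  obtain ⟨χ, hχ⟩ := S17.exists_chi hq
  have h5 := S17.five_ne hq
  have hl : (ψ ^ 5)⁻¹ ≠ 0 := inv_ne_zero (pow_ne_zero 5 hψ)
  have hl1 : χ (ψ ^ 5)⁻¹ = 1 := by
    rw [← inv_pow, map_pow, hχ.five _ (inv_ne_zero hψ)]
  have hd := S17.diff hχ he h5 hψ hψ5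
  have hA := S17.NA hχ he h5 hl hl1
  have hB := S17.NB hχ he h5 hl hl1
  have hq0 : (Fintype.card F : ℂ) ≠ 0 := Nat.cast_ne_zero.2 Fintype.card_ne_zero
  rw [← Int.cast_inj (α := ℂ)]
  push_cast
  apply mul_left_cancel₀ hq0
  linear_combination hd - 10 * (Fintype.card F : ℂ) ^ 2 * ((Fintype.card F : ℂ) - 1) * hA
    - 15 * (Fintype.card F : ℂ) ^ 2 * ((Fintype.card F : ℂ) - 1) * hB
end
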